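/- arXiv:1303.6030 — 2 statements merged into one kernel-verified Lean document; each statement's English description precedes it below -/
import Mathlib

section
/- Let K be an infinite field and S = K[x_1,...,x_n] a standard graded polynomial ring. Let I ⊆ S and J ⊆ S be homogeneous ideals. Then for a general change of coordinates g ∈ GL_n(K), the Hilbert functions H(I ∩ g(J), −) and H(I·g(J), −) are well defined; that is, there exists a nonempty Zariski open subset U ⊆ GL_n(K) such that the Hilbert function of I ∩ g(J) (respectively of I·g(J)) is the same for all g ∈ U. -/
open MvPolynomial TensorProduct

noncomputable section

/-- The polynomial ring `S = K[x_1,...,x_n]`. -/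
abbrev PS (K : Type) [Field K] (n : ℕ) : Type := MvPolynomial (Fin n) K

variable (K : Type) [Field K] (n : ℕ)

/-- An ideal is homogeneous if it contains all homogeneous components of its elements. -/
def IsHomog (I : Ideal (PS K n)) : Prop :=
  ∀ f ∈ I, ∀ d : ℕ, MvPolynomial.homogeneousComponent d f ∈ I

/-- The Hilbert function of an ideal: `H(I,d) = dim_K I_d`. -/
def hilb (I : Ideal (PS K n)) (d : ℕ) : ℕ :=
  Module.finrank K ↥(Submodule.restrictScalars K I ⊓ homogeneousSubmodule (Fin n) K d)

/-- The change of coordinates of `S` induced by `g ∈ GL_n(K)`, determined by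
`g(x_i) = ∑_j g_{ji} x_j`. -/
def coordChange (g : GL (Fin n) K) : PS K n →ₐ[K] PS K n :=
  MvPolynomial.aeval (fun i => ∑ j, ((g : Matrix (Fin n) (Fin n) K) j i) • MvPolynomial.X j)

/-- A property `P` holds for a general change of coordinates `g ∈ GL_n(K)` if there is a
nonempty Zariski open subset `U ⊆ GL_n(K)` on which it holds; equivalently (as `GL_n` is an
irreducible variety) there is a nonzero polynomial `F` in the matrix entries such that `P g`
holds whenever `F` does not vanish at `g`. -/
def generally (P : GL (Fin n) K → Prop) : Prop :=
  ∃ F : MvPolynomial (Fin n × Fin n) K, F ≠ 0 ∧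
    ∀ g : GL (Fin n) K,
      MvPolynomial.eval (fun p => (g : Matrix (Fin n) (Fin n) K) p.1 p.2) F ≠ 0 → P g

/-!
Over the domain `A` of polynomial functions on `n × n` matrices, the ideals `g(J)`, `I + g(J)` and
`I · g(J)` are specializations of homogeneous ideals of `A[x₁, …, xₙ]`. By Dickson's lemma the
initial exponents of such an ideal are controlled by finitely many leading coefficients; wherever
none of these vanishes, reduction by S-polynomials shows that the specialized ideal has the same
initial exponents, and by Macaulay these determine its Hilbert function. Intersections need not
commute with specialization, so `H(I ∩ g(J))` is obtained as `H(I) + H(g(J)) - H(I + g(J))`.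
-/

section InitialExponents

open scoped MonomialOrder

variable {σ : Type*} (m : MonomialOrder σ)

/-- The exponents of the leading monomials of the nonzero elements of a set of polynomials. For an
ideal these are the exponents of the monomials in its initial ideal (over a coefficient ring that
is not a field, leading coefficients are only required to be nonzero). -/
def initialExponents {R : Type*} [CommSemiring R] (s : Set (MvPolynomial σ R)) :
    Set (σ →₀ ℕ) :=
  m.degree '' (s \ {0})

theorem degree_mem_initialExponents {R : Type*} [CommSemiring R] {s : Set (MvPolynomial σ R)}
    {f : MvPolynomial σ R} (hf : f ∈ s) (hf₀ : f ≠ 0) : m.degree f ∈ initialExponents m s :=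
  ⟨f, ⟨hf, hf₀⟩, rfl⟩

theorem exists_ne_zero_forall_leadingCoeff_dvd [Finite σ] {A : Type*} [CommRing A] [IsDomain A]
    (L : Ideal (MvPolynomial σ A)) :
    ∃ c : A, c ≠ 0 ∧ ∀ a ∈ initialExponents m (L : Set (MvPolynomial σ A)),
      ∃ f ∈ L, m.degree f = a ∧ m.leadingCoeff f ∣ c := by
  classical
  set E := initialExponents m (L : Set (MvPolynomial σ A))
  have hfin : {a | Minimal (· ∈ E) a}.Finite :=
    WellQuasiOrderedLE.finite_of_isAntichain (setOfPred_minimal_antichain _)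
  choose! f hf hdeg using fun a (ha : a ∈ E) ↦ ha
  refine ⟨∏ a ∈ hfin.toFinset, m.leadingCoeff (f a), ?_, fun a ha ↦ ?_⟩
  · refine Finset.prod_ne_zero_iff.2 fun a ha ↦ m.leadingCoeff_ne_zero_iff.2 ?_
    exact (hf a ((hfin.mem_toFinset.1 ha).prop)).2
  · obtain ⟨b, hba, hb⟩ := exists_minimal_le_of_wellFoundedLT (· ∈ E) a ha
    have hmonic : m.leadingCoeff (monomial (a - b) (1 : A)) = 1 := m.leadingCoeff_monomial 1
    have hreg : m.leadingCoeff (monomial (a - b) (1 : A)) ∈ nonZeroDivisors A :=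
      by rw [hmonic]; exact one_mem _
    refine ⟨monomial (a - b) 1 * f b, L.mul_mem_left _ (hf b hb.prop).1, ?_, ?_⟩
    · rw [m.degree_mul_of_left_mem_nonZeroDivisors hreg (hf b hb.prop).2, m.degree_monomial,
        if_neg one_ne_zero, hdeg b hb.prop, tsub_add_cancel_of_le hba]
    · rw [m.leadingCoeff_mul_of_left_mem_nonZeroDivisors hreg, hmonic, one_mul]
      exact Finset.dvd_prod_of_mem (fun a ↦ m.leadingCoeff (f a)) (hfin.mem_toFinset.2 hb)

theorem sPolynomial_of_degree_eq {R : Type*} [CommRing R] {f g : MvPolynomial σ R}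
    (h : m.degree f = m.degree g) :
    m.sPolynomial f g = m.leadingCoeff g • f - m.leadingCoeff f • g := by
  simp [m.sPolynomial_def, h, smul_eq_C_mul]

section Specialization

variable {A B : Type*} [CommRing A] [CommRing B] {L : Ideal (MvPolynomial σ A)} {φ : A →+* B}

theorem degree_map_of_leadingCoeff_ne_zero {f : MvPolynomial σ A}
    (hf : φ (m.leadingCoeff f) ≠ 0) : m.degree (map φ f) = m.degree f := by
  refine m.toSyn.injective (le_antisymm ?_ ?_)
  · exact m.degree_le_iff.2 fun b hb ↦ m.le_degree (support_map_subset φ f hb)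
  · exact m.le_degree (mem_support_iff.2 (by rwa [coeff_map]))

/-- If the leading coefficient of `p` is killed by `φ`, replacing `p` by its S-polynomial with an
element of `L` of the same degree only rescales `map φ p` and lowers the degree of `p`. -/
theorem exists_mem_degree_eq_degree_map [IsDomain B]
    (hL : ∀ a ∈ initialExponents m (L : Set (MvPolynomial σ A)),
      ∃ f ∈ L, m.degree f = a ∧ φ (m.leadingCoeff f) ≠ 0)
    {p : MvPolynomial σ A} (hp : p ∈ L) (hp₀ : map φ p ≠ 0) :
    ∃ q ∈ L, q ≠ 0 ∧ m.degree q = m.degree (map φ p) := by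
  induction hs : m.toSyn (m.degree p) using WellFoundedLT.induction generalizing p with
  | ind s ih =>
    have hpne : p ≠ 0 := fun h ↦ hp₀ (by rw [h, map_zero])
    by_cases hlead : φ (m.leadingCoeff p) = 0
    · obtain ⟨f, hf, hdeg, hφf⟩ := hL _ (degree_mem_initialExponents m hp hpne)
      set r := m.sPolynomial p f
      have hr : r = m.leadingCoeff f • p - m.leadingCoeff p • f :=
        sPolynomial_of_degree_eq m hdeg.symm
      have hrL : r ∈ L := by
        rw [hr]
        exact L.sub_mem (L.smul_of_tower_mem _ hp) (L.smul_of_tower_mem _ hf)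
      have hmap : map φ r = φ (m.leadingCoeff f) • map φ p := by
        simp [hr, smul_eq_C_mul, hlead]
      have hmap₀ : map φ r ≠ 0 := hmap ▸ smul_ne_zero hφf hp₀
      have hlt : m.degree r ≺[m] m.degree p := by
        have := m.degree_sPolynomial_lt_sup_degree (f := p) (g := f)
          fun h ↦ hmap₀ (by rw [← map_zero (map φ), ← h])
        rwa [hdeg, sup_idem] at this
      obtain ⟨q, hq, hq₀, hqdeg⟩ := ih _ (hs ▸ hlt) hrL hmap₀ rfl
      refine ⟨q, hq, hq₀, ?_⟩
      rw [hqdeg, hmap, m.degree_smul_of_mem_nonZeroDivisors (mem_nonZeroDivisors_of_ne_zero hφf)]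
    · exact ⟨p, hp, hpne, (degree_map_of_leadingCoeff_ne_zero m hlead).symm⟩

theorem initialExponents_map_eq [IsDomain B] (hφ : Function.Surjective φ)
    (hL : ∀ a ∈ initialExponents m (L : Set (MvPolynomial σ A)),
      ∃ f ∈ L, m.degree f = a ∧ φ (m.leadingCoeff f) ≠ 0) :
    initialExponents m (L.map (map φ) : Set (MvPolynomial σ B)) =
      initialExponents m (L : Set (MvPolynomial σ A)) := by
  apply Set.Subset.antisymm
  · rintro _ ⟨_, ⟨hq, hq₀⟩, rfl⟩
    obtain ⟨p, hp, rfl⟩ := (Ideal.mem_map_iff_of_surjective _ (map_surjective φ hφ)).1 hq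
    obtain ⟨r, hr, hr₀, hdeg⟩ := exists_mem_degree_eq_degree_map m hL hp hq₀
    exact ⟨r, ⟨hr, hr₀⟩, hdeg⟩
  · intro a ha
    obtain ⟨f, hf, rfl, hφf⟩ := hL a ha
    have hdeg := degree_map_of_leadingCoeff_ne_zero m hφf
    refine ⟨map φ f, ⟨Ideal.mem_map_of_mem _ hf, fun h ↦ hφf ?_⟩, hdeg⟩
    rw [MonomialOrder.leadingCoeff, ← coeff_map, h, coeff_zero]

end Specialization

theorem linearIndependent_of_injective_degree {R ι : Type*} [CommRing R] [IsDomain R]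
    {v : ι → MvPolynomial σ R} (hv : ∀ i, v i ≠ 0)
    (hinj : Function.Injective fun i ↦ m.degree (v i)) : LinearIndependent R v := by
  refine linearIndependent_iff.2 fun l hl ↦ ?_
  by_contra hl₀
  obtain ⟨j, hj, hmax⟩ := l.support.exists_max_image (fun i ↦ m.toSyn (m.degree (v i)))
    (Finsupp.support_nonempty_iff.2 hl₀)
  have hcoeff : coeff (m.degree (v j)) (l.sum fun i c ↦ c • v i) = l j * m.leadingCoeff (v j) := by
    rw [Finsupp.sum, coeff_sum, Finset.sum_eq_single_of_mem j hj, coeff_smul, smul_eq_mul,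
      MonomialOrder.leadingCoeff]
    intro i hi hij
    have hlt : m.degree (v i) ≺[m] m.degree (v j) :=
      (hmax i hi).lt_of_ne fun h ↦ hij (hinj (m.toSyn.injective h))
    rw [coeff_smul, m.coeff_eq_zero_of_lt hlt, smul_zero]
  rw [← Finsupp.linearCombination_apply, hl, coeff_zero] at hcoeff
  exact mul_ne_zero (Finsupp.mem_support_iff.1 hj) (m.leadingCoeff_ne_zero_iff.2 (hv j)) hcoeff.symm

section Field

variable {k : Type*} [Field k] {V : Submodule k (MvPolynomial σ k)}

theorem le_span_range_of_degree_eq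
    {v : initialExponents m (V : Set (MvPolynomial σ k)) → MvPolynomial σ k}
    (hvV : ∀ a, v a ∈ V) (hv₀ : ∀ a, v a ≠ 0) (hdeg : ∀ a, m.degree (v a) = a) :
    V ≤ Submodule.span k (Set.range v) := by
  intro f hf
  induction hs : m.toSyn (m.degree f) using WellFoundedLT.induction generalizing f with
  | ind s ih =>
    rcases eq_or_ne f 0 with rfl | hf₀
    · exact zero_mem _
    set g := v ⟨_, degree_mem_initialExponents m hf hf₀⟩
    have hg : g ∈ Submodule.span k (Set.range v) := Submodule.subset_span (Set.mem_range_self _)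
    have hfg : m.degree f = m.degree g := (hdeg ⟨_, degree_mem_initialExponents m hf hf₀⟩).symm
    have hr := sPolynomial_of_degree_eq m hfg
    have hrspan : m.sPolynomial f g ∈ Submodule.span k (Set.range v) := by
      by_cases hr₀ : m.sPolynomial f g = 0
      · rw [hr₀]
        exact zero_mem _
      have hlt := m.degree_sPolynomial_lt_sup_degree hr₀
      rw [← hfg, sup_idem] at hlt
      refine ih _ (hs ▸ hlt) ?_ rfl
      rw [hr]
      exact V.sub_mem (V.smul_mem _ hf) (V.smul_mem _ (hvV _))
    rw [hr, Submodule.sub_mem_iff_left _ (Submodule.smul_mem _ _ hg)] at hrspan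
    exact (Submodule.smul_mem_iff _ (m.leadingCoeff_ne_zero_iff.2 (hv₀ _))).1 hrspan

variable (V) in
theorem finrank_eq_ncard_initialExponents :
    Module.finrank k V = (initialExponents m (V : Set (MvPolynomial σ k))).ncard := by
  choose v hv hdeg using fun a : initialExponents m (V : Set (MvPolynomial σ k)) ↦ a.2
  have hli : LinearIndependent k v :=
    linearIndependent_of_injective_degree m (fun a ↦ (hv a).2) fun a b h ↦
      Subtype.ext (by rw [← hdeg a, ← hdeg b]; exact h)
  have hspan : Submodule.span k (Set.range v) = V :=
    le_antisymm (Submodule.span_le.2 (Set.range_subset_iff.2 fun a ↦ (hv a).1))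
      (le_span_range_of_degree_eq m (fun a ↦ (hv a).1) (fun a ↦ (hv a).2) hdeg)
  rw [← Nat.card_coe_set_eq, ← Module.finrank_eq_nat_card_basis (Module.Basis.span hli), hspan]

end Field

end InitialExponents

section DegreePart

attribute [local instance] MvPolynomial.gradedAlgebra

variable {σ τ R S : Type*} [CommRing R] [CommRing S]

/-- The homogeneous elements of degree `d` of an ideal, as a module over the coefficients; `hilb`
is its dimension. -/
def degreePart (I : Ideal (MvPolynomial σ R)) (d : ℕ) : Submodule R (MvPolynomial σ R) :=
  I.restrictScalars R ⊓ homogeneousSubmodule σ R d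

theorem homogeneousComponent_mem_degreePart {I : Ideal (MvPolynomial σ R)}
    (hI : I.IsHomogeneous (homogeneousSubmodule σ R)) {f : MvPolynomial σ R} (hf : f ∈ I) (d : ℕ) :
    homogeneousComponent d f ∈ degreePart I d :=
  ⟨homogeneousComponent_mem_of_mem hI hf d, homogeneousComponent_mem d f⟩

theorem isHomogeneous_sum_smul_X [Fintype σ] (c : σ → R) :
    (∑ j, c j • X j : MvPolynomial σ R).IsHomogeneous 1 :=
  (homogeneousSubmodule σ R 1).sum_mem fun j _ ↦ Submodule.smul_mem _ _ (isHomogeneous_X _ j)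

theorem isHomogeneous_ideal_map {I : Ideal (MvPolynomial σ R)}
    (hI : I.IsHomogeneous (homogeneousSubmodule σ R)) (ψ : MvPolynomial σ R →+* MvPolynomial τ S)
    (hψ : ∀ {d f}, f.IsHomogeneous d → (ψ f).IsHomogeneous d) :
    (I.map ψ).IsHomogeneous (homogeneousSubmodule τ S) :=
  (HomogeneousIdeal.map
    (⟨ψ, hψ⟩ : homogeneousSubmodule σ R →+*ᵍ homogeneousSubmodule τ S) ⟨I, hI⟩).is_homogeneous'

theorem degreePart_inf (I J : Ideal (MvPolynomial σ R)) (d : ℕ) :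
    degreePart (I ⊓ J) d = degreePart I d ⊓ degreePart J d :=
  inf_inf_distrib_right (I.restrictScalars R) (J.restrictScalars R) _

theorem degreePart_sup {I J : Ideal (MvPolynomial σ R)}
    (hI : I.IsHomogeneous (homogeneousSubmodule σ R))
    (hJ : J.IsHomogeneous (homogeneousSubmodule σ R)) (d : ℕ) :
    degreePart (I ⊔ J) d = degreePart I d ⊔ degreePart J d := by
  apply le_antisymm
  · rintro f ⟨hf, hfd⟩
    obtain ⟨p, hp, q, hq, rfl⟩ := Submodule.mem_sup.1 hf
    rw [← homogeneousComponent_eq_self hfd, map_add]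
    exact Submodule.add_mem_sup (homogeneousComponent_mem_degreePart hI hp d)
      (homogeneousComponent_mem_degreePart hJ hq d)
  · exact sup_le (inf_le_inf_right _ fun _ h ↦ Ideal.mem_sup_left h)
      (inf_le_inf_right _ fun _ h ↦ Ideal.mem_sup_right h)

theorem finrank_degreePart_inf_add_finrank_degreePart_sup [Finite σ] {k : Type*} [Field k]
    {I J : Ideal (MvPolynomial σ k)} (hI : I.IsHomogeneous (homogeneousSubmodule σ k))
    (hJ : J.IsHomogeneous (homogeneousSubmodule σ k)) (d : ℕ) :
    Module.finrank k (degreePart (I ⊓ J) d) + Module.finrank k (degreePart (I ⊔ J) d) =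
      Module.finrank k (degreePart I d) + Module.finrank k (degreePart J d) := by
  have : Module.Finite k (homogeneousSubmodule σ k d) :=
    Module.Finite.iff_fg.2 (homogeneousSubmodule_fg σ k d)
  have (I : Ideal (MvPolynomial σ k)) : Module.Finite k (degreePart I d) :=
    Submodule.finiteDimensional_of_le inf_le_right
  rw [degreePart_inf, degreePart_sup hI hJ, add_comm, Submodule.finrank_sup_add_finrank_inf_eq]

theorem coeff_degree_homogeneousComponent_degree (m : MonomialOrder σ) (f : MvPolynomial σ R) :
    coeff (m.degree f) (homogeneousComponent (m.degree f).degree f) = m.leadingCoeff f := by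
  classical
  rw [coeff_homogeneousComponent, if_pos rfl, MonomialOrder.leadingCoeff]

theorem degree_homogeneousComponent_degree (m : MonomialOrder σ) (f : MvPolynomial σ R) :
    m.degree (homogeneousComponent (m.degree f).degree f) = m.degree f := by
  classical
  rcases eq_or_ne f 0 with rfl | hf
  · simp
  refine m.toSyn.injective (le_antisymm ?_ ?_)
  · refine m.degree_le_degree_of_support_subset ?_
    rw [support_homogeneousComponent]
    exact Finset.filter_subset _ _
  · refine m.le_degree (mem_support_iff.2 ?_)
    rwa [coeff_degree_homogeneousComponent_degree, m.leadingCoeff_ne_zero_iff]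

theorem initialExponents_degreePart (m : MonomialOrder σ) {I : Ideal (MvPolynomial σ R)}
    (hI : I.IsHomogeneous (homogeneousSubmodule σ R)) (d : ℕ) :
    initialExponents m (degreePart I d : Set (MvPolynomial σ R)) =
      {a ∈ initialExponents m (I : Set (MvPolynomial σ R)) | a.degree = d} := by
  apply Set.Subset.antisymm
  · rintro _ ⟨f, ⟨⟨hf, hfd⟩, hf₀⟩, rfl⟩
    refine ⟨⟨f, ⟨hf, hf₀⟩, rfl⟩, ?_⟩
    by_contra hne
    exact m.coeff_degree_ne_zero_iff.2 hf₀ (IsHomogeneous.coeff_eq_zero hfd hne)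
  · rintro _ ⟨⟨f, ⟨hf, hf₀⟩, rfl⟩, rfl⟩
    refine ⟨_, ⟨homogeneousComponent_mem_degreePart hI hf _, fun h₀ ↦ ?_⟩,
      degree_homogeneousComponent_degree m f⟩
    apply m.leadingCoeff_ne_zero_iff.2 hf₀
    rw [← coeff_degree_homogeneousComponent_degree, h₀, coeff_zero]

theorem exists_ne_zero_forall_finrank_degreePart_map_eq [Finite σ] {A : Type*} [CommRing A]
    [IsDomain A] {L : Ideal (MvPolynomial σ A)}
    (hL : L.IsHomogeneous (homogeneousSubmodule σ A)) :
    ∃ c : A, c ≠ 0 ∧ ∃ h : ℕ → ℕ, ∀ {k : Type*} [Field k] (φ : A →+* k),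
      Function.Surjective φ → φ c ≠ 0 →
        ∀ d, Module.finrank k (degreePart (L.map (map φ)) d) = h d := by
  let _ : LinearOrder σ := IsWellOrder.linearOrder WellOrderingRel
  let m : MonomialOrder σ := MonomialOrder.lex
  obtain ⟨c, hc, hdvd⟩ := exists_ne_zero_forall_leadingCoeff_dvd m L
  refine ⟨c, hc, fun d ↦ {a ∈ initialExponents m (L : Set (MvPolynomial σ A)) |
    a.degree = d}.ncard, fun φ hφ hφc d ↦ ?_⟩
  have hin := initialExponents_map_eq m hφ fun a ha ↦ by
    obtain ⟨f, hf, hdeg, hfc⟩ := hdvd a ha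
    exact ⟨f, hf, hdeg, ne_zero_of_dvd_ne_zero hφc (map_dvd φ hfc)⟩
  rw [finrank_eq_ncard_initialExponents m,
    initialExponents_degreePart m (isHomogeneous_ideal_map hL _ fun hf ↦ hf.map φ), hin]

end DegreePart

section GenericCoordinates

attribute [local instance] MvPolynomial.gradedAlgebra

variable {K n}

theorem isHomog_iff_isHomogeneous {I : Ideal (PS K n)} :
    IsHomog K n I ↔ I.IsHomogeneous (homogeneousSubmodule (Fin n) K) := by
  refine ⟨fun h d f hf ↦ ?_, fun h f hf d ↦ homogeneousComponent_mem_of_mem h hf d⟩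
  exact decomposition.decompose'_apply f d ▸ h f hf d

theorem generally.and {P Q : GL (Fin n) K → Prop} (hP : generally K n P) (hQ : generally K n Q) :
    generally K n fun g ↦ P g ∧ Q g := by
  obtain ⟨F, hF, hP⟩ := hP
  obtain ⟨G, hG, hQ⟩ := hQ
  refine ⟨F * G, mul_ne_zero hF hG, fun g hg ↦ ?_⟩
  rw [map_mul] at hg
  exact ⟨hP g (left_ne_zero_of_mul hg), hQ g (right_ne_zero_of_mul hg)⟩

theorem generally.mono {P Q : GL (Fin n) K → Prop} (hP : generally K n P)
    (hPQ : ∀ g, P g → Q g) : generally K n Q :=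
  let ⟨F, hF, hP⟩ := hP
  ⟨F, hF, fun g hg ↦ hPQ g (hP g hg)⟩

variable (K n) in
/-- The polynomial ring `S` with its coefficients extended to the coordinate ring of the space of
`n × n` matrices. -/
abbrev GenericPS : Type := MvPolynomial (Fin n) (MvPolynomial (Fin n × Fin n) K)

variable (K n) in
/-- The change of coordinates given by the matrix of indeterminates. -/
def genericCoordChange : PS K n →ₐ[K] GenericPS K n :=
  aeval fun i ↦ ∑ j, (X (j, i) : MvPolynomial (Fin n × Fin n) K) • X j

/-- The substitution of `g` for the matrix of indeterminates in the coefficients. -/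
def specialization (g : GL (Fin n) K) : GenericPS K n →+* PS K n :=
  map (eval fun p ↦ (g : Matrix (Fin n) (Fin n) K) p.1 p.2)

theorem ideal_map_genericCoordChange_map_specialization (g : GL (Fin n) K) (J : Ideal (PS K n)) :
    (J.map (genericCoordChange K n).toRingHom).map (specialization g) =
      J.map (coordChange K n g) := by
  have hcomp : (specialization g).comp (genericCoordChange K n).toRingHom =
      (coordChange K n g).toRingHom := by
    refine ringHom_ext (fun r ↦ ?_) fun i ↦ ?_
    · simp [specialization, genericCoordChange, coordChange, MvPolynomial.algebraMap_apply]
    · simp [specialization, genericCoordChange, coordChange, smul_eq_C_mul]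
  rw [Ideal.map_map, hcomp]
  rfl

theorem ideal_map_C_map_specialization (g : GL (Fin n) K) (I : Ideal (PS K n)) :
    (I.map (map (C : K →+* MvPolynomial (Fin n × Fin n) K))).map (specialization g) = I := by
  have hcomp : (specialization g).comp (map (C : K →+* MvPolynomial (Fin n × Fin n) K)) =
      RingHom.id _ := by
    refine ringHom_ext (fun r ↦ ?_) fun i ↦ ?_ <;> simp [specialization]
  rw [Ideal.map_map, hcomp, Ideal.map_id]

theorem isHomogeneous_genericCoordChange {f : PS K n} {d : ℕ} (hf : f.IsHomogeneous d) :
    (genericCoordChange K n f).IsHomogeneous d := by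
  rw [← one_mul d]
  exact hf.aeval _ fun i ↦
    isHomogeneous_sum_smul_X fun j ↦ (X (j, i) : MvPolynomial (Fin n × Fin n) K)

theorem isHomogeneous_coordChange (g : GL (Fin n) K) {f : PS K n} {d : ℕ}
    (hf : f.IsHomogeneous d) : (coordChange K n g f).IsHomogeneous d := by
  rw [← one_mul d]
  exact hf.aeval _ fun i ↦ isHomogeneous_sum_smul_X fun j ↦ (g : Matrix (Fin n) (Fin n) K) j i

theorem IsHomog.map_coordChange {J : Ideal (PS K n)} (hJ : IsHomog K n J) (g : GL (Fin n) K) :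
    IsHomog K n (J.map (coordChange K n g)) :=
  isHomog_iff_isHomogeneous.2 <|
    isHomogeneous_ideal_map (isHomog_iff_isHomogeneous.1 hJ) (coordChange K n g).toRingHom
      (isHomogeneous_coordChange g)

theorem IsHomog.map_genericCoordChange {J : Ideal (PS K n)} (hJ : IsHomog K n J) :
    (J.map (genericCoordChange K n).toRingHom).IsHomogeneous
      (homogeneousSubmodule (Fin n) (MvPolynomial (Fin n × Fin n) K)) :=
  isHomogeneous_ideal_map (isHomog_iff_isHomogeneous.1 hJ) _ isHomogeneous_genericCoordChange

theorem IsHomog.map_C {I : Ideal (PS K n)} (hI : IsHomog K n I) :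
    (I.map (map (C : K →+* MvPolynomial (Fin n × Fin n) K))).IsHomogeneous
      (homogeneousSubmodule (Fin n) (MvPolynomial (Fin n × Fin n) K)) :=
  isHomogeneous_ideal_map (isHomog_iff_isHomogeneous.1 hI) _ fun hf ↦ hf.map _

theorem hilb_inf_add_hilb_sup {I J : Ideal (PS K n)} (hI : IsHomog K n I) (hJ : IsHomog K n J)
    (d : ℕ) : hilb K n (I ⊓ J) d + hilb K n (I ⊔ J) d = hilb K n I d + hilb K n J d :=
  finrank_degreePart_inf_add_finrank_degreePart_sup (isHomog_iff_isHomogeneous.1 hI)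
    (isHomog_iff_isHomogeneous.1 hJ) d

theorem exists_generally_hilb_map_specialization_eq {L : Ideal (GenericPS K n)}
    (hL : L.IsHomogeneous (homogeneousSubmodule (Fin n) (MvPolynomial (Fin n × Fin n) K))) :
    ∃ h : ℕ → ℕ, generally K n fun g ↦ ∀ d, hilb K n (L.map (specialization g)) d = h d := by
  obtain ⟨F, hF, h, hh⟩ := exists_ne_zero_forall_finrank_degreePart_map_eq hL
  exact ⟨h, F, hF, fun g ↦ hh _ fun r ↦ ⟨C r, eval_C r⟩⟩

theorem exists_generally_hilb_map_coordChange_eq {J : Ideal (PS K n)} (hJ : IsHomog K n J) :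
    ∃ h : ℕ → ℕ, generally K n fun g ↦ ∀ d, hilb K n (J.map (coordChange K n g)) d = h d := by
  simpa only [ideal_map_genericCoordChange_map_specialization] using
    exists_generally_hilb_map_specialization_eq hJ.map_genericCoordChange

theorem exists_generally_hilb_sup_map_coordChange_eq {I J : Ideal (PS K n)}
    (hI : IsHomog K n I) (hJ : IsHomog K n J) :
    ∃ h : ℕ → ℕ, generally K n fun g ↦ ∀ d, hilb K n (I ⊔ J.map (coordChange K n g)) d = h d := by
  simpa only [Ideal.map_sup, ideal_map_genericCoordChange_map_specialization,
    ideal_map_C_map_specialization] using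
    exists_generally_hilb_map_specialization_eq (hI.map_C.sup hJ.map_genericCoordChange)

theorem exists_generally_hilb_mul_map_coordChange_eq {I J : Ideal (PS K n)}
    (hI : IsHomog K n I) (hJ : IsHomog K n J) :
    ∃ h : ℕ → ℕ, generally K n fun g ↦ ∀ d, hilb K n (I * J.map (coordChange K n g)) d = h d := by
  simpa only [Ideal.map_mul, ideal_map_genericCoordChange_map_specialization,
    ideal_map_C_map_specialization] using
    exists_generally_hilb_map_specialization_eq (hI.map_C.mul hJ.map_genericCoordChange)

end GenericCoordinates

/-- **Lemma 2.1** (Caviglia–Murai): for homogeneous ideals `I, J ⊆ S` and a general change of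
coordinates `g ∈ GL_n(K)`, the Hilbert functions of `I ∩ g(J)` and of `I·g(J)` are well
defined: there are functions `h₁ h₂ : ℕ → ℕ` and a nonempty Zariski open subset of `GL_n(K)`
on which `H(I ∩ g(J), d) = h₁ d` and `H(I·g(J), d) = h₂ d` for all `d`. -/
theorem hilbert_function_of_general_intersection_and_product_well_defined
    (K : Type) [Field K] [Infinite K] (n : ℕ)
    (I J : Ideal (PS K n)) (hI : IsHomog K n I) (hJ : IsHomog K n J) :
    ∃ h₁ h₂ : ℕ → ℕ, generally K n (fun g =>
      (∀ d : ℕ, hilb K n (I ⊓ Ideal.map (coordChange K n g) J) d = h₁ d) ∧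
      (∀ d : ℕ, hilb K n (I * Ideal.map (coordChange K n g) J) d = h₂ d)) := by
  obtain ⟨a, ha⟩ := exists_generally_hilb_map_coordChange_eq hJ
  obtain ⟨s, hs⟩ := exists_generally_hilb_sup_map_coordChange_eq hI hJ
  obtain ⟨p, hp⟩ := exists_generally_hilb_mul_map_coordChange_eq hI hJ
  refine ⟨fun d ↦ hilb K n I d + a d - s d, p, ((ha.and hs).and hp).mono ?_⟩
  rintro g ⟨⟨hag, hsg⟩, hpg⟩
  refine ⟨fun d ↦ Nat.eq_sub_of_add_eq ?_, hpg⟩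
  rw [← hag, ← hsg]
  exact hilb_inf_add_hilb_sup hI (hJ.map_coordChange g) d

end
end

section
/- Let K be an infinite field, S = K[x_1,...,x_n], M a finitely generated graded S-module, and J ⊆ S a homogeneous ideal. Then for a general change of coordinates g ∈ GL_n(K), one has dim_K Tor_i^S(M, S/g(J))_j ≤ dim_K Tor_i^S(M, S/J)_j for all i ≥ 0 and all degrees j. -/
open MvPolynomial TensorProduct CategoryTheory

noncomputable section

variable (K : Type) [Field K] (n : ℕ)

/-- The standard grading of `S = K[x_1,...,x_n]`, extended to `ℤ` (zero in negative
degrees). -/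
def polyGrade (d : ℤ) : Submodule K (PS K n) :=
  if 0 ≤ d then homogeneousSubmodule (Fin n) K d.toNat else ⊥

/-- The degree `d` component of the (internal) tensor-product grading on `A ⊗[K] B`. -/
def tensorGrade {A B : Type} [AddCommGroup A] [Module K A] [AddCommGroup B] [Module K B]
    (GA : ℤ → Submodule K A) (GB : ℤ → Submodule K B) (d : ℤ) :
    Submodule K (A ⊗[K] B) :=
  ⨆ p : ℤ, LinearMap.range (TensorProduct.map (GA p).subtype (GB (d - p)).subtype)

variable (N : Type) [AddCommGroup N] [Module K N] [Module (PS K n) N]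
  [IsScalarTower K (PS K n) N]

/-- The tower of `K`-vector spaces `D_i = S^{⊗ i} ⊗_K N` appearing in the bar complex
`M ⊗_K S^{⊗ i} ⊗_K N`, which computes `Tor^S_i(M, N)`. -/
def barD : ℕ → ModuleCat K
  | 0 => ModuleCat.of K N
  | (i + 1) => ModuleCat.of K (PS K n ⊗[K] (barD i))

/-- The internal `ℤ`-grading on `D_i = S^{⊗ i} ⊗_K N` induced by the standard grading of
`S` and a grading `GN` of `N`. -/
def barDGrade (GN : ℤ → Submodule K N) : (i : ℕ) → ℤ → Submodule K (barD K n N i)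
  | 0 => GN
  | (i + 1) => tensorGrade K (polyGrade K n) (barDGrade GN i)

/-- Scalar multiplication `S → N → N` as a `K`-bilinear map. -/
def smulBilin : PS K n →ₗ[K] N →ₗ[K] N :=
  LinearMap.mk₂ K (fun s x => s • x)
    (fun s₁ s₂ x => add_smul s₁ s₂ x)
    (fun c s x => smul_assoc c s x)
    (fun s x y => smul_add s x y)
    (fun c s x => (smul_comm c s x).symm)

/-- The "contraction" part of the bar differential, `c_i : D_{i+1} → D_i`, defined
recursively by `c_0(s ⊗ x) = s • x` and
`c_{i+1}(s ⊗ s' ⊗ t) = (s s') ⊗ t - s ⊗ c_i(s' ⊗ t)`. -/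
def barC : (i : ℕ) → ((barD K n N (i + 1)) →ₗ[K] (barD K n N i))
  | 0 => TensorProduct.lift (smulBilin K n N)
  | (i + 1) =>
      (TensorProduct.map (LinearMap.mul' K (PS K n)) LinearMap.id).comp
        (TensorProduct.assoc K (PS K n) (PS K n) (barD K n N i)).symm.toLinearMap
      - TensorProduct.map LinearMap.id (barC i)

variable (M : Type) [AddCommGroup M] [Module K M] [Module (PS K n) M]
  [IsScalarTower K (PS K n) M]

/-- Right scalar multiplication `M ⊗[K] S → M` as a `K`-linear map. -/
def smulMapM : M ⊗[K] PS K n →ₗ[K] M :=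
  TensorProduct.lift (LinearMap.mk₂ K (fun m s => s • m)
    (fun m₁ m₂ s => smul_add s m₁ m₂)
    (fun c m s => smul_comm s c m)
    (fun m s₁ s₂ => add_smul s₁ s₂ m)
    (fun c m s => smul_assoc c s m))

/-- The bar differential `b_i : M ⊗ D_{i+1} → M ⊗ D_i`,
`b(m ⊗ s ⊗ t) = (s • m) ⊗ t - m ⊗ c_i(s ⊗ t)`.  The complex
`⋯ → M ⊗_K S^{⊗ i} ⊗_K N → ⋯ → M ⊗_K S ⊗_K N → M ⊗_K N → 0`
is the bar complex `M ⊗_S Bar(S, N)`, whose `i`-th homology is `Tor^S_i(M, N)`;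
it is a complex of graded vector spaces with degree-preserving differentials. -/
def barB (i : ℕ) : (M ⊗[K] (barD K n N (i + 1))) →ₗ[K] (M ⊗[K] (barD K n N i)) :=
  (TensorProduct.map (smulMapM K n M) LinearMap.id).comp
      (TensorProduct.assoc K M (PS K n) (barD K n N i)).symm.toLinearMap
  - TensorProduct.map LinearMap.id (barC K n N i)

/-- `dim_K Tor_i^S(M, N)_j`, the dimension of the degree-`j` component of the graded module
`Tor_i^S(M, N)` for graded modules `M`, `N`: it is computed as the homology of the degree-`j`
strand of the bar complex, namely `dim (ker b_i)_j - dim (im b_{i+1})_j`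
(for `i = 0`, `dim (M ⊗_K N)_j - dim (im b_1)_j`). -/
def torStrandDim (GM : ℤ → Submodule K M) (GN : ℤ → Submodule K N) : ℕ → ℤ → ℕ
  | 0, j =>
      Module.finrank K ↥(tensorGrade K GM (barDGrade K n N GN 0) j) -
        Module.finrank K
          ↥(LinearMap.range (barB K n N M 0) ⊓ tensorGrade K GM (barDGrade K n N GN 0) j)
  | (i + 1), j =>
      Module.finrank K
          ↥(LinearMap.ker (barB K n N M i) ⊓
              tensorGrade K GM (barDGrade K n N GN (i + 1)) j) -
        Module.finrank K
          ↥(LinearMap.range (barB K n N M (i + 1)) ⊓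
              tensorGrade K GM (barDGrade K n N GN (i + 1)) j)

/-- The quotient grading on `S/J`. -/
def quotGrade (J : Ideal (PS K n)) : ℤ → Submodule K (PS K n ⧸ J) := fun d =>
  (polyGrade K n d).map (Ideal.Quotient.mkₐ K J).toLinearMap

/-- The grading on an ideal `I ⊆ S` viewed as an `S`-module. -/
def idealGrade (I : Ideal (PS K n)) : ℤ → Submodule K ↥I := fun d =>
  (polyGrade K n d).comap ((Submodule.subtype I).restrictScalars K)

/-- `dim_K Tor_i^S(S/I, S/J)_j`. -/
def torQQ (I J : Ideal (PS K n)) (i : ℕ) (j : ℤ) : ℕ :=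
  torStrandDim K n (PS K n ⧸ J) (PS K n ⧸ I) (quotGrade K n I) (quotGrade K n J) i j

/-- `dim_K Tor_i^S(I, S/J)_j`. -/
def torIQ (I J : Ideal (PS K n)) (i : ℕ) (j : ℤ) : ℕ :=
  torStrandDim K n (PS K n ⧸ J) ↥I (idealGrade K n I) (quotGrade K n J) i j

end

/-!
`Tor` is computed by the bar complex `M ⊗ S^{⊗ i} ⊗ N`, so in degree `j` the dimension of `Tor_i` is
that of a strand of the complex minus the ranks of the two adjacent differentials. Twisting `N` by
a change of coordinates `g` does not change the dimensions of the strands, so it suffices that the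
ranks do not drop for general `g`.

For a free cover of `N` with kernel `Z`, the rank of the `(i + 1)`-st differential for `N` differs
from that of the `i`-th differential for `Z` by quantities invariant under twisting, and the twist
of `Z` is the kernel of a free cover of the twist of `N`. This reduces the claim to the
differential `M ⊗ S ⊗ N → M ⊗ N`, whose cokernel is `M ⊗_S N`. If `M` and `N` are presented by
free modules on `α` and `γ`, the kernel of `S^(α × γ) → M ⊗_S N` is generated by products
`u · g(v)`, where `u` or `v` is a relation, and so is a specialization of a module over polynomials
in the entries of a generic matrix. By Dickson's lemma finitely many elements carry the leading
monomials of all elements of that module, and where the product of their leading coefficients does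
not vanish, the dimension of the specialization does not drop in any degree `j`: a single
polynomial serves all `j`.

By Hilbert's syzygy theorem the bar complex is exact in homological degrees above `n`, so only
finitely many such polynomials have to be multiplied.
-/

noncomputable section

namespace GenericTor

/-! ### The bar complex -/

section BarComplex

variable {K : Type} [Field K] {n : ℕ}
  {M : Type} [AddCommGroup M] [Module K M]
  {N : Type} [AddCommGroup N] [Module K N]

/-- The pure tensor `s ⊗ t` of the bar tower, typed in `barD` so that the differentials apply to
it syntactically. -/
def barCons (i : ℕ) : PS K n →ₗ[K] barD K n N i →ₗ[K] barD K n N (i + 1) :=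
  TensorProduct.mk K (PS K n) (barD K n N i)

theorem barD_induction {i : ℕ} {P : barD K n N (i + 1) → Prop}
    (cons : ∀ s t, P (barCons i s t)) (add : ∀ x y, P x → P y → P (x + y))
    (x : barD K n N (i + 1)) : P x := by
  refine TensorProduct.induction_on (motive := P) x ?_ cons add
  have h := cons 0 0
  rw [map_zero] at h
  exact h

theorem barD_hom_ext {i : ℕ} {X : Type} [AddCommGroup X] [Module K X]
    {f g : barD K n N (i + 1) →ₗ[K] X} (h : ∀ s t, f (barCons i s t) = g (barCons i s t)) : f = g :=
  TensorProduct.ext' h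

theorem tensor_barD_hom_ext {i : ℕ} {X : Type} [AddCommGroup X] [Module K X]
    {f g : M ⊗[K] barD K n N (i + 1) →ₗ[K] X}
    (h : ∀ m s t, f (m ⊗ₜ barCons i s t) = g (m ⊗ₜ barCons i s t)) : f = g :=
  TensorProduct.ext (LinearMap.ext fun m => barD_hom_ext (h m))

section KLinearMaps

variable {N' : Type} [AddCommGroup N'] [Module K N']

/-- The map `D_i(N) → D_i(N')` of bar towers induced by a `K`-linear map `N → N'`. -/
def barDMap (f : N →ₗ[K] N') : (i : ℕ) → (barD K n N i →ₗ[K] barD K n N' i)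
  | 0 => f
  | (i + 1) => LinearMap.lTensor (PS K n) (barDMap f i)

theorem barDMap_barCons (f : N →ₗ[K] N') (i : ℕ) (s : PS K n) (t : barD K n N i) :
    barDMap f (i + 1) (barCons i s t) = barCons i s (barDMap f i t) := rfl

theorem barDMap_injective {f : N →ₗ[K] N'} (hf : Function.Injective f) (i : ℕ) :
    Function.Injective (barDMap (n := n) f i) := by
  induction i with
  | zero => exact hf
  | succ i ih => exact Module.Flat.lTensor_preserves_injective_linearMap _ ih

theorem barDMap_surjective {f : N →ₗ[K] N'} (hf : Function.Surjective f) (i : ℕ) :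
    Function.Surjective (barDMap (n := n) f i) := by
  induction i with
  | zero => exact hf
  | succ i ih => exact LinearMap.lTensor_surjective _ ih

variable {N'' : Type} [AddCommGroup N''] [Module K N'']

theorem barDMap_exact {f : N →ₗ[K] N'} {q : N' →ₗ[K] N''} (h : Function.Exact f q)
    (hq : Function.Surjective q) (i : ℕ) :
    Function.Exact (barDMap (n := n) f i) (barDMap q i) := by
  induction i with
  | zero => exact h
  | succ i ih => exact lTensor_exact (PS K n) ih (barDMap_surjective hq i)

/-- The contracting homotopy of the bar tower built from a section `σ : N → S ⊗ N` of the action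
map: it applies `σ` to the rightmost tensor factor. -/
def barHomotopy (σ : N →ₗ[K] barD K n N 1) : (i : ℕ) → (barD K n N i →ₗ[K] barD K n N (i + 1))
  | 0 => σ
  | (i + 1) => LinearMap.lTensor (PS K n) (barHomotopy σ i)

theorem barHomotopy_barCons (σ : N →ₗ[K] barD K n N 1) (i : ℕ) (s : PS K n)
    (t : barD K n N i) :
    barHomotopy σ (i + 1) (barCons i s t) = barCons (i + 1) s (barHomotopy σ i t) := rfl

end KLinearMaps

/-- The `S`-module structure of the bar tower: multiplication on the leftmost tensor factor. -/
instance barDModule [Module (PS K n) N] : (i : ℕ) → Module (PS K n) (barD K n N i)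
  | 0 => inferInstanceAs (Module (PS K n) N)
  | (i + 1) => inferInstanceAs (Module (PS K n) (PS K n ⊗[K] barD K n N i))

theorem smul_barCons [Module (PS K n) N] (i : ℕ) (s s' : PS K n) (t : barD K n N i) :
    s • barCons i s' t = barCons i (s * s') t :=
  TensorProduct.smul_tmul' s s' t

theorem barHomotopy_succ_smul [Module (PS K n) N] (σ : N →ₗ[K] barD K n N 1) (i : ℕ) (s : PS K n)
    (y : barD K n N (i + 1)) :
    barHomotopy σ (i + 1) (s • y) = s • barHomotopy σ (i + 1) y := by
  refine barD_induction (P := fun y => barHomotopy σ (i + 1) (s • y) =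
    s • barHomotopy σ (i + 1) y) (fun s' t => ?_)
    (fun x y hx hy => by simp only [smul_add, map_add, hx, hy]) y
  rw [smul_barCons, barHomotopy_barCons, barHomotopy_barCons, smul_barCons]

variable [Module (PS K n) M] [IsScalarTower K (PS K n) M]
  [Module (PS K n) N] [IsScalarTower K (PS K n) N]

theorem barC_succ_barCons (i : ℕ) (s : PS K n) (y : barD K n N (i + 1)) :
    barC K n N (i + 1) (barCons (i + 1) s y) = s • y - barCons i s (barC K n N i y) := by
  refine barD_induction (P := fun y => barC K n N (i + 1) (barCons (i + 1) s y) =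
    s • y - barCons i s (barC K n N i y)) (fun s' t => ?_) (fun x y hx hy => ?_) y
  · rw [smul_barCons]
    rfl
  · simp only [map_add, smul_add, hx, hy]
    abel

theorem barB_tmul_barCons (i : ℕ) (m : M) (s : PS K n) (t : barD K n N i) :
    barB K n N M i (m ⊗ₜ barCons i s t) =
      (s • m) ⊗ₜ t - m ⊗ₜ barC K n N i (barCons i s t) := rfl

theorem barC_smul (i : ℕ) (s : PS K n) (y : barD K n N (i + 1)) :
    barC K n N i (s • y) = s • barC K n N i y := by
  cases i with
  | zero =>
    refine barD_induction (P := fun y => barC K n N 0 (s • y) = s • barC K n N 0 y)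
      (fun s' x => ?_) (fun x y hx hy => by simp only [smul_add, map_add, hx, hy]) y
    rw [smul_barCons]
    exact mul_smul s s' (x : N)
  | succ i =>
    refine barD_induction (P := fun y => barC K n N (i + 1) (s • y) = s • barC K n N (i + 1) y)
      (fun s' x => ?_) (fun x y hx hy => by simp only [smul_add, map_add, hx, hy]) y
    rw [smul_barCons, barC_succ_barCons, barC_succ_barCons, smul_sub, mul_smul, smul_barCons]

theorem barC_barC (i : ℕ) (y : barD K n N (i + 2)) : barC K n N i (barC K n N (i + 1) y) = 0 := by
  induction i with
  | zero =>
    refine barD_induction (P := fun y => barC K n N 0 (barC K n N 1 y) = 0) (fun s x => ?_)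
      (fun x y hx hy => by simp only [map_add, hx, hy, add_zero]) y
    rw [barC_succ_barCons, map_sub, barC_smul]
    exact sub_self _
  | succ i ih =>
    refine barD_induction (P := fun y => barC K n N (i + 1) (barC K n N (i + 2) y) = 0)
      (fun s x => ?_) (fun x y hx hy => by simp only [map_add, hx, hy, add_zero]) y
    rw [barC_succ_barCons, map_sub, barC_smul, barC_succ_barCons, ih, map_zero, sub_zero, sub_self]

theorem barC_barCons_barC (i : ℕ) (s : PS K n) (y : barD K n N (i + 1)) :
    barC K n N i (barCons i s (barC K n N i y)) = s • barC K n N i y := by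
  have h := barC_barC i (barCons (i + 1) s y)
  rw [barC_succ_barCons, map_sub, barC_smul, sub_eq_zero] at h
  exact h.symm

theorem barB_comp_barB (i : ℕ) : barB K n N M i ∘ₗ barB K n N M (i + 1) = 0 := by
  refine tensor_barD_hom_ext fun m s y => ?_
  refine barD_induction (P := fun y => (barB K n N M i ∘ₗ barB K n N M (i + 1))
    (m ⊗ₜ barCons (i + 1) s y) = 0) (fun s' t => ?_) (fun x y hx hy => ?_) y
  · rw [LinearMap.comp_apply, barB_tmul_barCons, barC_succ_barCons, smul_barCons, tmul_sub,
      map_sub, map_sub, barB_tmul_barCons, barB_tmul_barCons, barB_tmul_barCons,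
      barC_barCons_barC, ← smul_barCons, barC_smul, mul_comm s s', mul_smul]
    abel
  · simp only [map_add, tmul_add, hx, hy, add_zero]

theorem barB_barB (i : ℕ) (z : M ⊗[K] barD K n N (i + 2)) :
    barB K n N M i (barB K n N M (i + 1) z) = 0 :=
  LinearMap.congr_fun (barB_comp_barB i) z

section Functoriality

variable {M' : Type} [AddCommGroup M'] [Module K M'] [Module (PS K n) M']
  [IsScalarTower K (PS K n) M']
  {N' : Type} [AddCommGroup N'] [Module K N'] [Module (PS K n) N'] [IsScalarTower K (PS K n) N']

theorem barDMap_smul (f : N →ₗ[PS K n] N') (i : ℕ) (s : PS K n) (t : barD K n N i) :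
    barDMap (f.restrictScalars K) i (s • t) = s • barDMap (f.restrictScalars K) i t := by
  cases i with
  | zero => exact map_smul f s (t : N)
  | succ i =>
    refine barD_induction (P := fun t => barDMap (f.restrictScalars K) (i + 1) (s • t) =
      s • barDMap (f.restrictScalars K) (i + 1) t) (fun s' x => ?_)
      (fun x y hx hy => by simp only [smul_add, map_add, hx, hy]) t
    rw [smul_barCons, barDMap_barCons, barDMap_barCons, smul_barCons]

theorem barDMap_barC (f : N →ₗ[PS K n] N') (i : ℕ) (y : barD K n N (i + 1)) :
    barDMap (f.restrictScalars K) i (barC K n N i y) =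
      barC K n N' i (barDMap (f.restrictScalars K) (i + 1) y) := by
  induction i with
  | zero =>
    refine barD_induction (P := fun y => barDMap (f.restrictScalars K) 0 (barC K n N 0 y) =
      barC K n N' 0 (barDMap (f.restrictScalars K) 1 y)) (fun s x => ?_)
      (fun x y hx hy => by simp only [map_add, hx, hy]) y
    exact map_smul f s (x : N)
  | succ i ih =>
    refine barD_induction (P := fun y => barDMap (f.restrictScalars K) (i + 1)
      (barC K n N (i + 1) y) = barC K n N' (i + 1) (barDMap (f.restrictScalars K) (i + 2) y))
      (fun s x => ?_) (fun x y hx hy => by simp only [map_add, hx, hy]) y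
    rw [barDMap_barCons, barC_succ_barCons, barC_succ_barCons, map_sub, barDMap_smul,
      barDMap_barCons, ih]

theorem map_barDMap_barB (h : M →ₗ[PS K n] M') (f : N →ₗ[PS K n] N') (i : ℕ)
    (z : M ⊗[K] barD K n N (i + 1)) :
    TensorProduct.map (h.restrictScalars K) (barDMap (f.restrictScalars K) i)
        (barB K n N M i z) =
      barB K n N' M' i
        (TensorProduct.map (h.restrictScalars K) (barDMap (f.restrictScalars K) (i + 1)) z) := by
  refine LinearMap.congr_fun (f := TensorProduct.map (h.restrictScalars K)
    (barDMap (f.restrictScalars K) i) ∘ₗ barB K n N M i) (g := barB K n N' M' i ∘ₗ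
    TensorProduct.map (h.restrictScalars K) (barDMap (f.restrictScalars K) (i + 1)))
    (tensor_barD_hom_ext fun m s t => ?_) z
  simp only [LinearMap.comp_apply, TensorProduct.map_tmul, barDMap_barCons, barB_tmul_barCons,
    map_sub, barDMap_barC, LinearMap.restrictScalars_apply, map_smul]

theorem lTensor_barDMap_barB (f : N →ₗ[PS K n] N') (i : ℕ) (z : M ⊗[K] barD K n N (i + 1)) :
    (barDMap (f.restrictScalars K) i).lTensor M (barB K n N M i z) =
      barB K n N' M i ((barDMap (f.restrictScalars K) (i + 1)).lTensor M z) :=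
  map_barDMap_barB LinearMap.id f i z

variable (K n M N) in
/-- The bar complex computing `Tor^S(M, N)` is exact in homological degree `i + 1`. -/
def BarExactAt (i : ℕ) : Prop :=
  Function.Exact (barB K n N M (i + 1)) (barB K n N M i)

theorem barExactAt_of_ker_le {i : ℕ}
    (h : ∀ z, barB K n N M i z = 0 → z ∈ LinearMap.range (barB K n N M (i + 1))) :
    BarExactAt K n M N i :=
  fun z => ⟨h z, by rintro ⟨w, rfl⟩; exact barB_barB i w⟩

variable {N'' : Type} [AddCommGroup N''] [Module K N''] [Module (PS K n) N'']
  [IsScalarTower K (PS K n) N'']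

theorem BarExactAt.succ_of_shortExact {f : N →ₗ[PS K n] N'} {q : N' →ₗ[PS K n] N''}
    (hfq : Function.Exact f q) (hf : Function.Injective f) (hq : Function.Surjective q) {i : ℕ}
    (hN : BarExactAt K n M N i) (hN' : BarExactAt K n M N' (i + 1)) :
    BarExactAt K n M N'' (i + 1) := by
  have exact_tensor (j : ℕ) : Function.Exact ((barDMap (n := n) (f.restrictScalars K) j).lTensor M)
      ((barDMap (q.restrictScalars K) j).lTensor M) :=
    lTensor_exact M (barDMap_exact hfq hq j) (barDMap_surjective hq j)
  refine barExactAt_of_ker_le fun z hz => ?_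
  obtain ⟨x, rfl⟩ := LinearMap.lTensor_surjective M
    (barDMap_surjective (f := q.restrictScalars K) hq (i + 2)) z
  rw [← lTensor_barDMap_barB] at hz
  obtain ⟨y, hy⟩ := (exact_tensor (i + 1) _).1 hz
  have hy_cycle : barB K n N M i y = 0 := by
    refine Module.Flat.lTensor_preserves_injective_linearMap _
      (barDMap_injective (f := f.restrictScalars K) hf i) ?_
    rw [lTensor_barDMap_barB, hy, barB_barB, map_zero]
  obtain ⟨w, rfl⟩ := (hN y).1 hy_cycle
  obtain ⟨v, hv⟩ := (hN' (x - (barDMap (f.restrictScalars K) (i + 2)).lTensor M w)).1 (by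
    rw [map_sub, ← lTensor_barDMap_barB, hy, sub_self])
  refine ⟨(barDMap (q.restrictScalars K) (i + 3)).lTensor M v, ?_⟩
  rw [← lTensor_barDMap_barB, hv, map_sub, (exact_tensor (i + 2)).apply_apply_eq_zero, sub_zero]

end Functoriality

section Contraction

variable {σ : N →ₗ[K] barD K n N 1}

theorem barC_barHomotopy (hσ_smul : ∀ (s : PS K n) (x : N), σ (s • x) = s • σ x)
    (hσ : ∀ x, barC K n N 0 (σ x) = x) (i : ℕ) (y : barD K n N (i + 1)) :
    barC K n N (i + 1) (barHomotopy σ (i + 1) y) =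
      barHomotopy σ i (barC K n N i y) + (-1 : K) ^ (i + 1) • y := by
  induction i with
  | zero =>
    refine LinearMap.congr_fun (f := barC K n N 1 ∘ₗ barHomotopy σ 1)
      (g := barHomotopy σ 0 ∘ₗ barC K n N 0 + (-1 : K) ^ 1 • LinearMap.id)
      (barD_hom_ext fun s x => ?_) y
    have hσx : barC K n N 0 (barHomotopy σ 0 x) = x := hσ x
    have hσs : barHomotopy σ 0 (barC K n N 0 (barCons 0 s x)) = s • barHomotopy σ 0 x :=
      hσ_smul s x
    rw [LinearMap.comp_apply, barHomotopy_barCons, barC_succ_barCons, hσx, LinearMap.add_apply,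
      LinearMap.comp_apply, hσs, LinearMap.smul_apply, LinearMap.id_apply, pow_one, neg_one_smul,
      sub_eq_add_neg]
  | succ i ih =>
    refine barD_induction (P := fun y => barC K n N (i + 2) (barHomotopy σ (i + 2) y) =
      barHomotopy σ (i + 1) (barC K n N (i + 1) y) + (-1 : K) ^ (i + 2) • y) (fun s x => ?_)
      (fun x y hx hy => by simp only [smul_add, map_add, hx, hy]; abel) y
    rw [barHomotopy_barCons, barC_succ_barCons, ih, barC_succ_barCons, map_sub,
      barHomotopy_succ_smul, barHomotopy_barCons, map_add, map_smul, pow_succ _ (i + 1),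
      mul_neg_one, neg_smul]
    abel

theorem barB_lTensor_barHomotopy (hσ_smul : ∀ (s : PS K n) (x : N), σ (s • x) = s • σ x)
    (hσ : ∀ x, barC K n N 0 (σ x) = x) (i : ℕ) (z : M ⊗[K] barD K n N (i + 1)) :
    barB K n N M (i + 1) ((barHomotopy σ (i + 1)).lTensor M z) =
      (barHomotopy σ i).lTensor M (barB K n N M i z) - (-1 : K) ^ (i + 1) • z := by
  refine LinearMap.congr_fun (f := barB K n N M (i + 1) ∘ₗ (barHomotopy σ (i + 1)).lTensor M)
    (g := (barHomotopy σ i).lTensor M ∘ₗ barB K n N M i - (-1 : K) ^ (i + 1) • LinearMap.id)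
    (tensor_barD_hom_ext fun m s t => ?_) z
  simp only [LinearMap.comp_apply, LinearMap.sub_apply, LinearMap.smul_apply, LinearMap.id_apply,
    LinearMap.lTensor_tmul, barB_tmul_barCons, map_sub]
  rw [barHomotopy_barCons, barB_tmul_barCons, ← barHomotopy_barCons,
    barC_barHomotopy hσ_smul hσ, tmul_add, tmul_smul]
  abel

theorem barExactAt_of_section (hσ_smul : ∀ (s : PS K n) (x : N), σ (s • x) = s • σ x)
    (hσ : ∀ x, barC K n N 0 (σ x) = x) (i : ℕ) : BarExactAt K n M N i := by
  refine barExactAt_of_ker_le fun z hz => ?_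
  have h := barB_lTensor_barHomotopy hσ_smul hσ i z
  rw [hz, map_zero, zero_sub, ← neg_smul] at h
  have unit_ne_zero : -(-1 : K) ^ (i + 1) ≠ 0 :=
    neg_ne_zero.2 (pow_ne_zero _ (neg_ne_zero.2 one_ne_zero))
  exact (Submodule.smul_mem_iff _ unit_ne_zero).1 ⟨_, h⟩

theorem barExactAt_of_projective [Module.Projective (PS K n) N] (i : ℕ) : BarExactAt K n M N i := by
  let act : PS K n ⊗[K] N →ₗ[PS K n] N :=
    { barC K n N 0 with map_smul' := barC_smul (N := N) 0 }
  have act_surjective : Function.Surjective act := fun x => ⟨1 ⊗ₜ x, one_smul _ x⟩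
  obtain ⟨σ, hσ⟩ := Module.projective_lifting_property act LinearMap.id act_surjective
  exact barExactAt_of_section (σ := σ.restrictScalars K) (map_smul σ)
    (LinearMap.congr_fun hσ) i

end Contraction

end BarComplex

/-! ### Vanishing above the number of variables -/

section PolynomialResolution

open scoped Polynomial

variable {R : Type*} [CommRing R] {M : Type*} [AddCommGroup M] [Module R M]

theorem tensor_polynomial_hom_ext {P : Type*} [AddCommGroup P] [Module R P]
    {f g : R[X] ⊗[R] M →ₗ[R] P}
    (h : ∀ (k : ℕ) (m : M), f ((Polynomial.X ^ k) ⊗ₜ m) = g ((Polynomial.X ^ k) ⊗ₜ m)) :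
    f = g := by
  refine TensorProduct.ext (Polynomial.lhom_ext' fun k => LinearMap.ext_ring ?_)
  ext m
  simpa [← Polynomial.X_pow_eq_monomial] using h k m

variable [Module R[X] M] [IsScalarTower R R[X] M]

variable (R M) in
/-- The action `R[X] ⊗ M → M` of `R[X]` on an `R[X]`-module `M`, the cokernel of
`X ⊗ 1 - 1 ⊗ X`. -/
def polynomialAct : R[X] ⊗[R] M →ₗ[R[X]] M := LinearMap.id.liftBaseChange R[X]

variable (R M) in
/-- The endomorphism `X ⊗ 1 - 1 ⊗ X` of `R[X] ⊗ M`. -/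
def polynomialDiff : R[X] ⊗[R] M →ₗ[R[X]] R[X] ⊗[R] M :=
  (Polynomial.X : R[X]) • LinearMap.id -
    (Algebra.lsmul R R M (Polynomial.X : R[X])).baseChange R[X]

variable (R M) in
/-- The homotopy `X ^ k ⊗ m ↦ ∑ i < k, X ^ (k - 1 - i) ⊗ X ^ i m` contracting
`0 → R[X] ⊗ M → R[X] ⊗ M → M → 0` over `R`. -/
def polynomialHomotopy : R[X] ⊗[R] M →ₗ[R] R[X] ⊗[R] M :=
  TensorProduct.lift ((Polynomial.basisMonomials R).constr R fun k =>
    ∑ i ∈ Finset.range k, (TensorProduct.mk R R[X] M (Polynomial.X ^ (k - 1 - i))) ∘ₗ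
      Algebra.lsmul R R M (Polynomial.X ^ i : R[X]))

theorem polynomialAct_tmul (p : R[X]) (m : M) : polynomialAct R M (p ⊗ₜ m) = p • m := by
  simp [polynomialAct]

theorem polynomialDiff_tmul (p : R[X]) (m : M) :
    polynomialDiff R M (p ⊗ₜ m) =
      (Polynomial.X * p) ⊗ₜ m - p ⊗ₜ ((Polynomial.X : R[X]) • m) := by
  simp [polynomialDiff, TensorProduct.smul_tmul']

theorem polynomialHomotopy_tmul (k : ℕ) (m : M) :
    polynomialHomotopy R M ((Polynomial.X ^ k : R[X]) ⊗ₜ m) =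
      ∑ i ∈ Finset.range k,
        (Polynomial.X ^ (k - 1 - i) : R[X]) ⊗ₜ[R] ((Polynomial.X ^ i : R[X]) • m) := by
  have hX : (Polynomial.X ^ k : R[X]) = Polynomial.basisMonomials R k := by
    rw [Polynomial.X_pow_eq_monomial, Polynomial.coe_basisMonomials]
  rw [hX, polynomialHomotopy, TensorProduct.lift.tmul, Module.Basis.constr_basis]
  simp only [LinearMap.sum_apply, LinearMap.comp_apply, TensorProduct.mk_apply,
    Algebra.lsmul_coe]

theorem polynomialHomotopy_polynomialDiff (z : R[X] ⊗[R] M) :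
    polynomialHomotopy R M (polynomialDiff R M z) = z := by
  refine LinearMap.congr_fun (f := polynomialHomotopy R M ∘ₗ (polynomialDiff R M).restrictScalars R)
    (g := LinearMap.id) (tensor_polynomial_hom_ext fun k m => ?_) z
  have hX (i : ℕ) : (Polynomial.X ^ i : R[X]) • (Polynomial.X : R[X]) • m =
      (Polynomial.X ^ (i + 1) : R[X]) • m := by
    rw [smul_smul, pow_succ]
  simp only [LinearMap.comp_apply, LinearMap.restrictScalars_apply, polynomialDiff_tmul, map_sub,
    LinearMap.id_apply, ← pow_succ', polynomialHomotopy_tmul, Finset.sum_range_succ' _ k, hX,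
    pow_zero, one_smul]
  simp [Nat.sub_sub, add_comm]

theorem polynomialDiff_polynomialHomotopy (z : R[X] ⊗[R] M) :
    polynomialDiff R M (polynomialHomotopy R M z) = z - 1 ⊗ₜ polynomialAct R M z := by
  refine LinearMap.congr_fun (f := (polynomialDiff R M).restrictScalars R ∘ₗ polynomialHomotopy R M)
    (g := LinearMap.id - TensorProduct.mk R R[X] M 1 ∘ₗ (polynomialAct R M).restrictScalars R)
    (tensor_polynomial_hom_ext fun k m => ?_) z
  simp only [LinearMap.comp_apply, LinearMap.restrictScalars_apply, LinearMap.sub_apply,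
    LinearMap.id_apply, polynomialHomotopy_tmul, map_sum, polynomialDiff_tmul, polynomialAct_tmul,
    TensorProduct.mk_apply, smul_smul, ← pow_succ']
  have telescope := Finset.sum_range_sub'
    (fun i => (Polynomial.X ^ (k - i) : R[X]) ⊗ₜ[R] ((Polynomial.X ^ i : R[X]) • m)) k
  simp only [Nat.sub_zero, pow_zero, one_smul, Nat.sub_self] at telescope
  rw [← telescope]
  refine Finset.sum_congr rfl fun i hi => ?_
  have := Finset.mem_range.1 hi
  rw [show k - 1 - i + 1 = k - i by lia, show k - 1 - i = k - (i + 1) by lia]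

theorem polynomialDiff_injective : Function.Injective (polynomialDiff R M) :=
  Function.LeftInverse.injective polynomialHomotopy_polynomialDiff

theorem polynomialAct_surjective : Function.Surjective (polynomialAct R M) :=
  fun m => ⟨1 ⊗ₜ m, by rw [polynomialAct_tmul, one_smul]⟩

theorem polynomial_exact : Function.Exact (polynomialDiff R M) (polynomialAct R M) := by
  refine fun z => ⟨fun hz => ⟨polynomialHomotopy R M z, ?_⟩, ?_⟩
  · rw [polynomialDiff_polynomialHomotopy, hz, tmul_zero, sub_zero]
  · rintro ⟨w, rfl⟩
    induction w with
    | zero => simp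
    | tmul p m =>
      rw [polynomialDiff_tmul, map_sub, polynomialAct_tmul, polynomialAct_tmul, smul_smul,
        mul_comm, sub_self]
    | add x y hx hy => rw [map_add, map_add, hx, hy, add_zero]

end PolynomialResolution

section ProjectiveDimension

universe u

theorem shortExact_baseChange_ker {R A : Type u} [CommRing R] [CommRing A] [Algebra R A]
    [Module.Flat R A] {P M : Type u} [AddCommGroup P] [Module R P] [AddCommGroup M] [Module R M]
    {p : P →ₗ[R] M} (hp : Function.Surjective p) :
    (ModuleCat.shortComplexOfCompEqZero (p.ker.subtype.baseChange A) (p.baseChange A)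
      (Function.Exact.linearMap_comp_eq_zero
        (lTensor_exact A p.exact_subtype_ker_map hp))).ShortExact :=
  ModuleCat.shortComplex_shortExact _ (lTensor_exact A p.exact_subtype_ker_map hp)
    (Module.Flat.lTensor_preserves_injective_linearMap _ p.ker.injective_subtype)
    (LinearMap.lTensor_surjective A hp)

theorem hasProjectiveDimensionLE_baseChange {R A : Type u} [CommRing R] [CommRing A] [Algebra R A]
    [Module.Flat R A] (d : ℕ) (M : Type u) [AddCommGroup M] [Module R M]
    (hM : HasProjectiveDimensionLE (ModuleCat.of R M) d) :
    HasProjectiveDimensionLE (ModuleCat.of A (A ⊗[R] M)) d := by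
  induction d generalizing M with
  | zero =>
    rw [← projective_iff_hasProjectiveDimensionLE_zero, ← IsProjective.iff_projective] at hM ⊢
    infer_instance
  | succ d ih =>
    let p : (M →₀ R) →ₗ[R] M := Finsupp.linearCombination R id
    have hp : Function.Surjective p := Finsupp.linearCombination_surjective R Function.surjective_id
    have hker := LinearMap.shortExact_shortComplexKer hp
    have hkerA := shortExact_baseChange_ker (A := A) hp
    refine (hkerA.hasProjectiveDimensionLT_X₃_iff d ?_).2
      (ih p.ker ((hker.hasProjectiveDimensionLT_X₃_iff d ?_).1 hM))
    all_goals
      exact (IsProjective.iff_projective _).1 inferInstance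

/-- Every `R`-module of the universe of `R` has projective dimension at most `d`. -/
def GlobalDimensionLE (R : Type u) [CommRing R] (d : ℕ) : Prop :=
  ∀ M : ModuleCat.{u} R, HasProjectiveDimensionLE M d

theorem GlobalDimensionLE.polynomial {R : Type u} [CommRing R] {d : ℕ}
    (h : GlobalDimensionLE R d) : GlobalDimensionLE (Polynomial R) (d + 1) := fun M => by
  let : Module R M := Module.compHom M (Polynomial.C (R := R))
  have : IsScalarTower R (Polynomial R) M :=
    .of_algebraMap_smul fun _ _ => rfl
  have hM : HasProjectiveDimensionLE (ModuleCat.of (Polynomial R) (Polynomial R ⊗[R] M)) d :=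
    hasProjectiveDimensionLE_baseChange d M (h (.of R M))
  exact (ModuleCat.shortComplex_shortExact (ModuleCat.shortComplexOfCompEqZero (polynomialDiff R M)
    (polynomialAct R M) polynomial_exact.linearMap_comp_eq_zero) polynomial_exact
    polynomialDiff_injective polynomialAct_surjective).hasProjectiveDimensionLT_X₃ (d + 1) hM
      (hasProjectiveDimensionLT_of_ge _ (d + 1) (d + 2) (d + 1).le_succ)

theorem GlobalDimensionLE.of_ringEquiv {R R' : Type u} [CommRing R] [CommRing R'] (e : R ≃+* R')
    {d : ℕ} (h : GlobalDimensionLE R d) : GlobalDimensionLE R' d := fun M => by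
  let : Module R M := Module.compHom M (e : R →+* R')
  have : HasProjectiveDimensionLE (ModuleCat.of R M) d := h _
  have := RingHomInvPair.of_ringEquiv e
  have := RingHomInvPair.of_ringEquiv e.symm
  let e' : M ≃ₛₗ[RingHomClass.toRingHom e] M :=
    { AddEquiv.refl M with map_smul' := fun _ _ => rfl }
  exact ModuleCat.hasProjectiveDimensionLE_of_semiLinearEquiv e (M := ModuleCat.of R M) (N := M) e'
    d

theorem globalDimensionLE_zero_of_field (K : Type u) [Field K] : GlobalDimensionLE K 0 := by
  intro M
  rw [← projective_iff_hasProjectiveDimensionLE_zero, ← IsProjective.iff_projective]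
  exact .of_free

theorem globalDimensionLE_mvPolynomial (K : Type u) [Field K] (n : ℕ) :
    GlobalDimensionLE (MvPolynomial (Fin n) K) n := by
  induction n with
  | zero =>
    exact (globalDimensionLE_zero_of_field K).of_ringEquiv
      (MvPolynomial.isEmptyRingEquiv K (Fin 0)).symm
  | succ n ih => exact ih.polynomial.of_ringEquiv (MvPolynomial.finSuccEquiv K n).symm.toRingEquiv

end ProjectiveDimension

section Vanishing

variable {K : Type} [Field K] {n : ℕ}
  {M : Type} [AddCommGroup M] [Module K M] [Module (PS K n) M] [IsScalarTower K (PS K n) M]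

theorem barExactAt_of_hasProjectiveDimensionLE {d i : ℕ} (hi : d ≤ i) (N : Type) [AddCommGroup N]
    [Module K N] [Module (PS K n) N] [IsScalarTower K (PS K n) N]
    (hN : HasProjectiveDimensionLE (ModuleCat.of (PS K n) N) d) : BarExactAt K n M N i := by
  induction d generalizing i N with
  | zero =>
    rw [← projective_iff_hasProjectiveDimensionLE_zero, ← IsProjective.iff_projective] at hN
    exact barExactAt_of_projective i
  | succ d ih =>
    obtain ⟨i, rfl⟩ := Nat.exists_eq_add_of_le' (Nat.one_le_of_lt hi)
    let p : (N →₀ PS K n) →ₗ[PS K n] N := Finsupp.linearCombination (PS K n) id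
    have hp : Function.Surjective p :=
      Finsupp.linearCombination_surjective (PS K n) Function.surjective_id
    have hker := LinearMap.shortExact_shortComplexKer hp
    refine .succ_of_shortExact (f := p.ker.subtype) p.exact_subtype_ker_map
      p.ker.injective_subtype hp (ih (Nat.succ_le_succ_iff.1 hi) p.ker ?_)
      (barExactAt_of_projective (i + 1))
    exact (hker.hasProjectiveDimensionLT_X₃_iff d
      ((IsProjective.iff_projective _).1 inferInstance)).1 hN

theorem barExactAt_of_le {N : Type} [AddCommGroup N] [Module K N] [Module (PS K n) N]
    [IsScalarTower K (PS K n) N] {i : ℕ} (hi : n ≤ i) : BarExactAt K n M N i :=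
  barExactAt_of_hasProjectiveDimensionLE hi N (globalDimensionLE_mvPolynomial K n (.of _ N))

end Vanishing

/-! ### Gradings -/

section HomExt

variable {R ι A B : Type*} [CommRing R] [AddCommGroup A] [Module R A] [AddCommGroup B] [Module R B]
  {G : ι → Submodule R A}

theorem hom_ext_of_iSup_eq_top (hG : ⨆ d, G d = ⊤) {f g : A →ₗ[R] B}
    (h : ∀ d, ∀ x ∈ G d, f x = g x) : f = g := by
  refine LinearMap.ext fun x => ?_
  have : ⨆ d, G d ≤ LinearMap.eqLocus f g := iSup_le h
  exact this (hG ▸ Submodule.mem_top)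

end HomExt

section InternalGradings

variable {R ι A B : Type*} [CommRing R] [DecidableEq ι] [AddCommGroup A] [Module R A]
  [AddCommGroup B] [Module R B] {G : ι → Submodule R A} {H : ι → Submodule R B}

theorem isInternal_of_coaction (hG : ⨆ d, G d = ⊤) {j : A →ₗ[R] B} (hj : Function.Injective j)
    {ρ : A →ₗ[R] ι →₀ B} (hρ : ∀ d, ∀ x ∈ G d, ρ x = Finsupp.single d (j x)) :
    DirectSum.IsInternal G := by
  refine (DirectSum.isInternal_submodule_iff_iSupIndep_and_iSup_eq_top G).2
    ⟨iSupIndep_of_dfinsupp_lsum_injective G ?_, hG⟩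
  have recover (x : Π₀ d, G d) (e : ι) :
      ρ (DFinsupp.lsum ℕ (fun d => (G d).subtype) x) e = j (x e) := by
    induction x using DFinsupp.induction with
    | h0 => simp
    | ha d y x _ _ ih =>
      rw [map_add, map_add, Finsupp.add_apply, ih, DFinsupp.lsum_single, Submodule.subtype_apply,
        hρ d y y.2, DFinsupp.add_apply, Submodule.coe_add, map_add]
      by_cases hde : d = e
      · subst hde; simp
      · simp [DFinsupp.single_eq_of_ne (Ne.symm hde), Finsupp.single_eq_of_ne (Ne.symm hde)]
  intro x y hxy
  ext e
  exact hj ((recover x e).symm.trans ((congrArg (fun z => ρ z e) hxy).trans (recover y e)))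

/-- The coaction `x ↦ ∑ d, x_d T ^ d` of a grading, recording the homogeneous components of `x`. -/
def coaction (hG : DirectSum.IsInternal G) : A →ₗ[R] ι →₀ A :=
  DirectSum.toModule R ι (ι →₀ A) (fun d => Finsupp.lsingle d ∘ₗ (G d).subtype) ∘ₗ
    (LinearEquiv.ofBijective (DirectSum.coeLinearMap G) hG).symm.toLinearMap

theorem coaction_of_mem (hG : DirectSum.IsInternal G) {d : ι} {x : A} (hx : x ∈ G d) :
    coaction hG x = Finsupp.single d x := by
  have : (LinearEquiv.ofBijective (DirectSum.coeLinearMap G) hG).symm x =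
      DirectSum.lof R ι (fun d => G d) d ⟨x, hx⟩ := by
    rw [LinearEquiv.symm_apply_eq]
    exact (DirectSum.coeLinearMap_lof G d ⟨x, hx⟩).symm
  rw [coaction, LinearMap.comp_apply, LinearEquiv.coe_coe, this, DirectSum.toModule_lof]
  rfl

theorem coaction_apply_mem (hG : DirectSum.IsInternal G) (x : A) (d : ι) :
    coaction hG x d ∈ G d := by
  have hx : x ∈ ⨆ d, G d := hG.submodule_iSup_eq_top ▸ Submodule.mem_top
  induction hx using Submodule.iSup_induction' with
  | mem e x hx =>
    rw [coaction_of_mem hG hx]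
    by_cases hde : e = d
    · subst hde; simpa
    · simp [Finsupp.single_eq_of_ne (Ne.symm hde)]
  | zero => simp
  | add x y _ _ ihx ihy =>
    rw [map_add, Finsupp.add_apply]
    exact add_mem ihx ihy

theorem sum_coaction (hG : DirectSum.IsInternal G) (x : A) :
    ((coaction hG x).sum fun _ a => a) = x := by
  refine LinearMap.congr_fun (f := Finsupp.lsum ℕ (fun _ => LinearMap.id) ∘ₗ coaction hG)
    (g := LinearMap.id) (hom_ext_of_iSup_eq_top hG.submodule_iSup_eq_top fun d x hx => ?_) x
  simp [coaction_of_mem hG hx]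

theorem coaction_map (hG : DirectSum.IsInternal G) (hH : DirectSum.IsInternal H)
    {f : A →ₗ[R] B} (hf : ∀ d, (G d).map f ≤ H d) (x : A) (d : ι) :
    coaction hH (f x) d = f (coaction hG x d) := by
  refine LinearMap.congr_fun (f := Finsupp.lapply d ∘ₗ coaction hH ∘ₗ f)
    (g := f ∘ₗ Finsupp.lapply d ∘ₗ coaction hG)
    (hom_ext_of_iSup_eq_top hG.submodule_iSup_eq_top fun e x hx => ?_) x
  simp only [LinearMap.comp_apply, Finsupp.lapply_apply, coaction_of_mem hG hx,
    coaction_of_mem hH (hf e (Submodule.mem_map_of_mem hx))]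
  by_cases hde : e = d
  · subst hde; simp
  · simp [Finsupp.single_eq_of_ne (Ne.symm hde)]

theorem range_inf_eq_map (hG : DirectSum.IsInternal G) (hH : DirectSum.IsInternal H)
    {f : A →ₗ[R] B} (hf : ∀ d, (G d).map f ≤ H d) (d : ι) :
    LinearMap.range f ⊓ H d = (G d).map f := by
  refine le_antisymm ?_ (le_inf LinearMap.map_le_range (hf d))
  rintro _ ⟨⟨x, rfl⟩, hx⟩
  refine ⟨coaction hG x d, coaction_apply_mem hG x d, ?_⟩
  rw [← coaction_map hG hH hf, coaction_of_mem hH hx, Finsupp.single_eq_same]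

theorem eq_map_of_surjective (hG : DirectSum.IsInternal G) (hH : DirectSum.IsInternal H)
    {f : A →ₗ[R] B} (hf : ∀ d, (G d).map f ≤ H d) (hsurj : Function.Surjective f) (d : ι) :
    H d = (G d).map f := by
  rw [← range_inf_eq_map hG hH hf, LinearMap.range_eq_top.2 hsurj, top_inf_eq]

theorem isInternal_comap_of_coaction_mem (hG : DirectSum.IsInternal G) (V : Submodule R A)
    (hV : ∀ x ∈ V, ∀ d, coaction hG x d ∈ V) :
    DirectSum.IsInternal fun d => (G d).comap V.subtype := by
  refine isInternal_of_coaction (eq_top_iff.2 fun x _ => ?_) V.injective_subtype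
    (ρ := coaction hG ∘ₗ V.subtype) fun d x hx => coaction_of_mem hG hx
  have hsum : x = (coaction hG x).support.attach.sum
      fun d => (⟨coaction hG x d, hV x x.2 d⟩ : V) := by
    refine Subtype.ext ?_
    rw [AddSubmonoidClass.coe_finsetSum, Finset.sum_attach _ fun d => coaction hG (x : A) d]
    exact (sum_coaction hG (x : A)).symm
  rw [hsum]
  exact sum_mem fun d _ => Submodule.mem_iSup_of_mem (d : ι) (coaction_apply_mem hG x d)

theorem isInternal_map_equiv (hG : DirectSum.IsInternal G) (e : A ≃ₗ[R] B) :
    DirectSum.IsInternal fun d => (G d).map (e : A →ₗ[R] B) := by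
  refine isInternal_of_coaction ?_ e.symm.injective
    (ρ := coaction hG ∘ₗ (e.symm : B →ₗ[R] A)) ?_
  · rw [← Submodule.map_iSup, hG.submodule_iSup_eq_top, Submodule.map_top, LinearEquiv.range]
  · rintro d _ ⟨x, hx, rfl⟩
    simp [coaction_of_mem hG hx]

end InternalGradings

section QuotientGrading

variable {K ι A B : Type*} [Field K] [DecidableEq ι] [AddCommGroup A] [Module K A]
  [AddCommGroup B] [Module K B] {G : ι → Submodule K A}

theorem isInternal_map_of_coaction_mem_ker (hG : DirectSum.IsInternal G) {q : A →ₗ[K] B}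
    (hq : Function.Surjective q) (hker : ∀ x, q x = 0 → ∀ d, q (coaction hG x d) = 0) :
    DirectSum.IsInternal fun d => (G d).map q := by
  obtain ⟨s, hs⟩ := q.exists_rightInverse_of_surjective (LinearMap.range_eq_top.2 hq)
  refine isInternal_of_coaction ?_ (j := LinearMap.id) Function.injective_id
    (ρ := Finsupp.mapRange.linearMap q ∘ₗ coaction hG ∘ₗ s) ?_
  · rw [← Submodule.map_iSup, hG.submodule_iSup_eq_top, Submodule.map_top,
      LinearMap.range_eq_top.2 hq]
  · rintro d _ ⟨x, hx, rfl⟩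
    have hsx : q (s (q x) - x) = 0 := by
      rw [map_sub, sub_eq_zero]
      exact LinearMap.congr_fun hs (q x)
    ext e
    have h := hker _ hsx e
    rw [map_sub, Finsupp.sub_apply, map_sub, sub_eq_zero, coaction_of_mem hG hx] at h
    simp only [LinearMap.comp_apply, Finsupp.mapRange.linearMap_apply, Finsupp.mapRange_apply, h,
      LinearMap.id_apply]
    rw [← Finsupp.mapRange_single (hf := map_zero q), Finsupp.mapRange_apply]

end QuotientGrading

section TensorGrading

variable {K : Type} [Field K] {A B A' B' : Type} [AddCommGroup A] [Module K A] [AddCommGroup B]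
  [Module K B] [AddCommGroup A'] [Module K A'] [AddCommGroup B'] [Module K B']
  {GA : ℤ → Submodule K A} {GB : ℤ → Submodule K B}

theorem tensorGrade_le_iff {d : ℤ} {V : Submodule K (A ⊗[K] B)} :
    tensorGrade K GA GB d ≤ V ↔
      ∀ p q, p + q = d → ∀ a ∈ GA p, ∀ b ∈ GB q, a ⊗ₜ[K] b ∈ V := by
  refine ⟨fun h p q hpq a ha b hb => ?_, fun h => iSup_le fun p => ?_⟩
  · obtain rfl : q = d - p := by lia
    exact h (Submodule.mem_iSup_of_mem p ⟨⟨a, ha⟩ ⊗ₜ ⟨b, hb⟩, rfl⟩)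
  · rw [TensorProduct.range_map, Submodule.range_subtype, Submodule.range_subtype,
      Submodule.map₂_le]
    exact h p (d - p) (by lia)

theorem tmul_mem_tensorGrade {p q d : ℤ} (hpq : p + q = d) {a : A} (ha : a ∈ GA p) {b : B}
    (hb : b ∈ GB q) : a ⊗ₜ[K] b ∈ tensorGrade K GA GB d :=
  tensorGrade_le_iff.1 le_rfl p q hpq a ha b hb

theorem map_tensorGrade (f : A →ₗ[K] A') (g : B →ₗ[K] B') (d : ℤ) :
    (tensorGrade K GA GB d).map (TensorProduct.map f g) =
      tensorGrade K (fun p => (GA p).map f) (fun q => (GB q).map g) d := by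
  refine le_antisymm ?_ (tensorGrade_le_iff.2 ?_)
  · rw [Submodule.map_le_iff_le_comap, tensorGrade_le_iff]
    intro p q hpq a ha b hb
    rw [Submodule.mem_comap, TensorProduct.map_tmul]
    exact tmul_mem_tensorGrade hpq (Submodule.mem_map_of_mem ha) (Submodule.mem_map_of_mem hb)
  · rintro p q hpq _ ⟨a, ha, rfl⟩ _ ⟨b, hb, rfl⟩
    exact ⟨a ⊗ₜ b, tmul_mem_tensorGrade hpq ha hb, TensorProduct.map_tmul ..⟩

theorem tensorGrade_mono {GA' : ℤ → Submodule K A} {GB' : ℤ → Submodule K B}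
    (hA : ∀ p, GA p ≤ GA' p) (hB : ∀ q, GB q ≤ GB' q) (d : ℤ) :
    tensorGrade K GA GB d ≤ tensorGrade K GA' GB' d :=
  tensorGrade_le_iff.2 fun _ _ hpq _ ha _ hb => tmul_mem_tensorGrade hpq (hA _ ha) (hB _ hb)

theorem isInternal_tensorGrade (hA : DirectSum.IsInternal GA) (hB : DirectSum.IsInternal GB) :
    DirectSum.IsInternal (tensorGrade K GA GB) := by
  let ρ : A ⊗[K] B →ₗ[K] ℤ →₀ A ⊗[K] B :=
    Finsupp.lmapDomain (A ⊗[K] B) K (fun p : ℤ × ℤ => p.1 + p.2) ∘ₗ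
      (finsuppTensorFinsupp K K A B ℤ ℤ).toLinearMap ∘ₗ
        TensorProduct.map (coaction hA) (coaction hB)
  have ρ_tmul {p q : ℤ} {a : A} (ha : a ∈ GA p) {b : B} (hb : b ∈ GB q) :
      ρ (a ⊗ₜ b) = Finsupp.single (p + q) (a ⊗ₜ b) := by
    simp [ρ, coaction_of_mem hA ha, coaction_of_mem hB hb, Finsupp.mapDomain_single]
  refine isInternal_of_coaction (eq_top_iff.2 ?_) (j := LinearMap.id) Function.injective_id
    (ρ := ρ) fun d => ?_
  · rw [← TensorProduct.span_tmul_eq_top, Submodule.span_le]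
    rintro _ ⟨a, b, rfl⟩
    rw [← sum_coaction hA a, ← sum_coaction hB b, Finsupp.sum, Finsupp.sum, sum_tmul]
    refine sum_mem fun p _ => ?_
    rw [tmul_sum]
    exact sum_mem fun q _ => Submodule.mem_iSup_of_mem (p + q)
      (tmul_mem_tensorGrade rfl (coaction_apply_mem hA a p) (coaction_apply_mem hB b q))
  · change tensorGrade K GA GB d ≤ LinearMap.eqLocus ρ (Finsupp.lsingle d)
    refine tensorGrade_le_iff.2 fun p q hpq a ha b hb => ?_
    rw [LinearMap.mem_eqLocus, ρ_tmul ha hb, hpq]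
    rfl

/-- A grading whose pieces are finite dimensional and vanish in sufficiently negative degrees. -/
structure IsLocallyFinite (GA : ℤ → Submodule K A) : Prop where
  finiteDimensional (d : ℤ) : FiniteDimensional K (GA d)
  bddBelow : ∃ b, ∀ d < b, GA d = ⊥

theorem IsLocallyFinite.map (h : IsLocallyFinite GA) (f : A →ₗ[K] B) :
    IsLocallyFinite fun d => (GA d).map f where
  finiteDimensional d := by
    have := h.finiteDimensional d
    infer_instance
  bddBelow := by
    obtain ⟨b, hb⟩ := h.bddBelow
    exact ⟨b, fun d hd => by rw [hb d hd, Submodule.map_bot]⟩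

theorem IsLocallyFinite.comap_injective (h : IsLocallyFinite GB) {f : A →ₗ[K] B}
    (hf : Function.Injective f) : IsLocallyFinite fun d => (GB d).comap f where
  finiteDimensional d := by
    have := h.finiteDimensional d
    have hmaps : ∀ x ∈ (GB d).comap f, f x ∈ GB d := fun _ hx => hx
    exact FiniteDimensional.of_injective (f.restrict hmaps)
      fun x y hxy => Subtype.ext (hf (congrArg Subtype.val hxy))
  bddBelow := by
    obtain ⟨b, hb⟩ := h.bddBelow
    exact ⟨b, fun d hd => by rw [hb d hd, Submodule.comap_bot, LinearMap.ker_eq_bot.2 hf]⟩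

theorem IsLocallyFinite.tensorGrade (hA : IsLocallyFinite GA) (hB : IsLocallyFinite GB) :
    IsLocallyFinite (tensorGrade K GA GB) := by
  obtain ⟨a, ha⟩ := hA.bddBelow
  obtain ⟨b, hb⟩ := hB.bddBelow
  have := hA.finiteDimensional
  have := hB.finiteDimensional
  have tmul_eq_zero {p q : ℤ} (h : p < a ∨ q < b) {x : A} (hx : x ∈ GA p) {y : B}
      (hy : y ∈ GB q) : x ⊗ₜ[K] y = 0 := by
    rcases h with h | h
    · rw [ha p h, Submodule.mem_bot] at hx
      rw [hx, zero_tmul]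
    · rw [hb q h, Submodule.mem_bot] at hy
      rw [hy, tmul_zero]
  refine ⟨fun d => ?_, a + b, fun d hd => ?_⟩
  · refine Submodule.finiteDimensional_of_le (S₂ := (Finset.Icc a (d - b)).sup fun p =>
      LinearMap.range (TensorProduct.map (GA p).subtype (GB (d - p)).subtype))
      (tensorGrade_le_iff.2 fun p q hpq x hx y hy => ?_)
    obtain rfl : q = d - p := by lia
    by_cases hp : p ∈ Finset.Icc a (d - b)
    · exact Finset.le_sup (f := fun p => LinearMap.range
        (TensorProduct.map (GA p).subtype (GB (d - p)).subtype)) hp ⟨⟨x, hx⟩ ⊗ₜ ⟨y, hy⟩, rfl⟩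
    · rw [Finset.mem_Icc] at hp
      rw [tmul_eq_zero (by lia) hx hy]
      exact zero_mem _
  · refine eq_bot_iff.2 (tensorGrade_le_iff.2 fun p q hpq x hx y hy => ?_)
    rw [tmul_eq_zero (by lia) hx hy]
    exact zero_mem _

end TensorGrading

section TwoMaps

variable {ι K : Type*} [DecidableEq ι] [CommRing K] {A A' B : Type*} [AddCommGroup A] [Module K A]
  [AddCommGroup A'] [Module K A'] [AddCommGroup B] [Module K B]
  {G : ι → Submodule K A} {G' : ι → Submodule K A'} {H : ι → Submodule K B}

theorem range_sup_range_inf_le (hG : DirectSum.IsInternal G) (hG' : DirectSum.IsInternal G')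
    (hH : DirectSum.IsInternal H) {f : A →ₗ[K] B} {f' : A' →ₗ[K] B}
    (hf : ∀ d, (G d).map f ≤ H d) (hf' : ∀ d, (G' d).map f' ≤ H d) (d : ι) :
    (LinearMap.range f ⊔ LinearMap.range f') ⊓ H d ≤ (G d).map f ⊔ (G' d).map f' := by
  rintro x ⟨hx, hxd⟩
  obtain ⟨_, ⟨a, rfl⟩, _, ⟨a', rfl⟩, rfl⟩ := Submodule.mem_sup.1 hx
  have h := congrArg (fun x => x d) (coaction_of_mem hH hxd)
  simp only [map_add, Finsupp.add_apply, coaction_map hG hH hf, coaction_map hG' hH hf',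
    Finsupp.single_eq_same] at h
  rw [← h]
  exact Submodule.add_mem_sup (Submodule.mem_map_of_mem (coaction_apply_mem hG a d))
    (Submodule.mem_map_of_mem (coaction_apply_mem hG' a' d))

end TwoMaps

section KernelOfTensorProduct

variable {K : Type} [Field K] {A B A' B' : Type} [AddCommGroup A] [Module K A] [AddCommGroup B]
  [Module K B] [AddCommGroup A'] [Module K A'] [AddCommGroup B'] [Module K B']
  {GA : ℤ → Submodule K A} {GB : ℤ → Submodule K B}

theorem tensorGrade_inf_ker_map {f : A →ₗ[K] A'} {g : B →ₗ[K] B'}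
    (hf : Function.Surjective f) (hg : Function.Surjective g)
    (hA : DirectSum.IsInternal GA) (hB : DirectSum.IsInternal GB)
    (hkerf : DirectSum.IsInternal fun d => (GA d).comap (LinearMap.ker f).subtype)
    (hkerg : DirectSum.IsInternal fun d => (GB d).comap (LinearMap.ker g).subtype) (d : ℤ) :
    tensorGrade K GA GB d ⊓ LinearMap.ker (TensorProduct.map f g) =
      Submodule.span K {x | ∃ p q, p + q = d ∧ ∃ a ∈ GA p, ∃ b ∈ GB q,
        (f a = 0 ∨ g b = 0) ∧ a ⊗ₜ[K] b = x} := by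
  refine le_antisymm ?_ (Submodule.span_le.2 ?_)
  · have hker := TensorProduct.map_ker (LinearMap.exact_subtype_ker_map f) hf
      (LinearMap.exact_subtype_ker_map g) hg
    have map_lTensor_le (d : ℤ) := (map_tensorGrade (GA := GA)
      (GB := fun d => (GB d).comap (LinearMap.ker g).subtype) LinearMap.id
      (LinearMap.ker g).subtype d).trans_le
        (tensorGrade_mono (fun _ => (Submodule.map_id _).le)
          (fun _ => Submodule.map_comap_le _ _) d)
    have map_rTensor_le (d : ℤ) := (map_tensorGrade (GB := GB)
      (GA := fun d => (GA d).comap (LinearMap.ker f).subtype) (LinearMap.ker f).subtype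
      LinearMap.id d).trans_le
        (tensorGrade_mono (fun _ => Submodule.map_comap_le _ _)
          (fun _ => (Submodule.map_id _).le) d)
    rw [hker, inf_comm]
    refine (range_sup_range_inf_le (isInternal_tensorGrade hA hkerg)
      (isInternal_tensorGrade hkerf hB) (isInternal_tensorGrade hA hB) map_lTensor_le
      map_rTensor_le d).trans (sup_le ?_ ?_)
    · refine Submodule.map_le_iff_le_comap.2 (tensorGrade_le_iff.2 fun p q hpq a ha b hb => ?_)
      exact Submodule.subset_span ⟨p, q, hpq, a, ha, b, hb, Or.inr b.2, rfl⟩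
    · refine Submodule.map_le_iff_le_comap.2 (tensorGrade_le_iff.2 fun p q hpq a ha b hb => ?_)
      exact Submodule.subset_span ⟨p, q, hpq, a, ha, b, hb, Or.inl a.2, rfl⟩
  · rintro _ ⟨p, q, hpq, a, ha, b, hb, hab, rfl⟩
    refine ⟨tmul_mem_tensorGrade hpq ha hb, LinearMap.mem_ker.2 ?_⟩
    rcases hab with h | h <;> simp only [TensorProduct.map_tmul, h, zero_tmul, tmul_zero]

end KernelOfTensorProduct

section PolynomialGrading

variable {K : Type} [Field K] {n : ℕ}

theorem polyGrade_eq_span (d : ℤ) : polyGrade K n d =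
    Submodule.span K ((fun m => monomial m (1 : K)) '' {m : Fin n →₀ ℕ | (m.degree : ℤ) = d}) := by
  by_cases hd : 0 ≤ d
  · have hdeg : {m : Fin n →₀ ℕ | (m.degree : ℤ) = d} = {m | m.degree = d.toNat} := by
      ext m
      simp only [Set.mem_ofPred_eq]
      lia
    rw [polyGrade, if_pos hd, homogeneousSubmodule_eq_finsupp_supported, hdeg]
    exact AddMonoidAlgebra.supported_eq_span_single ..
  · have hempty : {m : Fin n →₀ ℕ | (m.degree : ℤ) = d} = ∅ :=
      Set.eq_empty_of_forall_notMem fun m (hm : (m.degree : ℤ) = d) => hd (by lia)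
    rw [polyGrade, if_neg hd, hempty, Set.image_empty, Submodule.span_empty]

theorem monomial_mem_polyGrade {m : Fin n →₀ ℕ} {d : ℤ} (hm : (m.degree : ℤ) = d) :
    monomial m (1 : K) ∈ polyGrade K n d := by
  rw [polyGrade_eq_span]
  exact Submodule.subset_span (Set.mem_image_of_mem _ hm)

theorem isInternal_polyGrade : DirectSum.IsInternal (polyGrade K n) := by
  let ρ : PS K n →ₗ[K] ℤ →₀ PS K n :=
    (basisMonomials (Fin n) K).constr K fun m => Finsupp.single (m.degree : ℤ) (monomial m 1)
  refine isInternal_of_coaction (eq_top_iff.2 ?_) (j := LinearMap.id) Function.injective_id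
    (ρ := ρ) fun d => ?_
  · rw [← (basisMonomials (Fin n) K).span_eq, Submodule.span_le]
    rintro _ ⟨m, rfl⟩
    rw [coe_basisMonomials]
    exact Submodule.mem_iSup_of_mem (m.degree : ℤ) (monomial_mem_polyGrade rfl)
  · change polyGrade K n d ≤ LinearMap.eqLocus ρ (Finsupp.lsingle d)
    rw [polyGrade_eq_span, Submodule.span_le]
    rintro _ ⟨m, rfl, rfl⟩
    have : ρ (basisMonomials (Fin n) K m) = Finsupp.single (m.degree : ℤ) (monomial m 1) :=
      Module.Basis.constr_basis ..
    rwa [coe_basisMonomials] at this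

theorem isLocallyFinite_polyGrade : IsLocallyFinite (polyGrade K n) where
  finiteDimensional d := by
    rw [polyGrade_eq_span]
    have hfin : {m : Fin n →₀ ℕ | (m.degree : ℤ) = d}.Finite :=
      (Finsupp.finite_of_degree_le d.toNat).subset fun m (hm : (m.degree : ℤ) = d) => by
        simp only [Set.mem_ofPred_eq]
        lia
    exact FiniteDimensional.span_of_finite K (hfin.image _)
  bddBelow := ⟨0, fun _ hd => if_neg (not_le.2 hd)⟩

theorem mul_mem_polyGrade {p q : ℤ} {f g : PS K n} (hf : f ∈ polyGrade K n p)
    (hg : g ∈ polyGrade K n q) : f * g ∈ polyGrade K n (p + q) := by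
  have h := Submodule.mul_mem_mul hf hg
  rw [polyGrade_eq_span, polyGrade_eq_span, Submodule.span_mul_span] at h
  refine Submodule.span_le.2 ?_ h
  rintro _ ⟨_, ⟨m, rfl, rfl⟩, _, ⟨m', rfl, rfl⟩, rfl⟩
  simp only [monomial_mul, one_mul]
  exact monomial_mem_polyGrade (by rw [map_add, Nat.cast_add])

theorem coaction_polyGrade_natCast (f : PS K n) (d : ℕ) :
    coaction isInternal_polyGrade f d = homogeneousComponent d f := by
  refine LinearMap.congr_fun (f := Finsupp.lapply (d : ℤ) ∘ₗ coaction isInternal_polyGrade)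
    (g := homogeneousComponent d)
    (hom_ext_of_iSup_eq_top isInternal_polyGrade.submodule_iSup_eq_top fun e x hx => ?_) f
  have hx' := hx
  rw [polyGrade] at hx'
  split_ifs at hx' with he
  · rw [LinearMap.comp_apply, coaction_of_mem isInternal_polyGrade hx, Finsupp.lapply_apply,
      homogeneousComponent_of_mem hx', Finsupp.single_apply]
    congr 1
    simp only [eq_iff_iff]
    lia
  · simp [(Submodule.mem_bot K).1 hx']

end PolynomialGrading

section FreeGrading

variable {K : Type} [Field K] {n : ℕ} {α : Type} (β : α → ℤ)

/-- The grading of the free module `⨁ a, S(-β a)`: the `a`-th generator has degree `β a`. -/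
def freeGrade (d : ℤ) : Submodule K (α → PS K n) :=
  Submodule.pi Set.univ fun a => polyGrade K n (d - β a)

variable {β} in
theorem mem_freeGrade {d : ℤ} {v : α → PS K n} :
    v ∈ freeGrade β d ↔ ∀ a, v a ∈ polyGrade K n (d - β a) := by
  simp [freeGrade, Submodule.mem_pi]

theorem freeGrade_eq_iSup [Finite α] [DecidableEq α] (d : ℤ) : freeGrade (K := K) (n := n) β d =
    ⨆ a, (polyGrade K n (d - β a)).map (LinearMap.single K (fun _ => PS K n) a) :=
  Submodule.iSup_map_single.symm

theorem isInternal_freeGrade [Finite α] :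
    DirectSum.IsInternal (freeGrade (K := K) (n := n) β) := by
  classical
  cases nonempty_fintype α
  let ρ : (α → PS K n) →ₗ[K] ℤ →₀ (α → PS K n) :=
    ∑ a, Finsupp.lmapDomain _ K (fun p => p + β a) ∘ₗ
      Finsupp.mapRange.linearMap (LinearMap.single K (fun _ => PS K n) a) ∘ₗ
        coaction isInternal_polyGrade ∘ₗ LinearMap.proj a
  refine isInternal_of_coaction (eq_top_iff.2 ?_) (j := LinearMap.id) Function.injective_id
    (ρ := ρ) fun d v hv => ?_
  · rintro v -
    rw [← Finset.univ_sum_single v]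
    refine sum_mem fun a _ => ?_
    have single_mem (x : PS K n) :
        LinearMap.single K (fun _ => PS K n) a x ∈ ⨆ d, freeGrade (K := K) β d := by
      rw [← sum_coaction isInternal_polyGrade x, Finsupp.sum, map_sum]
      refine sum_mem fun p _ => Submodule.mem_iSup_of_mem (p + β a) ?_
      rw [freeGrade_eq_iSup]
      refine Submodule.mem_iSup_of_mem a (Submodule.mem_map_of_mem ?_)
      rw [add_sub_cancel_right]
      exact coaction_apply_mem isInternal_polyGrade x p
    exact single_mem (v a)
  · rw [mem_freeGrade] at hv
    have component (a : α) : coaction isInternal_polyGrade (v a) = Finsupp.single (d - β a) (v a) :=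
      coaction_of_mem _ (hv a)
    simp only [ρ, LinearMap.sum_apply, LinearMap.comp_apply, LinearMap.proj_apply, component,
      Finsupp.mapRange.linearMap_apply, Finsupp.mapRange_single, Finsupp.lmapDomain_apply,
      Finsupp.mapDomain_single, sub_add_cancel, LinearMap.id_apply]
    rw [← Finsupp.single_finsetSum]
    exact congrArg (Finsupp.single d) (Finset.univ_sum_single v)

theorem isLocallyFinite_freeGrade [Finite α] :
    IsLocallyFinite (freeGrade (K := K) (n := n) β) where
  finiteDimensional d := by
    classical
    rw [freeGrade_eq_iSup]
    have := (isLocallyFinite_polyGrade (K := K) (n := n)).finiteDimensional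
    infer_instance
  bddBelow := by
    obtain ⟨b, hb⟩ := (Set.finite_range β).bddBelow
    refine ⟨b, fun d hd => eq_bot_iff.2 fun v hv => ?_⟩
    rw [mem_freeGrade] at hv
    ext1 a
    have hneg : ¬ 0 ≤ d - β a := by
      have := hb (Set.mem_range_self a)
      lia
    exact (Submodule.mem_bot K).1 (by simpa only [polyGrade, if_neg hneg] using hv a)

end FreeGrading

section GradedModules

variable {K : Type} [Field K] {n : ℕ}
  {N : Type} [AddCommGroup N] [Module K N] [Module (PS K n) N]

variable (n) in
/-- `N` is a graded `S`-module with homogeneous components `GN d`. -/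
structure IsGradedModule (GN : ℤ → Submodule K N) : Prop where
  isInternal : DirectSum.IsInternal GN
  smul_mem {p q : ℤ} {s : PS K n} {x : N} :
    s ∈ polyGrade K n p → x ∈ GN q → s • x ∈ GN (p + q)

theorem isGradedModule_freeGrade {α : Type} [Finite α] (β : α → ℤ) :
    IsGradedModule n (freeGrade (K := K) (n := n) β) where
  isInternal := isInternal_freeGrade β
  smul_mem hs hv := mem_freeGrade.2 fun a => by
    rw [add_sub_assoc]
    exact mul_mem_polyGrade hs (mem_freeGrade.1 hv a)

theorem isGradedModule_quotGrade {J : Ideal (PS K n)} (hJ : IsHomog K n J) :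
    IsGradedModule n (quotGrade K n J) where
  isInternal := by
    refine isInternal_map_of_coaction_mem_ker isInternal_polyGrade Ideal.Quotient.mk_surjective
      fun f hf d => Ideal.Quotient.eq_zero_iff_mem.2 ?_
    by_cases hd : 0 ≤ d
    · lift d to ℕ using hd
      rw [coaction_polyGrade_natCast]
      exact hJ f (Ideal.Quotient.eq_zero_iff_mem.1 hf) d
    · have hmem := coaction_apply_mem isInternal_polyGrade f d
      rw [polyGrade, if_neg hd, Submodule.mem_bot] at hmem
      exact hmem ▸ J.zero_mem
  smul_mem := by
    rintro p q s _ hs ⟨x, hx, rfl⟩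
    exact ⟨s * x, mul_mem_polyGrade hs hx, map_mul (Ideal.Quotient.mk J) s x⟩

variable {GN : ℤ → Submodule K N}

theorem IsGradedModule.exists_homogeneous_generators [Module.Finite (PS K n) N]
    (hN : IsGradedModule n GN) : ∃ (s : ℕ) (β : Fin s → ℤ) (ν : Fin s → N),
      (∀ a, ν a ∈ GN (β a)) ∧ Submodule.span (PS K n) (Set.range ν) = ⊤ := by
  classical
  obtain ⟨T, hT⟩ := Module.Finite.fg_top (R := PS K n) (M := N)
  let T' : Finset (ℤ × N) := T.biUnion fun t =>
    (coaction hN.isInternal t).support.image fun d => (d, coaction hN.isInternal t d)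
  refine ⟨T'.card, fun a => (T'.equivFin.symm a).1.1, fun a => (T'.equivFin.symm a).1.2,
    fun a => ?_, eq_top_iff.2 ?_⟩
  · obtain ⟨t, -, ht⟩ := Finset.mem_biUnion.1 (T'.equivFin.symm a).2
    obtain ⟨d, -, hd⟩ := Finset.mem_image.1 ht
    change (T'.equivFin.symm a).1.2 ∈ GN (T'.equivFin.symm a).1.1
    rw [← hd]
    exact coaction_apply_mem _ t d
  · rw [← hT, Submodule.span_le]
    intro t ht
    rw [SetLike.mem_coe, ← sum_coaction hN.isInternal t]
    refine sum_mem fun d hd => Submodule.subset_span ?_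
    have hmem : (d, coaction hN.isInternal t d) ∈ T' :=
      Finset.mem_biUnion.2 ⟨t, ht, Finset.mem_image_of_mem _ hd⟩
    exact ⟨T'.equivFin ⟨_, hmem⟩, by simp⟩

variable [IsScalarTower K (PS K n) N]

theorem IsGradedModule.exists_free_cover [Module.Finite (PS K n) N] (hN : IsGradedModule n GN) :
    ∃ (s : ℕ) (β : Fin s → ℤ) (q : (Fin s → PS K n) →ₗ[PS K n] N), Function.Surjective q ∧
      ∀ d, GN d = (freeGrade β d).map (q.restrictScalars K) := by
  obtain ⟨s, β, ν, hν, hspan⟩ := hN.exists_homogeneous_generators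
  have hq : Function.Surjective (Fintype.linearCombination (PS K n) ν) := by
    rw [← LinearMap.range_eq_top, Fintype.range_linearCombination, hspan]
  refine ⟨s, β, Fintype.linearCombination (PS K n) ν, hq,
    eq_map_of_surjective (isInternal_freeGrade β) hN.isInternal (fun d => ?_) hq⟩
  rintro _ ⟨v, hv, rfl⟩
  rw [LinearMap.restrictScalars_apply, Fintype.linearCombination_apply]
  refine sum_mem fun a _ => ?_
  simpa only [sub_add_cancel] using hN.smul_mem (mem_freeGrade.1 hv a) (hν a)

theorem IsGradedModule.isLocallyFinite [Module.Finite (PS K n) N] (hN : IsGradedModule n GN) :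
    IsLocallyFinite GN := by
  obtain ⟨s, β, q, -, hq⟩ := hN.exists_free_cover
  rw [funext hq]
  exact (isLocallyFinite_freeGrade β).map _

theorem IsGradedModule.ker {N' : Type} [AddCommGroup N'] [Module K N'] [Module (PS K n) N']
    [IsScalarTower K (PS K n) N'] {GN' : ℤ → Submodule K N'} (hN : IsGradedModule n GN)
    (hN' : IsGradedModule n GN') {q : N →ₗ[PS K n] N'}
    (hq : ∀ d, (GN d).map (q.restrictScalars K) ≤ GN' d) :
    IsGradedModule n fun d =>
      (GN d).comap ((LinearMap.ker q).subtype.restrictScalars K) where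
  isInternal := isInternal_comap_of_coaction_mem hN.isInternal
    ((LinearMap.ker q).restrictScalars K) fun x hx d => by
      have h := coaction_map hN.isInternal hN'.isInternal hq x d
      rw [LinearMap.restrictScalars_apply, LinearMap.mem_ker.1 hx, map_zero] at h
      exact h.symm
  smul_mem hs hx := hN.smul_mem hs hx

end GradedModules

theorem isGradedModule_of_decomposition {K : Type} [Field K] {n : ℕ} {M : Type} [AddCommGroup M]
    [Module K M] [Module (PS K n) M] {GM : ℤ → Submodule K M} [DirectSum.Decomposition GM]
    (hGM : ∀ (a : ℕ) (b : ℤ) (s : PS K n) (x : M),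
      s ∈ homogeneousSubmodule (Fin n) K a → x ∈ GM b → s • x ∈ GM (a + b)) :
    IsGradedModule n GM where
  isInternal := DirectSum.Decomposition.isInternal GM
  smul_mem {p q s x} hs hx := by
    rw [polyGrade] at hs
    split_ifs at hs with hp
    · lift p to ℕ using hp
      exact hGM p q s x hs hx
    · rw [(Submodule.mem_bot K).1 hs, zero_smul]
      exact zero_mem _

/-! ### Ranks of the bar differentials -/

section Rank

variable {K V V' V'' : Type*} [Field K] [AddCommGroup V] [Module K V] [AddCommGroup V']
  [Module K V'] [AddCommGroup V''] [Module K V'']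

theorem finrank_map_add_finrank_inf_ker (U : Submodule K V) [FiniteDimensional K U]
    (f : V →ₗ[K] V') :
    Module.finrank K (U.map f) + Module.finrank K ↥(U ⊓ LinearMap.ker f) =
      Module.finrank K U := by
  rw [← LinearMap.finrank_range_add_finrank_ker (f.domRestrict U), LinearMap.range_domRestrict,
    LinearMap.ker_domRestrict, ← Submodule.finrank_map_subtype_eq U, Submodule.map_comap_subtype]

theorem finrank_map_ker_inf (U : Submodule K V) [FiniteDimensional K U] (f : V →ₗ[K] V')
    (g : V →ₗ[K] V'') :
    Module.finrank K ((U ⊓ LinearMap.ker f).map g) + Module.finrank K U =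
      Module.finrank K ↥(U ⊓ LinearMap.ker f) + Module.finrank K (U.map g) +
        Module.finrank K ((U ⊓ LinearMap.ker g).map f) := by
  have hf : FiniteDimensional K ↥(U ⊓ LinearMap.ker f) := Submodule.finiteDimensional_inf_left _ _
  have hg : FiniteDimensional K ↥(U ⊓ LinearMap.ker g) := Submodule.finiteDimensional_inf_left _ _
  have rank_U := finrank_map_add_finrank_inf_ker U g
  have rank_ker_f := finrank_map_add_finrank_inf_ker (U ⊓ LinearMap.ker f) g
  have rank_ker_g := finrank_map_add_finrank_inf_ker (U ⊓ LinearMap.ker g) f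
  rw [inf_right_comm] at rank_ker_g
  lia

end Rank

section BarStrands

variable {K : Type} [Field K] {n : ℕ}
  {M : Type} [AddCommGroup M] [Module K M] {N : Type} [AddCommGroup N] [Module K N]
  {GM : ℤ → Submodule K M} {GN : ℤ → Submodule K N}

theorem isInternal_barDGrade (hN : DirectSum.IsInternal GN) (i : ℕ) :
    DirectSum.IsInternal (barDGrade K n N GN i) := by
  induction i with
  | zero => exact hN
  | succ i ih => exact isInternal_tensorGrade isInternal_polyGrade ih

theorem isLocallyFinite_barDGrade (hN : IsLocallyFinite GN) (i : ℕ) :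
    IsLocallyFinite (barDGrade K n N GN i) := by
  induction i with
  | zero => exact hN
  | succ i ih => exact isLocallyFinite_polyGrade.tensorGrade ih

theorem barDGrade_succ_le_iff {i : ℕ} {d : ℤ} {V : Submodule K (barD K n N (i + 1))} :
    barDGrade K n N GN (i + 1) d ≤ V ↔ ∀ p q, p + q = d → ∀ s ∈ polyGrade K n p,
      ∀ t ∈ barDGrade K n N GN i q, barCons i s t ∈ V :=
  tensorGrade_le_iff

theorem barCons_mem_barDGrade {i : ℕ} {p q d : ℤ} (hpq : p + q = d) {s : PS K n}
    (hs : s ∈ polyGrade K n p) {t : barD K n N i} (ht : t ∈ barDGrade K n N GN i q) :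
    barCons i s t ∈ barDGrade K n N GN (i + 1) d :=
  barDGrade_succ_le_iff.1 le_rfl p q hpq s hs t ht

theorem map_barDGrade {N' : Type} [AddCommGroup N'] [Module K N'] (f : N →ₗ[K] N') (i : ℕ) (d : ℤ) :
    (barDGrade K n N GN i d).map (barDMap f i) =
      barDGrade K n N' (fun d => (GN d).map f) i d := by
  induction i generalizing d with
  | zero => rfl
  | succ i ih =>
    refine (map_tensorGrade LinearMap.id (barDMap f i) d).trans ?_
    simp only [Submodule.map_id, ih]
    rfl

theorem barDGrade_mono {GN' : ℤ → Submodule K N} (h : ∀ d, GN d ≤ GN' d) (i : ℕ) (d : ℤ) :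
    barDGrade K n N GN i d ≤ barDGrade K n N GN' i d := by
  induction i generalizing d with
  | zero => exact h d
  | succ i ih => exact tensorGrade_mono (fun _ => le_rfl) ih d

variable (GM GN) in
/-- The degree `j` component of the `i`-th term `M ⊗ S^{⊗ i} ⊗ N` of the bar complex. -/
def barStrand (i : ℕ) (j : ℤ) : Submodule K (M ⊗[K] barD K n N i) :=
  tensorGrade K GM (barDGrade K n N GN i) j

theorem isInternal_barStrand (hM : DirectSum.IsInternal GM) (hN : DirectSum.IsInternal GN) (i : ℕ) :
    DirectSum.IsInternal (barStrand (n := n) GM GN i) :=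
  isInternal_tensorGrade hM (isInternal_barDGrade hN i)

theorem finiteDimensional_barStrand (hM : IsLocallyFinite GM) (hN : IsLocallyFinite GN) (i : ℕ)
    (j : ℤ) : FiniteDimensional K (barStrand (n := n) GM GN i j) :=
  (hM.tensorGrade (isLocallyFinite_barDGrade hN i)).finiteDimensional j

theorem map_barStrand {M' : Type} [AddCommGroup M'] [Module K M'] {N' : Type} [AddCommGroup N']
    [Module K N'] (h : M →ₗ[K] M') (f : N →ₗ[K] N') (i : ℕ) (j : ℤ) :
    (barStrand (n := n) GM GN i j).map (TensorProduct.map h (barDMap f i)) =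
      barStrand (fun d => (GM d).map h) (fun d => (GN d).map f) i j := by
  rw [barStrand, map_tensorGrade]
  simp only [map_barDGrade]
  rfl

theorem map_lTensor_barStrand {N' : Type} [AddCommGroup N'] [Module K N'] (f : N →ₗ[K] N') (i : ℕ)
    (j : ℤ) : (barStrand (n := n) GM GN i j).map ((barDMap f i).lTensor M) =
      barStrand GM (fun d => (GN d).map f) i j := by
  refine (map_barStrand LinearMap.id f i j).trans ?_
  simp only [Submodule.map_id]

theorem barStrand_inf_ker {Z F : Type} [AddCommGroup Z] [Module K Z] [AddCommGroup F]
    [Module K F] {GF : ℤ → Submodule K F} {f : Z →ₗ[K] F} {q : F →ₗ[K] N}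
    (hM : DirectSum.IsInternal GM) (hF : DirectSum.IsInternal GF)
    (hZ : DirectSum.IsInternal fun d => (GF d).comap f)
    (hfq : Function.Exact f q) (hq : Function.Surjective q) (i : ℕ) (j : ℤ) :
    barStrand (n := n) GM GF i j ⊓ LinearMap.ker ((barDMap q i).lTensor M) =
      (barStrand GM (fun d => (GF d).comap f) i j).map ((barDMap f i).lTensor M) := by
  have hexact : Function.Exact ((barDMap (n := n) f i).lTensor M) ((barDMap q i).lTensor M) :=
    lTensor_exact M (barDMap_exact hfq hq i) (barDMap_surjective hq i)
  rw [hexact.linearMap_ker_eq, inf_comm]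
  refine range_inf_eq_map (isInternal_barStrand hM hZ i) (isInternal_barStrand hM hF i)
    (fun d => ?_) j
  rw [map_lTensor_barStrand]
  exact tensorGrade_mono (fun _ => le_rfl)
    (barDGrade_mono (fun _ => Submodule.map_comap_le _ _) i) d

section Multiplication

variable [Module (PS K n) N]

theorem isGradedModule_barDGrade (hN : IsGradedModule n GN) (i : ℕ) :
    IsGradedModule n (barDGrade K n N GN i) where
  isInternal := isInternal_barDGrade hN.isInternal i
  smul_mem {p q s y} hs hy := by
    cases i with
    | zero => exact hN.smul_mem hs hy
    | succ i =>
      have hle : barDGrade K n N GN (i + 1) q ≤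
          (barDGrade K n N GN (i + 1) (p + q)).comap
            ((LinearMap.mulLeft K s).rTensor (barD K n N i)) :=
        barDGrade_succ_le_iff.2 fun a b hab s' hs' t ht =>
          barCons_mem_barDGrade (p := p + a) (by lia) (mul_mem_polyGrade hs hs') ht
      exact hle hy

variable [IsScalarTower K (PS K n) N]

theorem barC_mem_barDGrade (hN : IsGradedModule n GN) {i : ℕ} {d : ℤ} {y : barD K n N (i + 1)}
    (hy : y ∈ barDGrade K n N GN (i + 1) d) : barC K n N i y ∈ barDGrade K n N GN i d := by
  induction i generalizing d with
  | zero =>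
    have hle : barDGrade K n N GN 1 d ≤ (GN d).comap (barC K n N 0) :=
      barDGrade_succ_le_iff.2 fun p q hpq s hs x hx => hpq ▸ hN.smul_mem hs hx
    exact hle hy
  | succ i ih =>
    have hle : barDGrade K n N GN (i + 2) d ≤
        (barDGrade K n N GN (i + 1) d).comap (barC K n N (i + 1)) :=
      barDGrade_succ_le_iff.2 fun p q hpq s hs y hy => by
        refine Submodule.mem_comap.2 ((barC_succ_barCons i s y).symm ▸ sub_mem ?_ ?_)
        · exact hpq ▸ (isGradedModule_barDGrade hN (i + 1)).smul_mem hs hy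
        · exact barCons_mem_barDGrade hpq hs (ih hy)
    exact hle hy

variable [Module (PS K n) M] [IsScalarTower K (PS K n) M]

theorem map_barB_barStrand_le (hM : IsGradedModule n GM) (hN : IsGradedModule n GN) (i : ℕ)
    (j : ℤ) : (barStrand GM GN (i + 1) j).map (barB K n N M i) ≤ barStrand GM GN i j := by
  rw [Submodule.map_le_iff_le_comap]
  refine tensorGrade_le_iff.2 fun p q hpq m hm => ?_
  suffices h : barDGrade K n N GN (i + 1) q ≤
      (barStrand GM GN i j).comap
        (barB K n N M i ∘ₗ TensorProduct.mk K M (barD K n N (i + 1)) m) from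
    fun y hy => h hy
  refine barDGrade_succ_le_iff.2 fun a b hab s hs t ht => ?_
  refine Submodule.mem_comap.2 (sub_mem (tmul_mem_tensorGrade (p := a + p) (by lia)
    (hM.smul_mem hs hm) ht) (tmul_mem_tensorGrade hpq hm (barC_mem_barDGrade hN ?_)))
  exact barCons_mem_barDGrade hab hs ht

theorem range_barB_inf_barStrand (hM : IsGradedModule n GM) (hN : IsGradedModule n GN) (i : ℕ)
    (j : ℤ) : LinearMap.range (barB K n N M i) ⊓ barStrand GM GN i j =
      (barStrand GM GN (i + 1) j).map (barB K n N M i) :=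
  range_inf_eq_map (isInternal_barStrand hM.isInternal hN.isInternal (i + 1))
    (isInternal_barStrand hM.isInternal hN.isInternal i) (map_barB_barStrand_le hM hN i) j

end Multiplication

end BarStrands

section Ranks

variable {K : Type} [Field K] {n : ℕ}
  {M : Type} [AddCommGroup M] [Module K M] [Module (PS K n) M] [IsScalarTower K (PS K n) M]
  {N : Type} [AddCommGroup N] [Module K N] [Module (PS K n) N] [IsScalarTower K (PS K n) N]
  {GM : ℤ → Submodule K M} {GN : ℤ → Submodule K N}

variable (n GM GN) in
/-- The rank of the bar differential `M ⊗ S^{⊗ (i+1)} ⊗ N → M ⊗ S^{⊗ i} ⊗ N` in degree `j`. -/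
def barRank (i : ℕ) (j : ℤ) : ℕ :=
  Module.finrank K ((barStrand GM GN (i + 1) j).map (barB K n N M i))

theorem torStrandDim_zero (hM : IsGradedModule n GM) (hN : IsGradedModule n GN) (j : ℤ) :
    torStrandDim K n N M GM GN 0 j =
      Module.finrank K (barStrand (n := n) GM GN 0 j) - barRank n GM GN 0 j := by
  rw [barRank, ← range_barB_inf_barStrand hM hN]
  rfl

theorem finrank_ker_barB_inf_barStrand (hM : IsLocallyFinite GM) (hN : IsLocallyFinite GN)
    (i : ℕ) (j : ℤ) :
    Module.finrank K ↥(LinearMap.ker (barB K n N M i) ⊓ barStrand GM GN (i + 1) j) +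
      barRank n GM GN i j = Module.finrank K (barStrand (n := n) GM GN (i + 1) j) := by
  have := finiteDimensional_barStrand (n := n) hM hN (i + 1) j
  rw [inf_comm, add_comm]
  exact finrank_map_add_finrank_inf_ker _ _

theorem torStrandDim_succ (hM : IsGradedModule n GM) (hN : IsGradedModule n GN)
    (hMfin : IsLocallyFinite GM) (hNfin : IsLocallyFinite GN) (i : ℕ) (j : ℤ) :
    torStrandDim K n N M GM GN (i + 1) j =
      Module.finrank K (barStrand (n := n) GM GN (i + 1) j) - barRank n GM GN i j -
        barRank n GM GN (i + 1) j := by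
  rw [← finrank_ker_barB_inf_barStrand hMfin hNfin, Nat.add_sub_cancel, barRank,
    ← range_barB_inf_barStrand hM hN]
  rfl

theorem torStrandDim_succ_eq_zero {i : ℕ} (h : BarExactAt K n M N i) (j : ℤ) :
    torStrandDim K n N M GM GN (i + 1) j = 0 := by
  rw [torStrandDim, h.linearMap_ker_eq, Nat.sub_self]

end Ranks

section ShortExact

variable {K : Type} [Field K] {n : ℕ}
  {M : Type} [AddCommGroup M] [Module K M] [Module (PS K n) M] [IsScalarTower K (PS K n) M]
  {Z : Type} [AddCommGroup Z] [Module K Z] [Module (PS K n) Z] [IsScalarTower K (PS K n) Z]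
  {F : Type} [AddCommGroup F] [Module K F] [Module (PS K n) F] [IsScalarTower K (PS K n) F]
  {N : Type} [AddCommGroup N] [Module K N] [Module (PS K n) N] [IsScalarTower K (PS K n) N]
  {GM : ℤ → Submodule K M} {GF : ℤ → Submodule K F}

theorem map_barB_barStrand_inf_ker {f : Z →ₗ[PS K n] F} {q : F →ₗ[PS K n] N}
    (hM : IsGradedModule n GM) (hF : IsGradedModule n GF)
    (hZ : DirectSum.IsInternal fun d => (GF d).comap (f.restrictScalars K))
    (hfq : Function.Exact f q) (hf : Function.Injective f) (hq : Function.Surjective q) {i : ℕ}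
    (hexact : BarExactAt K n M F i) (j : ℤ) :
    (barStrand GM GF (i + 2) j).map (barB K n F M (i + 1)) ⊓
        LinearMap.ker ((barDMap (n := n) (q.restrictScalars K) (i + 1)).lTensor M) =
      (LinearMap.ker (barB K n Z M i) ⊓
        barStrand GM (fun d => (GF d).comap (f.restrictScalars K)) (i + 1) j).map
          ((barDMap (f.restrictScalars K) (i + 1)).lTensor M) := by
  have image_eq : (barStrand GM GF (i + 2) j).map (barB K n F M (i + 1)) =
      LinearMap.ker (barB K n F M i) ⊓ barStrand GM GF (i + 1) j := by
    rw [hexact.linearMap_ker_eq, range_barB_inf_barStrand hM hF]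
  have ker_eq_comap : LinearMap.ker (barB K n Z M i) =
      (LinearMap.ker (barB K n F M i)).comap
        ((barDMap (f.restrictScalars K) (i + 1)).lTensor M) := by
    ext z
    rw [Submodule.mem_comap, LinearMap.mem_ker, LinearMap.mem_ker, ← lTensor_barDMap_barB]
    exact (map_eq_zero_iff _
      (Module.Flat.lTensor_preserves_injective_linearMap _ (barDMap_injective hf i))).symm
  have strand_inf_ker := barStrand_inf_ker (n := n) (q := q.restrictScalars K) hM.isInternal
    hF.isInternal hZ hfq hq (i + 1) j
  rw [image_eq, inf_assoc, strand_inf_ker, ker_eq_comap, inf_comm,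
    Submodule.map_inf_eq_map_inf_comap, inf_comm]

theorem barRank_succ_add_finrank_barStrand {f : Z →ₗ[PS K n] F} {q : F →ₗ[PS K n] N}
    (hM : IsGradedModule n GM) (hF : IsGradedModule n GF)
    (hMfin : IsLocallyFinite GM) (hFfin : IsLocallyFinite GF)
    (hZ : DirectSum.IsInternal fun d => (GF d).comap (f.restrictScalars K))
    (hfq : Function.Exact f q) (hf : Function.Injective f) (hq : Function.Surjective q) {i : ℕ}
    (hexact : BarExactAt K n M F i) (j : ℤ) :
    barRank n GM (fun d => (GF d).map (q.restrictScalars K)) (i + 1) j +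
        Module.finrank K
          (barStrand (n := n) GM (fun d => (GF d).comap (f.restrictScalars K)) (i + 1) j) =
      barRank n GM GF (i + 1) j +
        barRank n GM (fun d => (GF d).comap (f.restrictScalars K)) i j := by
  let qB := (barDMap (n := n) (q.restrictScalars K) (i + 1)).lTensor M
  let B := (barStrand GM GF (i + 2) j).map (barB K n F M (i + 1))
  have := finiteDimensional_barStrand (n := n) hMfin hFfin (i + 2) j
  have fB_injective :
      Function.Injective ((barDMap (n := n) (f.restrictScalars K) (i + 1)).lTensor M) :=
    Module.Flat.lTensor_preserves_injective_linearMap _ (barDMap_injective hf (i + 1))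
  have map_B : B.map qB =
      (barStrand GM (fun d => (GF d).map (q.restrictScalars K)) (i + 2) j).map
        (barB K n N M (i + 1)) := by
    rw [← map_lTensor_barStrand, ← Submodule.map_comp, ← Submodule.map_comp]
    congr 1
    exact LinearMap.ext (lTensor_barDMap_barB q (i + 1))
  have rank_B := finrank_map_add_finrank_inf_ker B qB
  rw [map_B, map_barB_barStrand_inf_ker hM hF hZ hfq hf hq hexact,
    (Submodule.equivMapOfInjective _ fB_injective _).symm.finrank_eq] at rank_B
  have rank_Z := finrank_ker_barB_inf_barStrand (N := Z) (n := n) hMfin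
    (hFfin.comap_injective (f := f.restrictScalars K) hf) i j
  rw [← rank_Z, ← add_assoc]
  exact congrArg (· + _) rank_B

end ShortExact

/-! ### Twists by a change of coordinates -/

section CoordinateChange

variable {K : Type} [Field K] {n : ℕ}

theorem coordChange_one : coordChange K n 1 = AlgHom.id K (PS K n) := by
  refine algHom_ext fun i => ?_
  simp [coordChange, Matrix.one_apply]

theorem coordChange_comp (g h : GL (Fin n) K) :
    (coordChange K n g).comp (coordChange K n h) = coordChange K n (g * h) := by
  refine algHom_ext fun i => ?_
  simp only [coordChange, AlgHom.comp_apply, aeval_X, map_sum, map_smul, Units.val_mul,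
    Matrix.mul_apply, Finset.sum_smul, Finset.smul_sum, smul_smul]
  rw [Finset.sum_comm]
  simp only [mul_comm]

/-- The change of coordinates `coordChange K n g` as an automorphism of `S`. -/
def coordEquiv (g : GL (Fin n) K) : PS K n ≃ₐ[K] PS K n :=
  AlgEquiv.ofAlgHom (coordChange K n g) (coordChange K n g⁻¹)
    (by rw [coordChange_comp, mul_inv_cancel, coordChange_one])
    (by rw [coordChange_comp, inv_mul_cancel, coordChange_one])

theorem isHomogeneous_linearForm (c : Fin n → K) :
    (∑ j, c j • (X j : PS K n)).IsHomogeneous 1 := by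
  exact IsHomogeneous.sum _ _ _ fun j _ => by
    rw [smul_eq_C_mul]
    exact isHomogeneous_C_mul_X _ _

theorem coordChange_mem_polyGrade (g : GL (Fin n) K) {d : ℤ} {p : PS K n}
    (hp : p ∈ polyGrade K n d) : coordChange K n g p ∈ polyGrade K n d := by
  rw [polyGrade] at hp ⊢
  split_ifs at hp ⊢
  · rw [mem_homogeneousSubmodule] at hp ⊢
    have h := hp.aeval (fun i => ∑ j, (g : Matrix (Fin n) (Fin n) K) j i • X j)
      fun i => isHomogeneous_linearForm _
    rwa [one_mul] at h
  · rw [(Submodule.mem_bot K).1 hp, map_zero]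
    exact Submodule.zero_mem _

theorem coordChange_coordChange_inv (g : GL (Fin n) K) (p : PS K n) :
    coordChange K n g (coordChange K n g⁻¹ p) = p :=
  (coordEquiv g).apply_symm_apply p

theorem map_coordChange_polyGrade (g : GL (Fin n) K) (d : ℤ) :
    (polyGrade K n d).map (coordChange K n g).toLinearMap = polyGrade K n d := by
  refine le_antisymm ?_ fun p hp => ?_
  · rintro _ ⟨p, hp, rfl⟩
    exact coordChange_mem_polyGrade g hp
  · exact ⟨_, coordChange_mem_polyGrade g⁻¹ hp, coordChange_coordChange_inv g p⟩

end CoordinateChange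

section Twists

variable {K : Type} [Field K] {n : ℕ} (g : GL (Fin n) K)
  {N : Type} [AddCommGroup N] [Module K N] [Module (PS K n) N]
  {N' : Type} [AddCommGroup N'] [Module K N'] [Module (PS K n) N']

/-- `e` identifies the graded `S`-module `N'` with the twist of `N` by the change of coordinates
`g`: it is a graded isomorphism of vector spaces, semilinear along `g`. The model case is
`S/J ≃ S/g(J)`. -/
structure IsTwist (GN : ℤ → Submodule K N) (GN' : ℤ → Submodule K N') (e : N ≃ₗ[K] N') : Prop where
  map_smul (s : PS K n) (x : N) : e (s • x) = coordChange K n g s • e x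
  map_grade (d : ℤ) : (GN d).map (e : N →ₗ[K] N') = GN' d

variable (n) in
theorem isTwist_one (GN : ℤ → Submodule K N) : IsTwist (n := n) 1 GN GN (LinearEquiv.refl K N) where
  map_smul s x := by rw [coordChange_one]; rfl
  map_grade d := Submodule.map_id _

/-- Applying the change of coordinates `g` to every coordinate of a free module. -/
def freeTwist (α : Type) : (α → PS K n) ≃ₗ[K] (α → PS K n) :=
  LinearEquiv.piCongrRight fun _ => (coordEquiv g).toLinearEquiv

theorem freeTwist_apply {α : Type} (v : α → PS K n) (a : α) :
    freeTwist g α v a = coordChange K n g (v a) := rfl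

variable {g} {GN : ℤ → Submodule K N} {GN' : ℤ → Submodule K N'} {e : N ≃ₗ[K] N'}

theorem isTwist_freeTwist {α : Type} (β : α → ℤ) :
    IsTwist g (freeGrade (K := K) β) (freeGrade β) (freeTwist g α) where
  map_smul s v := funext fun a => by
    simp only [freeTwist_apply, Pi.smul_apply, smul_eq_mul, map_mul]
  map_grade d := by
    refine le_antisymm ?_ fun v hv => ?_
    · rintro _ ⟨v, hv, rfl⟩
      refine mem_freeGrade.2 fun a => ?_
      rw [LinearEquiv.coe_coe, freeTwist_apply]
      exact coordChange_mem_polyGrade g (mem_freeGrade.1 hv a)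
    · refine ⟨fun a => coordChange K n g⁻¹ (v a),
        mem_freeGrade.2 fun a => coordChange_mem_polyGrade g⁻¹ (mem_freeGrade.1 hv a), ?_⟩
      ext1 a
      rw [LinearEquiv.coe_coe, freeTwist_apply, coordChange_coordChange_inv]

theorem IsTwist.mem_iff (he : IsTwist g GN GN' e) {x : N} {d : ℤ} : e x ∈ GN' d ↔ x ∈ GN d := by
  rw [← he.map_grade]
  exact e.injective.mem_set_image

theorem IsTwist.isGradedModule (he : IsTwist g GN GN' e) (hN : IsGradedModule n GN) :
    IsGradedModule n GN' where
  isInternal := by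
    rw [← funext he.map_grade]
    exact isInternal_map_equiv hN.isInternal e
  smul_mem {p q s x} hs hx := by
    obtain ⟨s', hs', rfl⟩ := map_coordChange_polyGrade g p ▸ hs
    obtain ⟨x', hx', rfl⟩ := he.map_grade q ▸ hx
    rw [← he.map_grade]
    exact ⟨s' • x', hN.smul_mem hs' hx', he.map_smul s' x'⟩

theorem IsTwist.isLocallyFinite (he : IsTwist g GN GN' e) (hN : IsLocallyFinite GN) :
    IsLocallyFinite GN' := by
  rw [← funext he.map_grade]
  exact hN.map _

theorem IsTwist.finrank_barStrand (he : IsTwist g GN GN' e) {M : Type} [AddCommGroup M]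
    [Module K M] (GM : ℤ → Submodule K M) (i : ℕ) (j : ℤ) :
    Module.finrank K (barStrand (n := n) GM GN' i j) =
      Module.finrank K (barStrand (n := n) GM GN i j) := by
  rw [← funext he.map_grade, ← map_lTensor_barStrand]
  exact (Submodule.equivMapOfInjective _ (Module.Flat.lTensor_preserves_injective_linearMap _
    (barDMap_injective e.injective i)) _).symm.finrank_eq

theorem isTwist_quotient (J : Ideal (PS K n)) :
    IsTwist g (quotGrade K n J) (quotGrade K n (J.map (coordChange K n g)))
      (Ideal.quotientEquivAlg J (J.map (coordChange K n g)) (coordEquiv g) rfl).toLinearEquiv where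
  map_smul s x := by
    obtain ⟨p, rfl⟩ := Ideal.Quotient.mk_surjective x
    exact congrArg (Ideal.Quotient.mk _) (map_mul (coordChange K n g) s p)
  map_grade d := by
    rw [quotGrade, quotGrade]
    conv_rhs => rw [← map_coordChange_polyGrade g]
    rw [← Submodule.map_comp, ← Submodule.map_comp]
    rfl

section FreeCover

variable {α : Type} [Fintype α] [DecidableEq α] {β : α → ℤ}

/-- The cover of the twisted module `N'` corresponding to a free cover `q` of `N`. -/
def twistCover (q : (α → PS K n) →ₗ[PS K n] N) (e : N ≃ₗ[K] N') : (α → PS K n) →ₗ[PS K n] N' :=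
  Fintype.linearCombination (PS K n) fun a => e (q (Pi.single a 1))

variable {q : (α → PS K n) →ₗ[PS K n] N}

theorem IsTwist.twistCover_freeTwist (he : IsTwist g GN GN' e) (v : α → PS K n) :
    twistCover q e (freeTwist g α v) = e (q v) := by
  have hv : q v = ∑ a, v a • q (Pi.single a 1) := by
    conv_lhs => rw [pi_eq_sum_univ' v]
    exact (map_sum q _ _).trans (Finset.sum_congr rfl fun a _ => q.map_smul _ _)
  simp only [hv, twistCover, Fintype.linearCombination_apply, freeTwist_apply, map_sum, he.map_smul]

theorem IsTwist.twistCover_surjective (he : IsTwist g GN GN' e) (hq : Function.Surjective q) :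
    Function.Surjective (twistCover q e) := fun y => by
  obtain ⟨v, hv⟩ := hq (e.symm y)
  exact ⟨freeTwist g α v, by rw [he.twistCover_freeTwist, hv, e.apply_symm_apply]⟩

theorem IsTwist.exists_isTwist_ker (he : IsTwist g GN GN' e) :
    ∃ eZ : LinearMap.ker q ≃ₗ[K] LinearMap.ker (twistCover q e),
      IsTwist g (fun d => (freeGrade β d).comap ((LinearMap.ker q).subtype.restrictScalars K))
        (fun d => (freeGrade β d).comap
          ((LinearMap.ker (twistCover q e)).subtype.restrictScalars K)) eZ := by
  have mem_ker_iff (v : α → PS K n) :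
      freeTwist g α v ∈ LinearMap.ker (twistCover q e) ↔ v ∈ LinearMap.ker q := by
    rw [LinearMap.mem_ker, he.twistCover_freeTwist, LinearEquiv.map_eq_zero_iff, LinearMap.mem_ker]
  have hmap : ((LinearMap.ker q).restrictScalars K).map
      (freeTwist g α : (α → PS K n) →ₗ[K] α → PS K n) =
        (LinearMap.ker (twistCover q e)).restrictScalars K := by
    refine le_antisymm (Submodule.map_le_iff_le_comap.2 fun v => (mem_ker_iff v).2) fun w hw => ?_
    obtain ⟨v, rfl⟩ := (freeTwist g α).surjective w
    exact ⟨v, (mem_ker_iff v).1 hw, rfl⟩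
  let eZ : LinearMap.ker q ≃ₗ[K] LinearMap.ker (twistCover q e) :=
    (freeTwist g α).ofSubmodules ((LinearMap.ker q).restrictScalars K)
      ((LinearMap.ker (twistCover q e)).restrictScalars K) hmap
  refine ⟨eZ, ⟨fun s z => Subtype.ext ((isTwist_freeTwist β).map_smul s z.1), fun d => ?_⟩⟩
  refine le_antisymm ?_ fun w hw => ?_
  · rintro _ ⟨z, hz, rfl⟩
    exact (isTwist_freeTwist β).mem_iff.2 hz
  · obtain ⟨z, rfl⟩ := eZ.surjective w
    exact ⟨z, (isTwist_freeTwist (g := g) β).mem_iff.1 hw, rfl⟩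

variable [IsScalarTower K (PS K n) N] [IsScalarTower K (PS K n) N']

theorem IsTwist.map_twistCover (he : IsTwist g GN GN' e)
    (hq : ∀ d, GN d = (freeGrade β d).map (q.restrictScalars K)) (d : ℤ) :
    GN' d = (freeGrade β d).map ((twistCover q e).restrictScalars K) := by
  rw [← he.map_grade, hq]
  conv_rhs => rw [← (isTwist_freeTwist (g := g) β).map_grade]
  rw [← Submodule.map_comp, ← Submodule.map_comp]
  congr 1
  refine LinearMap.ext fun v => ?_
  exact (he.twistCover_freeTwist (q := q) v).symm

end FreeCover

end Twists

/-! ### Semicontinuity of ranks -/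

section Semicontinuity

variable {K : Type} [Field K] {n : ℕ}

theorem generally_mono {P Q : GL (Fin n) K → Prop} (hP : generally K n P) (hPQ : ∀ g, P g → Q g) :
    generally K n Q := by
  obtain ⟨F, hF, h⟩ := hP
  exact ⟨F, hF, fun g hg => hPQ g (h g hg)⟩

theorem generally_finset_forall {ι : Type*} {P : ι → GL (Fin n) K → Prop} (s : Finset ι)
    (hP : ∀ i ∈ s, generally K n (P i)) : generally K n fun g => ∀ i ∈ s, P i g := by
  classical
  choose! F hF h using hP
  refine ⟨∏ i ∈ s, F i, Finset.prod_ne_zero_iff.2 hF, fun g hg i hi => h i hi g ?_⟩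
  rw [map_prod, Finset.prod_ne_zero_iff] at hg
  exact hg i hi

variable {M : Type} [AddCommGroup M] [Module K M] [Module (PS K n) M] [IsScalarTower K (PS K n) M]
  {N : Type} [AddCommGroup N] [Module K N] [Module (PS K n) N] [IsScalarTower K (PS K n) N]
  {GM : ℤ → Submodule K M} {GN : ℤ → Submodule K N}

variable (GM GN) in
/-- Passing from `N` to its twist by a general change of coordinates does not decrease the rank of
the `i`-th bar differential in any degree. The twist is any module identified with it by `IsTwist`,
so that the notion passes to syzygies. -/
def RankSemicontinuous (i : ℕ) : Prop :=
  generally K n fun g => ∀ (N' : Type) [AddCommGroup N'] [Module K N'] [Module (PS K n) N']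
    [IsScalarTower K (PS K n) N'] (GN' : ℤ → Submodule K N') (e : N ≃ₗ[K] N'),
    IsTwist g GN GN' e → ∀ j, barRank n GM GN i j ≤ barRank n GM GN' i j

theorem RankSemicontinuous.succ {α : Type} [Finite α] {β : α → ℤ}
    {q : (α → PS K n) →ₗ[PS K n] N} {i : ℕ}
    (hGM : IsGradedModule n GM) (hGMfin : IsLocallyFinite GM) (hGN : IsGradedModule n GN)
    (hq : Function.Surjective q)
    (hqgrade : ∀ d, GN d = (freeGrade β d).map (q.restrictScalars K))
    (h : RankSemicontinuous (n := n) GM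
      (fun d => (freeGrade β d).comap ((LinearMap.ker q).subtype.restrictScalars K)) i) :
    RankSemicontinuous (n := n) GM GN (i + 1) := by
  classical
  cases nonempty_fintype α
  have rank_formula {N' : Type} [AddCommGroup N'] [Module K N'] [Module (PS K n) N']
      [IsScalarTower K (PS K n) N'] {GN' : ℤ → Submodule K N'} (hGN' : IsGradedModule n GN')
      (q' : (α → PS K n) →ₗ[PS K n] N') (hq' : Function.Surjective q')
      (hqgrade' : ∀ d, GN' d = (freeGrade β d).map (q'.restrictScalars K)) (j : ℤ) :=
    funext hqgrade' ▸ barRank_succ_add_finrank_barStrand hGM (isGradedModule_freeGrade β) hGMfin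
      (isLocallyFinite_freeGrade β)
      ((isGradedModule_freeGrade β).ker hGN' fun d => (hqgrade' d).ge).isInternal
      (LinearMap.exact_subtype_ker_map q') (LinearMap.ker q').injective_subtype hq'
      (barExactAt_of_projective i) j
  refine generally_mono h fun g hg N' _ _ _ _ GN' e he j => ?_
  obtain ⟨eZ, heZ⟩ := he.exists_isTwist_ker (q := q) (β := β)
  have rank_N := rank_formula hGN q hq hqgrade j
  have rank_N' := rank_formula (he.isGradedModule hGN) (twistCover q e)
    (he.twistCover_surjective hq) (he.map_twistCover hqgrade) j
  have rank_ker := hg _ _ eZ heZ j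
  have strand_ker := heZ.finrank_barStrand GM (i + 1) j
  lia

end Semicontinuity

/-! ### Semicontinuity of generated submodules -/

section LeadingExponents

variable {τ : Type*} (m : MonomialOrder τ) {A : Type*} [CommRing A]

theorem linearIndependent_of_injective_degree [NoZeroDivisors A] {ι : Type*}
    {v : ι → MvPolynomial τ A} (hv : ∀ i, v i ≠ 0)
    (hdeg : Function.Injective fun i => m.degree (v i)) : LinearIndependent A v := by
  classical
  refine linearIndependent_iff'.2 fun s c hsum => ?_
  by_contra! hne
  obtain ⟨i₀, hi₀, hci₀⟩ := hne
  obtain ⟨i, hi, hmax⟩ := (s.filter (c · ≠ 0)).exists_max_image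
    (fun i => m.toSyn (m.degree (v i))) ⟨i₀, Finset.mem_filter.2 ⟨hi₀, hci₀⟩⟩
  obtain ⟨his, hci⟩ := Finset.mem_filter.1 hi
  have hother : ∀ k ∈ s, k ≠ i → coeff (m.degree (v i)) (c k • v k) = 0 := fun k hk hki => by
    rw [coeff_smul, smul_eq_mul]
    by_cases hck : c k = 0
    · rw [hck, zero_mul]
    · rw [m.coeff_eq_zero_of_lt, mul_zero]
      refine lt_of_le_of_ne (hmax k (Finset.mem_filter.2 ⟨hk, hck⟩)) fun h => hki (hdeg ?_)
      exact m.toSyn.injective h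
  have hcoeff := congrArg (coeff (m.degree (v i))) hsum
  rw [coeff_sum, Finset.sum_eq_single_of_mem i his hother, coeff_smul, coeff_zero] at hcoeff
  exact mul_ne_zero hci (m.leadingCoeff_ne_zero_iff.2 (hv i)) hcoeff

variable {m}

theorem degree_map_of_leadingCoeff_ne_zero {B : Type*} [CommRing B] {φ : A →+* B}
    {v : MvPolynomial τ A} (hv : φ (m.leadingCoeff v) ≠ 0) :
    map φ v ≠ 0 ∧ m.degree (map φ v) = m.degree v := by
  have hcoeff : coeff (m.degree v) (map φ v) ≠ 0 := by rwa [coeff_map]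
  refine ⟨ne_zero_iff.2 ⟨_, hcoeff⟩, m.toSyn.injective (le_antisymm ?_ ?_)⟩
  · refine m.degree_le_iff.2 fun μ hμ => m.le_degree (mem_support_iff.2 fun h => ?_)
    rw [mem_support_iff, coeff_map, h, map_zero] at hμ
    exact hμ rfl
  · exact m.le_degree (mem_support_iff.2 hcoeff)

variable (m) in
/-- The exponents of the leading monomials of the nonzero elements of `V`. -/
def leadingExponents (V : Submodule A (MvPolynomial τ A)) : Set (τ →₀ ℕ) :=
  {l | ∃ v ∈ V, v ≠ 0 ∧ m.degree v = l}

variable {V : Submodule A (MvPolynomial τ A)}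

theorem ncard_leadingExponents_le_finrank_span_map {K : Type*} [Field K] {φ : A →+* K}
    [FiniteDimensional K (Submodule.span K (map φ '' (V : Set (MvPolynomial τ A))))]
    (h : ∀ l ∈ leadingExponents m V, ∃ v ∈ V, m.degree v = l ∧ φ (m.leadingCoeff v) ≠ 0) :
    (leadingExponents m V).ncard ≤
      Module.finrank K (Submodule.span K (map φ '' (V : Set (MvPolynomial τ A)))) := by
  choose! v hvV hdeg hlead using h
  have hmap (l : leadingExponents m V) := degree_map_of_leadingCoeff_ne_zero (hlead l l.2)
  have hindep : LinearIndependent K fun l : leadingExponents m V => map φ (v l) :=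
    linearIndependent_of_injective_degree m (fun l => (hmap l).1) fun l l' hl => by
      simp only [(hmap _).2] at hl
      rw [hdeg l l.2, hdeg l' l'.2] at hl
      exact Subtype.ext hl
  have hspan : LinearIndependent K fun l : leadingExponents m V =>
      (⟨map φ (v l), Submodule.subset_span ⟨v l, hvV l l.2, rfl⟩⟩ :
        Submodule.span K (map φ '' (V : Set (MvPolynomial τ A)))) :=
    LinearIndependent.of_comp (Submodule.subtype _) hindep
  have hfin := hspan.finite
  have := Fintype.ofFinite (leadingExponents m V)
  rw [← Nat.card_coe_set_eq, Nat.card_eq_fintype_card]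
  exact hspan.fintype_card_le_finrank

theorem linearIndependent_of_map {K : Type*} [Field K] [Algebra K A] [IsDomain A] {ι : Type*}
    [Finite ι] {φ : A →ₐ[K] K} {v : ι → MvPolynomial τ A}
    (hv : LinearIndependent K fun i => map (φ : A →+* K) (v i)) : LinearIndependent A v := by
  classical
  have := Fintype.ofFinite ι
  obtain ⟨ℓ, hℓ⟩ := (Fintype.linearCombination K fun i =>
    map (φ : A →+* K) (v i)).exists_leftInverse_of_injective
      (LinearMap.ker_eq_bot.2 hv.fintypeLinearCombination_injective)
  let L : MvPolynomial τ A →ₗ[A] ι → A :=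
    (basisMonomials τ A).constr A fun μ k => algebraMap K A (ℓ (monomial μ 1) k)
  have map_L (p : MvPolynomial τ A) (k : ι) : φ (L p k) = ℓ (map (φ : A →+* K) p) k := by
    induction p using MvPolynomial.induction_on' with
    | monomial μ a =>
      have hmonomial : monomial μ a = a • basisMonomials τ A μ := by
        rw [coe_basisMonomials, smul_monomial, smul_eq_mul, mul_one]
      have hmap : map (φ : A →+* K) (monomial μ a) = φ a • monomial μ 1 := by
        rw [map_monomial, smul_monomial, smul_eq_mul, mul_one, RingHom.coe_coe]
      rw [hmap, hmonomial, map_smul, map_smul, Module.Basis.constr_basis, Pi.smul_apply,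
        Pi.smul_apply, smul_eq_mul, smul_eq_mul, map_mul, AlgHom.commutes]
      rfl
    | add p q hp hq => simp only [map_add, Pi.add_apply, hp, hq]
  have map_det : φ (Matrix.of fun i => L (v i)).det = 1 := by
    rw [AlgHom.map_det, ← Matrix.det_one (n := ι)]
    congr 1
    ext i k
    have h := congrFun (LinearMap.congr_fun hℓ (Pi.single i 1)) k
    rw [LinearMap.comp_apply, Fintype.linearCombination_apply_single, one_smul] at h
    rw [AlgHom.mapMatrix_apply, Matrix.map_apply, Matrix.of_apply, map_L, h, LinearMap.id_apply,
      Matrix.one_eq_pi_single]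
  refine LinearIndependent.of_comp L (Matrix.linearIndependent_rows_of_det_ne_zero
    (A := Matrix.of fun i => L (v i)) fun h => ?_)
  rw [h, map_zero] at map_det
  exact zero_ne_one map_det

theorem finrank_span_map_le_ncard_leadingExponents {K : Type*} [Field K] [Algebra K A] [IsDomain A]
    (hV : (leadingExponents m V).Finite) (φ : A →ₐ[K] K)
    [FiniteDimensional K
      (Submodule.span K (map (φ : A →+* K) '' (V : Set (MvPolynomial τ A))))] :
    Module.finrank K (Submodule.span K (map (φ : A →+* K) '' (V : Set (MvPolynomial τ A)))) ≤
      (leadingExponents m V).ncard := by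
  obtain ⟨u, hu, -, hindep⟩ :=
    Submodule.exists_fun_fin_finrank_span_eq K (map (φ : A →+* K) '' (V : Set (MvPolynomial τ A)))
  choose v hv hvu using hu
  let coeffs : V →ₗ[A] leadingExponents m V → A :=
    LinearMap.pi fun l => lcoeff A l.1 ∘ₗ V.subtype
  have coeffs_injective : Function.Injective coeffs := by
    refine (injective_iff_map_eq_zero coeffs).2 fun x hx => ?_
    by_contra hx0
    have hx0' : (x : MvPolynomial τ A) ≠ 0 := fun h => hx0 (Subtype.ext h)
    exact m.leadingCoeff_ne_zero_iff.2 hx0' (congrFun hx ⟨_, x, x.2, hx0', rfl⟩)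
  rw [← funext hvu] at hindep
  have hindep_lift : LinearIndependent A fun i => (⟨v i, hv i⟩ : V) :=
    LinearIndependent.of_comp V.subtype
      (linearIndependent_of_map (φ := φ) hindep)
  have := hV.fintype
  have hcard := (hindep_lift.map' coeffs
    (LinearMap.ker_eq_bot.2 coeffs_injective)).fintype_card_le_finrank
  rwa [Fintype.card_fin, Module.finrank_fintype_fun_eq_card, ← Nat.card_eq_fintype_card,
    Nat.card_coe_set_eq] at hcard

end LeadingExponents

section GeneratedStrands

variable {τ Γ κ : Type*} [AddCommMonoid Γ] {A : Type*} [CommRing A]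

/-- The degree `d` component of the ideal generated by the polynomials `W k`, where `W k` is thought
of as weighted homogeneous of degree `δ k`. -/
def strandSpan (w : τ → Γ) (δ : κ → Γ) (W : κ → MvPolynomial τ A) (d : Γ) :
    Submodule A (MvPolynomial τ A) :=
  Submodule.span A
    {p | ∃ μ : τ →₀ ℕ, ∃ k, Finsupp.weight w μ + δ k = d ∧ monomial μ 1 * W k = p}

variable {w : τ → Γ} {δ : κ → Γ} {W : κ → MvPolynomial τ A}

theorem monomial_mul_mem_strandSpan (ν : τ →₀ ℕ) {d : Γ} {p : MvPolynomial τ A}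
    (hp : p ∈ strandSpan w δ W d) :
    monomial ν 1 * p ∈ strandSpan w δ W (Finsupp.weight w ν + d) := by
  have hle : strandSpan w δ W d ≤
      (strandSpan w δ W (Finsupp.weight w ν + d)).comap (LinearMap.mulLeft A (monomial ν 1)) := by
    refine Submodule.span_le.2 ?_
    rintro _ ⟨μ, k, hμ, rfl⟩
    refine Submodule.subset_span ⟨ν + μ, k, by rw [map_add, add_assoc, hμ], ?_⟩
    rw [LinearMap.mulLeft_apply, ← mul_assoc, monomial_mul, one_mul]
  exact hle hp

theorem strandSpan_le_weightedHomogeneousSubmodule (hW : ∀ k, IsWeightedHomogeneous w (W k) (δ k))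
    (d : Γ) : strandSpan w δ W d ≤ weightedHomogeneousSubmodule A w d := by
  refine Submodule.span_le.2 ?_
  rintro _ ⟨μ, k, hμ, rfl⟩
  exact hμ ▸ (isWeightedHomogeneous_monomial w μ 1 rfl).mul (hW k)

theorem strandSpan_map {B : Type*} [CommRing B] (φ : A →+* B) (d : Γ) :
    strandSpan w δ (fun k => map φ (W k)) d =
      Submodule.span B (map φ '' (strandSpan w δ W d : Set (MvPolynomial τ A))) := by
  refine le_antisymm (Submodule.span_mono ?_) (Submodule.span_le.2 ?_)
  · rintro _ ⟨μ, k, hμ, rfl⟩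
    refine ⟨monomial μ 1 * W k, Submodule.subset_span ⟨μ, k, hμ, rfl⟩, ?_⟩
    rw [(map φ).map_mul, map_monomial, φ.map_one]
  · rintro _ ⟨p, hp, rfl⟩
    induction hp using Submodule.span_induction with
    | mem p hp =>
      obtain ⟨μ, k, hμ, rfl⟩ := hp
      refine Submodule.subset_span ⟨μ, k, hμ, ?_⟩
      rw [(map φ).map_mul, map_monomial, φ.map_one]
    | zero => rw [map_zero]; exact Submodule.zero_mem _
    | add p q _ _ hp hq => rw [map_add]; exact Submodule.add_mem _ hp hq
    | smul a p _ hp =>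
      rw [smul_eq_C_mul, (map φ).map_mul, map_C, ← smul_eq_C_mul]
      exact Submodule.smul_mem _ _ hp

theorem finite_weightedHomogeneousSubmodule {d : Γ}
    (hd : {μ : τ →₀ ℕ | Finsupp.weight w μ = d}.Finite) :
    Module.Finite A (weightedHomogeneousSubmodule A w d) := by
  rw [weightedHomogeneousSubmodule_eq_finsupp_supported]
  have := hd.to_subtype
  exact Module.Finite.of_basis (basisRestrictSupport A {μ | Finsupp.weight w μ = d})

theorem weight_eq_of_mem_leadingExponents (hW : ∀ k, IsWeightedHomogeneous w (W k) (δ k))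
    {m : MonomialOrder τ} {d : Γ} {l : τ →₀ ℕ}
    (hl : l ∈ leadingExponents m (strandSpan w δ W d)) : Finsupp.weight w l = d := by
  obtain ⟨v, hv, hv0, rfl⟩ := hl
  exact strandSpan_le_weightedHomogeneousSubmodule hW d hv (m.leadingCoeff_ne_zero_iff.2 hv0)

theorem exists_finset_monomial_mul_degree_eq [Finite τ] [IsDomain A] (m : MonomialOrder τ)
    (hW : ∀ k, IsWeightedHomogeneous w (W k) (δ k)) :
    ∃ T : Finset (MvPolynomial τ A), 0 ∉ T ∧ ∀ d, ∀ l ∈ leadingExponents m (strandSpan w δ W d),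
      ∃ v ∈ T, ∃ ν, monomial ν 1 * v ∈ strandSpan w δ W d ∧
        m.degree (monomial ν 1 * v) = l := by
  classical
  let E : Set (τ →₀ ℕ) := {l | ∃ d, l ∈ leadingExponents m (strandSpan w δ W d)}
  have hpwo : E.IsPWO := Set.isPWO_of_wellQuasiOrderedLE E
  have minimal_finite : {l | Minimal (· ∈ E) l}.Finite :=
    (setOfPred_minimal_antichain _).finite_of_partiallyWellOrderedOn
      (hpwo.mono (setOfPred_minimal_subset _))
  have exists_leading : ∀ l ∈ E,
      ∃ v ∈ strandSpan w δ W (Finsupp.weight w l), v ≠ 0 ∧ m.degree v = l := by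
    rintro l ⟨d, hd⟩
    rw [weight_eq_of_mem_leadingExponents hW hd]
    exact hd
  choose! v hvmem hv0 hvdeg using exists_leading
  refine ⟨minimal_finite.toFinset.image v, fun h => ?_, fun d l hl => ?_⟩
  · obtain ⟨l, hl, hvl⟩ := Finset.mem_image.1 h
    exact hv0 l (minimal_finite.mem_toFinset.1 hl).1 hvl
  · obtain ⟨l₀, hle, hmin⟩ := hpwo.exists_le_minimal ⟨d, hl⟩
    obtain ⟨ν, rfl⟩ := le_iff_exists_add'.1 hle
    refine ⟨v l₀, Finset.mem_image_of_mem v (minimal_finite.mem_toFinset.2 hmin), ν, ?_, ?_⟩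
    · rw [← weight_eq_of_mem_leadingExponents hW hl, map_add]
      exact monomial_mul_mem_strandSpan ν (hvmem l₀ hmin.1)
    · rw [m.degree_mul (monomial_eq_zero.not.2 one_ne_zero) (hv0 l₀ hmin.1), hvdeg l₀ hmin.1,
        m.degree_monomial, if_neg one_ne_zero]

theorem exists_ne_zero_forall_finrank_strandSpan_le [Finite τ] [IsDomain A] {K : Type*} [Field K]
    [Algebra K A] (hW : ∀ k, IsWeightedHomogeneous w (W k) (δ k)) :
    ∃ f : A, f ≠ 0 ∧ ∀ φ φ₀ : A →ₐ[K] K, φ f ≠ 0 →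
      ∀ d, {μ : τ →₀ ℕ | Finsupp.weight w μ = d}.Finite →
        Module.finrank K (strandSpan w δ (fun k => map (φ₀ : A →+* K) (W k)) d) ≤
          Module.finrank K (strandSpan w δ (fun k => map (φ : A →+* K) (W k)) d) := by
  obtain ⟨_, _⟩ := exists_wellFoundedLT τ
  let m : MonomialOrder τ := MonomialOrder.lex
  obtain ⟨T, hT0, hT⟩ := exists_finset_monomial_mul_degree_eq m hW
  refine ⟨∏ v ∈ T, m.leadingCoeff v, Finset.prod_ne_zero_iff.2 fun v hv =>
    m.leadingCoeff_ne_zero_iff.2 (ne_of_mem_of_not_mem hv hT0), fun φ φ₀ hφ d hd => ?_⟩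
  rw [map_prod, Finset.prod_ne_zero_iff] at hφ
  have hfin (ψ : A →ₐ[K] K) :
      FiniteDimensional K (Submodule.span K
        (map (ψ : A →+* K) '' (strandSpan w δ W d : Set (MvPolynomial τ A)))) := by
    have := finite_weightedHomogeneousSubmodule (A := K) hd
    rw [← strandSpan_map]
    exact Submodule.finiteDimensional_of_le (strandSpan_le_weightedHomogeneousSubmodule
      (fun k μ hμ => hW k fun h => hμ (by rw [coeff_map, h, map_zero])) d)
  rw [strandSpan_map, strandSpan_map]
  have := hfin φ
  have := hfin φ₀
  refine (finrank_span_map_le_ncard_leadingExponents (m := m)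
    (hd.subset fun l hl => weight_eq_of_mem_leadingExponents hW hl) φ₀).trans
    (ncard_leadingExponents_le_finrank_span_map fun l hl => ?_)
  obtain ⟨v, hv, ν, hmem, hdeg⟩ := hT d l hl
  refine ⟨_, hmem, hdeg, ?_⟩
  rw [m.leadingCoeff_mul, m.leadingCoeff_monomial, one_mul]
  exact hφ v hv

end GeneratedStrands

section LinearForms

variable {σ γ : Type*}

theorem map_weight {ρ Γ Γ' : Type*} [AddCommMonoid Γ] [AddCommMonoid Γ'] (L : Γ →+ Γ') (w : ρ → Γ)
    (μ : ρ →₀ ℕ) : L (Finsupp.weight w μ) = Finsupp.weight (L ∘ w) μ := by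
  simp only [Finsupp.weight_apply, map_finsuppSum, map_nsmul, Function.comp_apply]

/-- The weights of the variables of `linForm v` for a vector `v` whose `c`-th coordinate has its
degrees shifted by `β c`. The second component counts the new variables. -/
def linFormWeight (σ : Type*) (β : γ → ℤ) : σ ⊕ γ → ℤ × ℕ :=
  Sum.elim (fun _ => (1, 0)) fun c => (β c, 1)

variable {β : γ → ℤ}

theorem weight_linFormWeight_mapDomain_inl (μ : σ →₀ ℕ) :
    Finsupp.weight (linFormWeight σ β) (μ.mapDomain Sum.inl) = ((μ.degree : ℤ), 0) := by
  rw [Finsupp.degree_eq_weight_one]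
  exact (Finsupp.linearCombination_mapDomain ℕ Sum.inl μ).trans
    (map_weight ((AddMonoidHom.inl ℤ ℕ).comp (Nat.castAddMonoidHom ℤ)) 1 μ).symm

theorem exists_mapDomain_inl_eq {μ : σ ⊕ γ →₀ ℕ}
    (hμ : (Finsupp.weight (linFormWeight σ β) μ).2 = 0) : ∃ ν, Finsupp.mapDomain Sum.inl ν = μ := by
  refine ⟨_, Finsupp.mapDomain_comapDomain Sum.inl Sum.inl_injective μ ?_⟩
  rintro (i | c) hx
  · exact ⟨i, rfl⟩
  · have hle := Finsupp.le_weight (Prod.snd ∘ linFormWeight σ β) (s := Sum.inr c) one_ne_zero μ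
    rw [← AddMonoidHom.coe_snd, ← map_weight, AddMonoidHom.coe_snd, hμ] at hle
    exact absurd (Nat.le_zero.1 hle) (Finsupp.mem_support_iff.1 hx)

theorem finite_weight_linFormWeight_eq [Finite σ] [Finite γ] {d : ℤ} :
    {μ : σ ⊕ γ →₀ ℕ | Finsupp.weight (linFormWeight σ β) μ = (d, 1)}.Finite := by
  obtain ⟨b, hb⟩ := (Set.finite_range β).bddBelow
  let L : ℤ × ℕ →+ ℤ :=
    (AddMonoidHom.id ℤ).coprod ((AddMonoidHom.mulLeft (1 - b)).comp (Nat.castAddMonoidHom ℤ))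
  let w : σ ⊕ γ → ℕ := Sum.elim (fun _ => 1) fun c => (β c + (1 - b)).toNat
  have le_β (c : γ) : b ≤ β c := hb ⟨c, rfl⟩
  have hLw : L ∘ linFormWeight σ β = Nat.castAddMonoidHom ℤ ∘ w := by
    funext x
    rcases x with i | c
    · simp [L, w, linFormWeight]
    · have nonneg : 0 ≤ β c + (1 - b) := by linarith [le_β c]
      simp [L, w, linFormWeight, nonneg]
  have hw (x : σ ⊕ γ) : w x ≠ 0 := by
    rcases x with _ | c
    · exact one_ne_zero
    · have := le_β c
      simp only [w, Sum.elim_inr]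
      lia
  refine (Finsupp.finite_of_nat_weight_eq w hw (L (d, 1)).toNat).subset fun μ hμ => ?_
  have h := map_weight L (linFormWeight σ β) μ
  rw [hLw, ← map_weight, show Finsupp.weight _ μ = (d, 1) from hμ] at h
  rw [Set.mem_ofPred_eq, h]
  exact (Int.toNat_natCast _).symm

variable [Fintype γ] {A : Type*} [CommRing A]

/-- The vector of polynomials `v`, read as a polynomial linear in one new variable for each
coordinate. -/
def linForm : (γ → MvPolynomial σ A) →ₗ[A] MvPolynomial (σ ⊕ γ) A :=
  ∑ c, LinearMap.mulRight A (X (Sum.inr c)) ∘ₗ (rename Sum.inl).toLinearMap ∘ₗ LinearMap.proj c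

theorem linForm_apply (v : γ → MvPolynomial σ A) :
    linForm v = ∑ c, rename Sum.inl (v c) * X (Sum.inr c) := by
  simp only [linForm, LinearMap.sum_apply]
  rfl

theorem linForm_injective : Function.Injective (linForm (σ := σ) (γ := γ) (A := A)) := by
  classical
  refine Function.LeftInverse.injective
    (g := fun p c => aeval (Sum.elim X (Pi.single c 1)) p) fun v => funext fun c => ?_
  simp only [linForm_apply, map_sum, map_mul, aeval_X, aeval_rename, Sum.elim_inr,
    Sum.elim_comp_inl, aeval_X_left_apply, Pi.single_apply, mul_ite, mul_one, mul_zero]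
  rw [Finset.sum_ite_eq' Finset.univ c, if_pos (Finset.mem_univ c)]

theorem linForm_smul (p : MvPolynomial σ A) (v : γ → MvPolynomial σ A) :
    linForm (p • v) = rename Sum.inl p * linForm v := by
  simp only [linForm_apply, Finset.mul_sum, Pi.smul_apply, smul_eq_mul, map_mul, mul_assoc]

theorem map_linForm {B : Type*} [CommRing B] (φ : A →+* B) (v : γ → MvPolynomial σ A) :
    map φ (linForm v) = linForm fun c => map φ (v c) := by
  simp only [linForm_apply, map_sum, map_mul, map_X, map_rename]

theorem isWeightedHomogeneous_rename {ρ Γ : Type*} [AddCommMonoid Γ] {w : ρ → Γ} {h : σ → ρ}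
    {p : MvPolynomial σ A} {d : Γ} (hp : IsWeightedHomogeneous (w ∘ h) p d) :
    IsWeightedHomogeneous w (rename h p) d := by
  intro μ hμ
  obtain ⟨u, rfl, hu⟩ := coeff_rename_ne_zero h p μ hμ
  rw [← hp hu]
  exact Finsupp.linearCombination_mapDomain ℕ h u

theorem isWeightedHomogeneous_linForm {v : γ → MvPolynomial σ A} {d : ℤ}
    (hv : ∀ c, IsWeightedHomogeneous (fun _ => (1 : ℤ)) (v c) (d - β c)) :
    IsWeightedHomogeneous (linFormWeight σ β) (linForm v) (d, 1) := by
  rw [linForm_apply]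
  refine Submodule.sum_mem (weightedHomogeneousSubmodule A _ _) fun c _ => ?_
  have hvc : IsWeightedHomogeneous (linFormWeight σ β ∘ Sum.inl) (v c) (d - β c, 0) := by
    intro μ hμ
    rw [← hv c hμ]
    exact (map_weight (AddMonoidHom.inl ℤ ℕ) _ μ).symm
  have h := (isWeightedHomogeneous_rename hvc).mul
    (isWeightedHomogeneous_X A (linFormWeight σ β) (Sum.inr c))
  rwa [linFormWeight, Sum.elim_inr, Prod.mk_add_mk, sub_add_cancel, zero_add] at h

end LinearForms

section ModuleStrands

variable {σ γ κ : Type*} {A : Type*} [CommRing A]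

/-- The degree `d` component of the submodule of a free module generated by the vectors `V k`,
where `V k` is thought of as homogeneous of degree `δ k`. -/
def moduleStrand (δ : κ → ℤ) (V : κ → γ → MvPolynomial σ A) (d : ℤ) :
    Submodule A (γ → MvPolynomial σ A) :=
  Submodule.span A {v | ∃ μ : σ →₀ ℕ, ∃ k, (μ.degree : ℤ) + δ k = d ∧ monomial μ (1 : A) • V k = v}

variable {δ : κ → ℤ} {V : κ → γ → MvPolynomial σ A} {β : γ → ℤ}

theorem map_linForm_moduleStrand [Fintype γ] (d : ℤ) :
    (moduleStrand δ V d).map linForm =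
      strandSpan (linFormWeight σ β) (fun k => (δ k, 1)) (fun k => linForm (V k)) (d, 1) := by
  have linForm_monomial_smul (μ : σ →₀ ℕ) (v : γ → MvPolynomial σ A) :
      linForm (monomial μ (1 : A) • v) = monomial (μ.mapDomain Sum.inl) 1 * linForm v := by
    rw [linForm_smul, rename_monomial]
  rw [moduleStrand, Submodule.map_span]
  refine congrArg (Submodule.span A) (Set.ext fun p => ⟨?_, ?_⟩)
  · rintro ⟨_, ⟨μ, k, hμ, rfl⟩, rfl⟩
    refine ⟨μ.mapDomain Sum.inl, k, ?_, (linForm_monomial_smul μ (V k)).symm⟩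
    rw [weight_linFormWeight_mapDomain_inl, Prod.mk_add_mk, hμ, zero_add]
  · rintro ⟨μ, k, hμ, rfl⟩
    obtain ⟨hμ₁, hμ₂⟩ := Prod.ext_iff.1 hμ
    obtain ⟨ν, rfl⟩ := exists_mapDomain_inl_eq (Nat.add_eq_right.1 hμ₂)
    rw [weight_linFormWeight_mapDomain_inl] at hμ₁
    exact ⟨_, ⟨ν, k, hμ₁, rfl⟩, linForm_monomial_smul ν (V k)⟩

theorem exists_ne_zero_forall_finrank_moduleStrand_le [Finite σ] [Finite γ] [IsDomain A]
    {K : Type*} [Field K] [Algebra K A]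
    (hV : ∀ k c, IsWeightedHomogeneous (fun _ => (1 : ℤ)) (V k c) (δ k - β c)) :
    ∃ f : A, f ≠ 0 ∧ ∀ φ φ₀ : A →ₐ[K] K, φ f ≠ 0 → ∀ d,
      Module.finrank K (moduleStrand δ (fun k c => map (φ₀ : A →+* K) (V k c)) d) ≤
        Module.finrank K (moduleStrand δ (fun k c => map (φ : A →+* K) (V k c)) d) := by
  cases nonempty_fintype γ
  obtain ⟨f, hf, h⟩ := exists_ne_zero_forall_finrank_strandSpan_le (K := K)
    fun k => isWeightedHomogeneous_linForm (hV k)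
  refine ⟨f, hf, fun φ φ₀ hφ d => ?_⟩
  have finrank_eq (ψ : A →ₐ[K] K) :
      Module.finrank K (moduleStrand δ (fun k c => map (ψ : A →+* K) (V k c)) d) =
        Module.finrank K (strandSpan (linFormWeight σ β) (fun k => (δ k, 1))
          (fun k => map (ψ : A →+* K) (linForm (V k))) (d, 1)) := by
    rw [funext fun k => map_linForm (ψ : A →+* K) (V k), ← map_linForm_moduleStrand]
    exact (Submodule.equivMapOfInjective _ linForm_injective _).finrank_eq
  rw [finrank_eq, finrank_eq]
  exact h φ φ₀ hφ (d, 1) finite_weight_linFormWeight_eq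

end ModuleStrands

/-! ### The zeroth bar differential -/

section FreePresentation

variable {K : Type} [Field K] {n : ℕ} {α γ : Type}

variable (K n α γ) in
/-- The canonical map `S^α ⊗_K S^γ → S^α ⊗_S S^γ = S^(α × γ)`. -/
def outerProd : (α → PS K n) ⊗[K] (γ → PS K n) →ₗ[K] (α × γ → PS K n) :=
  LinearMap.pi fun c => LinearMap.mul' K (PS K n) ∘ₗ
    TensorProduct.map (LinearMap.proj c.1) (LinearMap.proj c.2)

theorem outerProd_tmul (u : α → PS K n) (v : γ → PS K n) (c : α × γ) :
    outerProd K n α γ (u ⊗ₜ v) c = u c.1 * v c.2 := rfl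

theorem ker_outerProd_eq_span [Finite α] : LinearMap.ker (outerProd K n α γ) =
    Submodule.span K {z | ∃ (s : PS K n) (u : α → PS K n) (v : γ → PS K n),
      (s • u) ⊗ₜ[K] v - u ⊗ₜ[K] (s • v) = z} := by
  classical
  have := Fintype.ofFinite α
  set R := Submodule.span K {z | ∃ (s : PS K n) (u : α → PS K n) (v : γ → PS K n),
    (s • u) ⊗ₜ[K] v - u ⊗ₜ[K] (s • v) = z}
  let lift : (α × γ → PS K n) →ₗ[K] (α → PS K n) ⊗[K] (γ → PS K n) :=
    ∑ a, TensorProduct.mk K _ _ (Pi.single a 1) ∘ₗ LinearMap.funLeft K (PS K n) (Prod.mk a)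
  refine le_antisymm (fun x hx => ?_) (Submodule.span_le.2 ?_)
  · have sub_lift_mem (x) : x - lift (outerProd K n α γ x) ∈ R := by
      induction x using TensorProduct.induction_on with
      | zero => simp only [map_zero, sub_zero, zero_mem]
      | tmul u v =>
        have tmul_eq : u ⊗ₜ[K] v = ∑ a, (u a • Pi.single a 1) ⊗ₜ[K] v := by
          rw [← sum_tmul, ← pi_eq_sum_univ']
        have lift_eq : lift (outerProd K n α γ (u ⊗ₜ v)) = ∑ a, Pi.single a 1 ⊗ₜ[K] (u a • v) :=
          LinearMap.sum_apply _ _ _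
        rw [lift_eq, tmul_eq, ← Finset.sum_sub_distrib]
        exact sum_mem fun a _ => Submodule.subset_span ⟨u a, Pi.single a 1, v, rfl⟩
      | add x y hx hy => simpa only [map_add, add_sub_add_comm] using add_mem hx hy
    simpa only [LinearMap.mem_ker.1 hx, map_zero, sub_zero] using sub_lift_mem x
  · rintro _ ⟨s, u, v, rfl⟩
    refine funext fun c => ?_
    rw [map_sub, Pi.sub_apply, outerProd_tmul, outerProd_tmul, Pi.smul_apply, Pi.smul_apply,
      smul_mul_assoc, mul_smul_comm, sub_self, Pi.zero_apply]

theorem range_barB_zero {M N : Type} [AddCommGroup M] [Module K M] [Module (PS K n) M]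
    [IsScalarTower K (PS K n) M] [AddCommGroup N] [Module K N] [Module (PS K n) N]
    [IsScalarTower K (PS K n) N] :
    (LinearMap.range (barB K n N M 0) : Submodule K (M ⊗[K] N)) =
      Submodule.span K {z | ∃ (s : PS K n) (u : M) (v : N),
        (s • u) ⊗ₜ[K] v - u ⊗ₜ[K] (s • v) = z} := by
  set R := Submodule.span K {z | ∃ (s : PS K n) (u : M) (v : N),
    (s • u) ⊗ₜ[K] v - u ⊗ₜ[K] (s • v) = z}
  refine le_antisymm ?_ (Submodule.span_le.2 ?_)
  · rintro _ ⟨y, rfl⟩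
    induction y using TensorProduct.induction_on with
    | zero => exact (map_zero (barB K n N M 0)).symm ▸ zero_mem _
    | tmul u t =>
      refine barD_induction (P := fun t => barB K n N M 0 (u ⊗ₜ t) ∈ R)
        (fun s v => Submodule.subset_span ⟨s, u, v, rfl⟩) (fun t t' ht ht' => ?_) t
      rw [tmul_add, map_add]
      exact add_mem ht ht'
    | add x y hx hy => exact (map_add (barB K n N M 0) x y).symm ▸ add_mem hx hy
  · rintro _ ⟨s, u, v, rfl⟩
    exact ⟨u ⊗ₜ barCons 0 s v, rfl⟩

theorem ker_outerProd [Finite α] : LinearMap.ker (outerProd K n α γ) =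
    LinearMap.range (barB K n (γ → PS K n) (α → PS K n) 0) :=
  ker_outerProd_eq_span.trans range_barB_zero.symm

end FreePresentation

section GenericCoordinates

variable {K : Type} [Field K] {n : ℕ} {α γ : Type}

variable (K n) in
/-- The change of coordinates whose matrix entries are indeterminates. -/
def genericCoordChange : PS K n →ₐ[K] MvPolynomial (Fin n) (MvPolynomial (Fin n × Fin n) K) :=
  aeval fun i => ∑ j, C (X (j, i)) * X j

/-- Evaluation of the indeterminate matrix entries at the entries of `g`. -/
def evalEntries (g : GL (Fin n) K) : MvPolynomial (Fin n × Fin n) K →ₐ[K] K :=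
  aeval fun p => (g : Matrix (Fin n) (Fin n) K) p.1 p.2

theorem map_evalEntries_map_C (g : GL (Fin n) K) (p : PS K n) :
    map (evalEntries g : MvPolynomial (Fin n × Fin n) K →+* K) (map C p) = p := by
  rw [MvPolynomial.map_map, ← algebraMap_eq, AlgHom.comp_algebraMap, Algebra.algebraMap_self,
    MvPolynomial.map_id]

theorem map_evalEntries_genericCoordChange (g : GL (Fin n) K) (p : PS K n) :
    map (evalEntries g : MvPolynomial (Fin n × Fin n) K →+* K) (genericCoordChange K n p) =
      coordChange K n g p := by
  refine DFunLike.congr_fun (F := PS K n →ₐ[K] PS K n)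
    (f := (mapAlgHom (evalEntries g)).comp (genericCoordChange K n)) (algHom_ext fun i => ?_) p
  simp [genericCoordChange, coordChange, evalEntries, smul_eq_C_mul]

theorem isHomogeneous_genericCoordChange {p : PS K n} {d : ℕ} (hp : p.IsHomogeneous d) :
    (genericCoordChange K n p).IsHomogeneous d := by
  rw [← one_mul d]
  exact hp.aeval _ fun i => IsHomogeneous.sum _ _ _ fun j _ => isHomogeneous_C_mul_X _ _

theorem isWeightedHomogeneous_of_mem_polyGrade {A : Type*} [CommRing A]
    {F : PS K n →+* MvPolynomial (Fin n) A}
    (hF : ∀ {p : PS K n} {d : ℕ}, p.IsHomogeneous d → (F p).IsHomogeneous d) {p : PS K n} {d : ℤ}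
    (hp : p ∈ polyGrade K n d) : IsWeightedHomogeneous (fun _ => (1 : ℤ)) (F p) d := by
  rw [polyGrade] at hp
  split_ifs at hp with hd
  · lift d to ℕ using hd
    intro μ hμ
    have hFp : (F p).IsHomogeneous d := hF ((mem_homogeneousSubmodule d p).1 hp)
    rw [← hFp hμ]
    exact (map_weight (Nat.castAddMonoidHom ℤ) 1 μ).symm
  · rw [(Submodule.mem_bot K).1 hp, map_zero]
    exact isWeightedHomogeneous_zero _ _ _

end GenericCoordinates

section RankZero

variable {K : Type} [Field K] {n : ℕ}
  {M : Type} [AddCommGroup M] [Module K M] [Module (PS K n) M] [IsScalarTower K (PS K n) M]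
  {N : Type} [AddCommGroup N] [Module K N] [Module (PS K n) N] [IsScalarTower K (PS K n) N]
  {GM : ℤ → Submodule K M} {GN : ℤ → Submodule K N}
  {α γ : Type}

/-- The degree `j` component of the kernel of `S^(α × γ) → M ⊗_S N`, for homogeneous presentations
`π : S^α → M` and `q : S^γ → N` with generators of degrees `βM` and `βN`. -/
def relationStrand (βM : α → ℤ) (π : (α → PS K n) →ₗ[PS K n] M) (βN : γ → ℤ)
    (q : (γ → PS K n) →ₗ[PS K n] N) (j : ℤ) : Submodule K (α × γ → PS K n) :=
  Submodule.span K {w | ∃ d d', d + d' = j ∧ ∃ u ∈ freeGrade βM d, ∃ v ∈ freeGrade βN d',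
    (π u = 0 ∨ q v = 0) ∧ outerProd K n α γ (u ⊗ₜ v) = w}

variable [Finite α] [Finite γ] {βM : α → ℤ} {π : (α → PS K n) →ₗ[PS K n] M}
  {βN : γ → ℤ} {q : (γ → PS K n) →ₗ[PS K n] N}

theorem map_outerProd_inf_ker (hM : IsGradedModule n GM) (hN : IsGradedModule n GN)
    (hπ : Function.Surjective π) (hq : Function.Surjective q)
    (hπgrade : ∀ d, GM d = (freeGrade βM d).map (π.restrictScalars K))
    (hqgrade : ∀ d, GN d = (freeGrade βN d).map (q.restrictScalars K)) (j : ℤ) :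
    (tensorGrade K (freeGrade βM) (freeGrade βN) j ⊓ LinearMap.ker
      (TensorProduct.map (π.restrictScalars K) (q.restrictScalars K))).map (outerProd K n α γ) =
        relationStrand βM π βN q j := by
  rw [tensorGrade_inf_ker_map (f := π.restrictScalars K) (g := q.restrictScalars K) hπ hq
    (isInternal_freeGrade βM) (isInternal_freeGrade βN)
    ((isGradedModule_freeGrade βM).ker hM fun d => (hπgrade d).ge).isInternal
    ((isGradedModule_freeGrade βN).ker hN fun d => (hqgrade d).ge).isInternal,
    Submodule.map_span, relationStrand]
  refine congrArg (Submodule.span K) (Set.ext fun w => ⟨?_, ?_⟩)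
  · rintro ⟨_, ⟨d, d', hd, u, hu, v, hv, huv, rfl⟩, rfl⟩
    exact ⟨d, d', hd, u, hu, v, hv, huv, rfl⟩
  · rintro ⟨d, d', hd, u, hu, v, hv, huv, rfl⟩
    exact ⟨_, ⟨d, d', hd, u, hu, v, hv, huv, rfl⟩, rfl⟩

theorem barRank_zero_add_finrank (hM : IsGradedModule n GM) (hN : IsGradedModule n GN)
    (hπ : Function.Surjective π) (hq : Function.Surjective q)
    (hπgrade : ∀ d, GM d = (freeGrade βM d).map (π.restrictScalars K))
    (hqgrade : ∀ d, GN d = (freeGrade βN d).map (q.restrictScalars K)) (j : ℤ) :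
    let freeStrand (i : ℕ) := barStrand (n := n) (M := α → PS K n) (N := γ → PS K n)
      (freeGrade βM) (freeGrade βN) i j
    barRank n GM GN 0 j + Module.finrank K (freeStrand 0) =
      Module.finrank K ((freeStrand 1).map (barB K n (γ → PS K n) (α → PS K n) 0)) +
        Module.finrank K (barStrand (n := n) GM GN 0 j) +
        Module.finrank K (relationStrand βM π βN q j) := by
  intro freeStrand
  have hfin : FiniteDimensional K (freeStrand 0) := finiteDimensional_barStrand
    (isLocallyFinite_freeGrade βM) (isLocallyFinite_freeGrade βN) 0 j
  have strand_eq (i : ℕ) : barStrand GM GN i j = (freeStrand i).map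
      (TensorProduct.map (π.restrictScalars K) (barDMap (q.restrictScalars K) i)) := by
    rw [map_barStrand, funext hπgrade, funext hqgrade]
  have boundaries_eq : (barStrand GM GN 1 j).map (barB K n N M 0) =
      ((freeStrand 1).map (barB K n (γ → PS K n) (α → PS K n) 0)).map
          (TensorProduct.map (π.restrictScalars K) (barDMap (q.restrictScalars K) 0)) := by
    rw [strand_eq, ← Submodule.map_comp, ← Submodule.map_comp]
    exact congrArg (Submodule.map · _) (LinearMap.ext fun z => (map_barDMap_barB π q 0 z).symm)
  rw [barRank, boundaries_eq, strand_eq 0, ← range_barB_inf_barStrand (isGradedModule_freeGrade βM)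
    (isGradedModule_freeGrade βN), ← map_outerProd_inf_ker hM hN hπ hq hπgrade hqgrade,
    inf_comm (LinearMap.range (barB K n (γ → PS K n) (α → PS K n) 0)), ← ker_outerProd]
  exact finrank_map_ker_inf (freeStrand 0) _ _

end RankZero

section RelationPairs

variable {K : Type} [Field K] {n : ℕ}
  {M : Type} [AddCommGroup M] [Module (PS K n) M]
  {N : Type} [AddCommGroup N] [Module (PS K n) N]
  {α γ : Type}

/-- A pair of homogeneous vectors, at least one of which is a relation of `M` or of `N`
respectively. Their tensor products span the kernel of `S^α ⊗ S^γ → M ⊗ N`. -/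
structure RelationPair (βM : α → ℤ) (π : (α → PS K n) →ₗ[PS K n] M) (βN : γ → ℤ)
    (q : (γ → PS K n) →ₗ[PS K n] N) where
  left : α → PS K n
  right : γ → PS K n
  leftDegree : ℤ
  rightDegree : ℤ
  left_mem : left ∈ freeGrade βM leftDegree
  right_mem : right ∈ freeGrade βN rightDegree
  map_eq_zero : π left = 0 ∨ q right = 0

variable {βM : α → ℤ} {π : (α → PS K n) →ₗ[PS K n] M} {βN : γ → ℤ}
  {q : (γ → PS K n) →ₗ[PS K n] N}

/-- The outer product `u · g(v)` of the pair `(u, v)` for the generic change of coordinates `g`. -/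
def RelationPair.genericOuterProd (x : RelationPair βM π βN q) (c : α × γ) :
    MvPolynomial (Fin n) (MvPolynomial (Fin n × Fin n) K) :=
  map C (x.left c.1) * genericCoordChange K n (x.right c.2)

theorem RelationPair.isWeightedHomogeneous_genericOuterProd (x : RelationPair βM π βN q)
    (c : α × γ) : IsWeightedHomogeneous (fun _ => (1 : ℤ)) (x.genericOuterProd c)
      (x.leftDegree + x.rightDegree - (βM c.1 + βN c.2)) := by
  rw [add_sub_add_comm]
  exact (isWeightedHomogeneous_of_mem_polyGrade (fun hp => hp.map C)
      (mem_freeGrade.1 x.left_mem c.1)).mul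
    (isWeightedHomogeneous_of_mem_polyGrade (F := (genericCoordChange K n).toRingHom)
      isHomogeneous_genericCoordChange (mem_freeGrade.1 x.right_mem c.2))

theorem RelationPair.map_genericOuterProd (x : RelationPair βM π βN q) (g : GL (Fin n) K) :
    (fun c => map (evalEntries g : MvPolynomial (Fin n × Fin n) K →+* K) (x.genericOuterProd c)) =
      outerProd K n α γ (x.left ⊗ₜ freeTwist g γ x.right) := by
  funext c
  rw [genericOuterProd, map_mul, map_evalEntries_map_C, map_evalEntries_genericCoordChange,
    outerProd_tmul, freeTwist_apply]

theorem relationStrand_twistCover [Module K N] [IsScalarTower K (PS K n) N] {N' : Type}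
    [AddCommGroup N'] [Module K N'] [Module (PS K n) N'] [Finite α] [Fintype γ]
    [DecidableEq γ] {g : GL (Fin n) K} {GN : ℤ → Submodule K N}
    {GN' : ℤ → Submodule K N'} {e : N ≃ₗ[K] N'} (he : IsTwist g GN GN' e) (j : ℤ) :
    relationStrand βM π βN (twistCover q e) j =
      moduleStrand (fun x : RelationPair βM π βN q => x.leftDegree + x.rightDegree)
        (fun x c => map (evalEntries g : MvPolynomial (Fin n × Fin n) K →+* K)
          (x.genericOuterProd c)) j := by
  have map_right_iff (v : γ → PS K n) : twistCover q e (freeTwist g γ v) = 0 ↔ q v = 0 := by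
    rw [he.twistCover_freeTwist, LinearEquiv.map_eq_zero_iff]
  refine le_antisymm (Submodule.span_le.2 ?_) (Submodule.span_le.2 ?_)
  · rintro _ ⟨d, d', hd, u, hu, w, hw, huw, rfl⟩
    obtain ⟨v, rfl⟩ := (freeTwist g γ).surjective w
    let x : RelationPair βM π βN q := ⟨u, v, d, d', hu, (isTwist_freeTwist βN).mem_iff.1 hw,
      huw.imp_right (map_right_iff v).1⟩
    refine Submodule.subset_span ⟨0, x, ?_, ?_⟩
    · simpa only [map_zero, Nat.cast_zero, zero_add] using hd
    · rw [← C_apply, map_one, one_smul]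
      exact x.map_genericOuterProd g
  · rintro _ ⟨μ, x, hd, rfl⟩
    refine Submodule.subset_span ⟨μ.degree + x.leftDegree, x.rightDegree,
      (add_assoc _ _ _).trans hd, monomial μ (1 : K) • x.left,
      (isGradedModule_freeGrade βM).smul_mem (monomial_mem_polyGrade rfl) x.left_mem,
      freeTwist g γ x.right, (isTwist_freeTwist βN).mem_iff.2 x.right_mem, ?_, ?_⟩
    · refine x.map_eq_zero.imp (fun h => ?_) (map_right_iff _).2
      rw [map_smul, h, smul_zero]
    · refine Eq.trans ?_ (congrArg (monomial μ (1 : K) • ·) (x.map_genericOuterProd g)).symm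
      exact funext fun c => mul_assoc _ _ _

end RelationPairs

section RankZeroSemicontinuity

variable {K : Type} [Field K] {n : ℕ}
  {M : Type} [AddCommGroup M] [Module K M] [Module (PS K n) M] [IsScalarTower K (PS K n) M]
  {N : Type} [AddCommGroup N] [Module K N] [Module (PS K n) N] [IsScalarTower K (PS K n) N]
  {GM : ℤ → Submodule K M} {GN : ℤ → Submodule K N}

theorem rankSemicontinuous_zero [Module.Finite (PS K n) M] [Module.Finite (PS K n) N]
    (hM : IsGradedModule n GM) (hN : IsGradedModule n GN) :
    RankSemicontinuous (n := n) GM GN 0 := by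
  classical
  obtain ⟨r, βM, π, hπ, hπgrade⟩ := hM.exists_free_cover
  obtain ⟨s, βN, q, hq, hqgrade⟩ := hN.exists_free_cover
  obtain ⟨F, hF, finrank_le⟩ := exists_ne_zero_forall_finrank_moduleStrand_le (K := K)
    fun (x : RelationPair βM π βN q) => x.isWeightedHomogeneous_genericOuterProd
  refine ⟨F, hF, fun g hg N' _ _ _ _ GN' e he j => ?_⟩
  have relation_le := finrank_le (evalEntries g) (evalEntries 1) hg j
  rw [← relationStrand_twistCover he, ← relationStrand_twistCover (isTwist_one n GN)]
    at relation_le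
  have rank_formula {N' : Type} [AddCommGroup N'] [Module K N'] [Module (PS K n) N']
      [IsScalarTower K (PS K n) N'] {g : GL (Fin n) K} {GN' : ℤ → Submodule K N'}
      {e : N ≃ₗ[K] N'} (he : IsTwist g GN GN' e) :=
    barRank_zero_add_finrank hM (he.isGradedModule hN) hπ (he.twistCover_surjective hq) hπgrade
      (he.map_twistCover hqgrade) j
  have rank_N := rank_formula (isTwist_one n GN)
  have rank_N' := rank_formula he
  have strand_eq := he.finrank_barStrand GM 0 j
  lia

end RankZeroSemicontinuity

/-! ### Tor of a twisted module -/

section MainTheorem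

variable {K : Type} [Field K] {n : ℕ}
  {M : Type} [AddCommGroup M] [Module K M] [Module (PS K n) M] [IsScalarTower K (PS K n) M]
  [Module.Finite (PS K n) M] {GM : ℤ → Submodule K M}

theorem rankSemicontinuous (hM : IsGradedModule n GM) {N : Type} [AddCommGroup N] [Module K N]
    [Module (PS K n) N] [IsScalarTower K (PS K n) N] [Module.Finite (PS K n) N]
    {GN : ℤ → Submodule K N} (hN : IsGradedModule n GN) (i : ℕ) :
    RankSemicontinuous (n := n) GM GN i := by
  induction i generalizing N with
  | zero => exact rankSemicontinuous_zero hM hN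
  | succ i ih =>
    obtain ⟨s, β, q, hq, hqgrade⟩ := hN.exists_free_cover
    exact .succ hM hM.isLocallyFinite hN hq hqgrade
      (ih ((isGradedModule_freeGrade β).ker hN fun d => (hqgrade d).ge))

theorem torStrandDim_twist_le {N : Type} [AddCommGroup N] [Module K N] [Module (PS K n) N]
    [IsScalarTower K (PS K n) N] [Module.Finite (PS K n) N] {GN : ℤ → Submodule K N}
    {N' : Type} [AddCommGroup N'] [Module K N'] [Module (PS K n) N'] [IsScalarTower K (PS K n) N']
    {GN' : ℤ → Submodule K N'} {g : GL (Fin n) K} {e : N ≃ₗ[K] N'} (hM : IsGradedModule n GM)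
    (hN : IsGradedModule n GN) (he : IsTwist g GN GN' e) {j : ℤ}
    (rank_le : ∀ i ≤ n, barRank n GM GN i j ≤ barRank n GM GN' i j) (i : ℕ) :
    torStrandDim K n N' M GM GN' i j ≤ torStrandDim K n N M GM GN i j := by
  have hN' := he.isGradedModule hN
  have strand_eq := he.finrank_barStrand GM i j
  rcases i with _ | i
  · rw [torStrandDim_zero hM hN', torStrandDim_zero hM hN, strand_eq]
    exact Nat.sub_le_sub_left (rank_le 0 n.zero_le) _
  · rcases le_or_gt n i with hi | hi
    · rw [torStrandDim_succ_eq_zero (barExactAt_of_le hi)]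
      exact Nat.zero_le _
    · rw [torStrandDim_succ hM hN' hM.isLocallyFinite (he.isLocallyFinite hN.isLocallyFinite),
        torStrandDim_succ hM hN hM.isLocallyFinite hN.isLocallyFinite, strand_eq]
      have := rank_le i hi.le
      have := rank_le (i + 1) hi
      lia

end MainTheorem

end GenericTor

open GenericTor

theorem tor_dim_general_coordinates_le_general {K : Type} [Field K] {n : ℕ} {M : Type}
    [AddCommGroup M] [Module K M] [Module (PS K n) M] [IsScalarTower K (PS K n) M]
    [Module.Finite (PS K n) M] {GM : ℤ → Submodule K M} (hM : IsGradedModule n GM) {N : Type}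
    [AddCommGroup N] [Module K N] [Module (PS K n) N] [IsScalarTower K (PS K n) N]
    [Module.Finite (PS K n) N] {GN : ℤ → Submodule K N} (hN : IsGradedModule n GN) :
    generally K n fun g => ∀ (N' : Type) [AddCommGroup N'] [Module K N'] [Module (PS K n) N']
      [IsScalarTower K (PS K n) N'] (GN' : ℤ → Submodule K N') (e : N ≃ₗ[K] N'),
      IsTwist g GN GN' e → ∀ (i : ℕ) (j : ℤ),
        torStrandDim K n N' M GM GN' i j ≤ torStrandDim K n N M GM GN i j :=
  generally_mono
    (generally_finset_forall (Finset.range (n + 1)) fun i _ => rankSemicontinuous hM hN i)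
    fun _ hg N' _ _ _ _ GN' e he i j => torStrandDim_twist_le hM hN he
      (fun i hi => hg i (Finset.mem_range_succ_iff.2 hi) N' GN' e he j) i

variable (K : Type) [Field K] (n : ℕ)

/-- **Lemma 2.3** (Caviglia–Murai): for a finitely generated graded `S`-module `M` and a
homogeneous ideal `J ⊆ S`, for a general change of coordinates `g ∈ GL_n(K)` one has
`dim_K Tor_i(M, S/g(J))_j ≤ dim_K Tor_i(M, S/J)_j` for all `i` and all `j`. -/
theorem tor_dim_general_coordinates_le [Infinite K]
    (Mod : Type) [AddCommGroup Mod] [Module K Mod] [Module (PS K n) Mod]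
    [IsScalarTower K (PS K n) Mod]
    (GMod : ℤ → Submodule K Mod) [DirectSum.Decomposition GMod]
    (hGMod : ∀ (a : ℕ) (b : ℤ) (s : PS K n) (x : Mod),
      s ∈ homogeneousSubmodule (Fin n) K a → x ∈ GMod b → s • x ∈ GMod ((a : ℤ) + b))
    (hModfg : Module.Finite (PS K n) Mod)
    (J : Ideal (PS K n)) (hJ : IsHomog K n J) :
    generally K n (fun g => ∀ (i : ℕ) (j : ℤ),
      torStrandDim K n (PS K n ⧸ Ideal.map (coordChange K n g) J) Mod
          GMod (quotGrade K n (Ideal.map (coordChange K n g) J)) i j ≤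
        torStrandDim K n (PS K n ⧸ J) Mod GMod (quotGrade K n J) i j) :=
  generally_mono (tor_dim_general_coordinates_le_general (isGradedModule_of_decomposition hGMod)
    (isGradedModule_quotGrade hJ)) fun _ hg => hg _ _ _ (isTwist_quotient J)

end
end
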